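/- Let K and L be convex bodies in ℝⁿ with n ≥ 3 and L contained in the interior of K. Suppose that for every unit vector u ∈ Sⁿ⁻¹ there is a number λ(u) such that every chord of K parallel to u whose line supports L has length λ(u). Then K and L are homothetic and concentric ellipsoids; that is, there exist an invertible affine map sending the closed Euclidean unit ball onto K, a point c and a real number 0 < t < 1 with L = c + t·(K − c), where c is the center of the ellipsoid K. -/

import Mathlib

/-!
The proof has three stages.

*Chords through contact points are bisected.* Write `G` for the gauge of `K` based at a point `p`
of `L` with outer normal `v` (`IsContact`). For `u ⟂ v` the line `p + ℝ u` supports `L`, so its chord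
has the prescribed length. If `p` is approached by contact points `q` of other support lines of
direction `u`, the chords through `q` and `p` have equal length; comparing their end points and
passing to the limit gives parallel support lines of the section `K ∩ (p + v⊥)` at both ends of the
chord through `p` (`parallel_of_approach`). In dimension three this holds for all but possibly one
direction `u` of the plane `v⊥`, if `v` is a boundary normal of the normal cone of `p`
(`exists_exceptional`). Parallel support lines mean that the polar representations of `G` at `z` and
`-z` have a common logarithmic subgradient, so that `G` is even on the plane (`even_of_parallel`).
Any other normal is turned about the chord to the boundary of the normal cone
(`even_of_contact`), and higher dimensions reduce to three-dimensional sections (`gaugeAt_eq`).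
Consequently `G u = 2 / ℓ u` does not depend on `p`: all sections of `K` by support hyperplanes of `L`
are translates, centred at the contact points, of the central sections of the unit ball of one
norm `N` (`CentredSections`).

*The norm `N` is Euclidean.* Contact points are now unique and depend continuously on the normal. The
sections for two nearby normals have a common chord family, so the difference of the contact points
is approximately a support direction of `N` at the direction of the common line. Blowing up the
contact map at a normal `v₀` gives a map of the plane `v₀⊥` whose increments are exactly such support
directions; smoothness of `N` in almost every direction forces it to be linear (`rigidity`,
`blowup`). A planar norm whose support direction at `u` is a linear function of `u` satisfies the
parallelogram law (`parallelogram_of_linear_BJ`). Normals near which the contact point is constant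
are excluded, since the blow-up at the boundary of a normal cone would be injective and yet
stationary. This gives `exists_centred_norm`.

*The Euclidean case.* After a linear change of coordinates `N` is the Euclidean norm. Two sections
centred at `p`, `p'` with unit normals `v`, `v'` are then compatible only if `p' - p` is a multiple of
`v' - v` (`contact_diff`). Since three points of a sphere are never collinear, the contact map is
`v ↦ c + μ v` locally, hence globally by connectedness (`contact_affine`), so that `L` is the ball of
radius `μ` about `c` and `K` the concentric ball of radius `√(1 + μ²)` (`balls_of_centred`).
-/


open Metric Set
open scoped RealInnerProductSpace

noncomputable section

/-- The line through `a` with direction `u`. -/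
def lineThrough {n : ℕ} (a u : EuclideanSpace ℝ (Fin n)) : Set (EuclideanSpace ℝ (Fin n)) :=
  {x | ∃ t : ℝ, x = a + t • u}

/-- The line through `a` with direction `u` supports `L`: it meets `L`
but is disjoint from the interior of `L`. -/
def LineSupports {n : ℕ} (L : Set (EuclideanSpace ℝ (Fin n)))
    (a u : EuclideanSpace ℝ (Fin n)) : Prop :=
  (lineThrough a u ∩ L).Nonempty ∧ lineThrough a u ∩ interior L = ∅

/-! ### Logarithmic subgradients and even planar gauges -/

lemma log_one_add_ge {x : ℝ} (hx : |x| ≤ 1 / 2) : x - 2 * x ^ 2 ≤ Real.log (1 + x) := by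
  have h1 := (abs_le.1 hx).1
  have hpos : 0 < 1 + x := by linarith
  refine le_trans ?_ (Real.one_sub_inv_le_log_of_pos hpos)
  rw [← sub_nonneg]
  have : 1 - (1 + x)⁻¹ - (x - 2 * x ^ 2) = x ^ 2 * (1 + 2 * x) / (1 + x) := by
    field_simp; ring
  rw [this]
  have : 0 ≤ 1 + 2 * x := by linarith
  positivity

/-- Using the subgradient of one function at the left end and that of the other at the right end of
a step from `t` to `t + h`, the difference of logarithms changes in the wrong direction by at most
`(k (t + h) - k t) * h + O(h²)`. Along a uniform subdivision the first-order terms telescope, and the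
total error tends to `0`. -/
lemma ratio_mono {f g k : ℝ → ℝ} {C : ℝ} (hf : ∀ t, 0 < f t) (hg : ∀ t, 0 < g t)
    (hk : ∀ t, |k t| ≤ C) (h1 : ∀ t s, f t * (1 + k t * (s - t)) ≤ f s)
    (h2 : ∀ t s, g t * (1 + k t * (s - t)) ≤ g s) (a b : ℝ) :
    Real.log (f a) - Real.log (g a) ≤ Real.log (f b) - Real.log (g b) := by
  have hC : 0 ≤ C := le_trans (abs_nonneg _) (hk 0)
  -- one small step
  have step : ∀ t h : ℝ, C * |h| ≤ 1 / 2 →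
      Real.log (f t) - Real.log (g t) + (k t * h - k (t + h) * h - 4 * C ^ 2 * h ^ 2) ≤
        Real.log (f (t + h)) - Real.log (g (t + h)) := by
    intro t h hh
    have b1 : |k t * h| ≤ 1 / 2 := by
      rw [abs_mul]; exact le_trans (mul_le_mul_of_nonneg_right (hk t) (abs_nonneg _)) hh
    have b2 : |-(k (t + h) * h)| ≤ 1 / 2 := by
      rw [abs_neg, abs_mul]
      exact le_trans (mul_le_mul_of_nonneg_right (hk _) (abs_nonneg _)) hh
    have l1 := log_one_add_ge b1
    have l2 := log_one_add_ge b2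
    have sq : ∀ s, (k s * h) ^ 2 ≤ C ^ 2 * h ^ 2 := by
      intro s
      rw [mul_pow]
      have : k s ^ 2 ≤ C ^ 2 := sq_le_sq' (by linarith [(abs_le.1 (hk s)).1]) (abs_le.1 (hk s)).2
      exact mul_le_mul_of_nonneg_right this (sq_nonneg _)
    have p1 : 0 < 1 + k t * h := by linarith [(abs_le.1 b1).1]
    have p2 : 0 < 1 + -(k (t + h) * h) := by linarith [(abs_le.1 b2).1]
    have e1 := h1 t (t + h)
    have e2 := h2 (t + h) t
    have e1' : Real.log (f t) + Real.log (1 + k t * h) ≤ Real.log (f (t + h)) := by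
      rw [← Real.log_mul (hf t).ne' p1.ne']
      apply Real.log_le_log (mul_pos (hf t) p1)
      calc _ = f t * (1 + k t * (t + h - t)) := by ring
        _ ≤ _ := e1
    have e2' : Real.log (g (t + h)) + Real.log (1 + -(k (t + h) * h)) ≤ Real.log (g t) := by
      rw [← Real.log_mul (hg _).ne' p2.ne']
      apply Real.log_le_log (mul_pos (hg _) p2)
      calc _ = g (t + h) * (1 + k (t + h) * (t - (t + h))) := by ring
        _ ≤ _ := e2
    have s1 := sq t
    have s2 := sq (t + h)
    nlinarith
  have many : ∀ (n : ℕ) (h : ℝ), C * |h| ≤ 1 / 2 →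
      Real.log (f a) - Real.log (g a) +
        (k a * h - k (a + n * h) * h - n * (4 * C ^ 2 * h ^ 2)) ≤
        Real.log (f (a + n * h)) - Real.log (g (a + n * h)) := by
    intro n h hh
    induction n with
    | zero => simp
    | succ n ih =>
      have := step (a + n * h) h hh
      have e : a + ((n + 1 : ℕ) : ℝ) * h = a + n * h + h := by push_cast; ring
      rw [e]; push_cast
      linarith
  have lim : Filter.Tendsto (fun n : ℕ => Real.log (f a) - Real.log (g a) -
      (2 * C * |b - a| + 4 * C ^ 2 * (b - a) ^ 2) / ((n : ℝ) + 1)) Filter.atTop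
      (nhds (Real.log (f a) - Real.log (g a) - 0)) := by
    apply Filter.Tendsto.sub tendsto_const_nhds
    have := tendsto_one_div_add_atTop_nhds_zero_nat (𝕜 := ℝ)
    have h := this.const_mul (2 * C * |b - a| + 4 * C ^ 2 * (b - a) ^ 2)
    simpa [div_eq_mul_inv] using h
  rw [sub_zero] at lim
  refine le_of_tendsto lim ?_
  obtain ⟨n0, hn0⟩ := exists_nat_gt (2 * C * |b - a|)
  filter_upwards [Filter.eventually_ge_atTop n0] with n hn
  have hn' : (n0 : ℝ) ≤ n := by exact_mod_cast hn
  have hnp : (0 : ℝ) < n + 1 := by positivity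
  have habs : |(b - a) / ((n : ℝ) + 1)| = |b - a| / (n + 1) := by
    rw [abs_div, abs_of_pos hnp]
  have := many (n + 1) ((b - a) / (n + 1)) (by
    rw [habs, mul_div_assoc', div_le_iff₀ hnp]; linarith)
  have e : a + ((n + 1 : ℕ) : ℝ) * ((b - a) / (n + 1)) = b := by
    push_cast; field_simp; ring
  rw [e] at this
  refine le_trans ?_ this
  have k1 : (k b - k a) * ((b - a) / (n + 1)) ≤ 2 * C * |b - a| / (n + 1) := by
    calc _ ≤ |(k b - k a) * ((b - a) / (n + 1))| := le_abs_self _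
      _ = |k b - k a| * (|b - a| / (n + 1)) := by rw [abs_mul, habs]
      _ ≤ (2 * C) * (|b - a| / (n + 1)) := by
        apply mul_le_mul_of_nonneg_right _ (by positivity)
        exact le_trans (abs_sub _ _) (by linarith [hk a, hk b])
      _ = _ := by ring
  have k2 : ((n + 1 : ℕ) : ℝ) * (4 * C ^ 2 * ((b - a) / (n + 1)) ^ 2) =
      4 * C ^ 2 * (b - a) ^ 2 / (n + 1) := by
    push_cast; field_simp
  rw [k2, add_div]
  linarith

/-- Two positive functions on the line with a common (bounded) logarithmic subgradient at
every point are proportional. No measurability or continuity of the subgradient is needed: the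
errors telescope along a fine subdivision. -/
lemma ratio_const {f g k : ℝ → ℝ} {C : ℝ} (hf : ∀ t, 0 < f t) (hg : ∀ t, 0 < g t)
    (hk : ∀ t, |k t| ≤ C) (h1 : ∀ t s, f t * (1 + k t * (s - t)) ≤ f s)
    (h2 : ∀ t s, g t * (1 + k t * (s - t)) ≤ g s) (a b : ℝ) :
    f a / g a = f b / g b := by
  have e : Real.log (f a) - Real.log (g a) = Real.log (f b) - Real.log (g b) :=
    le_antisymm (ratio_mono hf hg hk h1 h2 a b) (ratio_mono hf hg hk h1 h2 b a)
  rw [← Real.log_div (hf a).ne' (hg a).ne', ← Real.log_div (hf b).ne' (hg b).ne'] at e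
  exact Real.log_injOn_pos (div_pos (hf a) (hg a)) (div_pos (hf b) (hg b)) e

/-- Birkhoff–James orthogonality of `z` to `d` with respect to a gauge-like function `G`:
moving from `z` along the line in direction `d` never decreases `G`. -/
def BJ {E : Type*} [AddCommGroup E] [Module ℝ E] (G : E → ℝ) (z d : E) : Prop :=
  ∀ τ : ℝ, G z ≤ G (z + τ • d)

/-- The area form on `ℂ` regarded as a real plane. -/
def cdet (z w : ℂ) : ℝ := z.re * w.im - z.im * w.re

lemma cdet_dec {u d : ℂ} (h : cdet u d ≠ 0) (x : ℂ) :
    x = (cdet x d / cdet u d) • u + (cdet u x / cdet u d) • d := by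
  have h' := h
  generalize hD : cdet u d = D at h'
  apply Complex.ext
  · simp only [Complex.add_re, Complex.real_smul, Complex.mul_re, Complex.ofReal_re,
      Complex.ofReal_im, zero_mul, sub_zero, div_mul_eq_mul_div, ← add_div]
    rw [eq_div_iff h', ← hD]; simp only [cdet]; ring
  · simp only [Complex.add_im, Complex.real_smul, Complex.mul_im, Complex.ofReal_re,
      Complex.ofReal_im, zero_mul, add_zero, div_mul_eq_mul_div, ← add_div]
    rw [eq_div_iff h', ← hD]; simp only [cdet]; ring

lemma exists_smul_of_cdet {u d : ℂ} (hd : d ≠ 0) (h : cdet u d = 0) : ∃ τ : ℝ, u = τ • d := by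
  have hnd : 0 < d.re ^ 2 + d.im ^ 2 := by
    have := Complex.normSq_pos.2 hd; rw [Complex.normSq_apply] at this; nlinarith
  simp only [cdet] at h
  refine ⟨(u.re * d.re + u.im * d.im) / (d.re ^ 2 + d.im ^ 2), ?_⟩
  apply Complex.ext
  · simp only [Complex.real_smul, Complex.mul_re, Complex.ofReal_re, Complex.ofReal_im]
    field_simp
    linear_combination d.im * h
  · simp only [Complex.real_smul, Complex.mul_im, Complex.ofReal_re, Complex.ofReal_im]
    field_simp
    linear_combination (-d.re) * h

/-- If the level curve of a planar gauge `G` has parallel support lines at the two ends of every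
chord through the origin, then `G` is even. -/
lemma even_of_parallel {G : ℂ → ℝ} (hGc : Continuous G)
    (hGh : ∀ (c : ℝ) (z : ℂ), 0 ≤ c → G (c • z) = c * G z) (hGp : ∀ z, z ≠ 0 → 0 < G z)
    (hP : ∀ z, z ≠ 0 → ∃ d, d ≠ 0 ∧ BJ G z d ∧ BJ G (-z) d) (z : ℂ) : G (-z) = G z := by
  have G0 : G 0 = 0 := by simpa using hGh 0 0 le_rfl
  have Gnn : ∀ z, 0 ≤ G z := by
    intro z
    by_cases h : z = 0
    · rw [h, G0]
    · exact (hGp z h).le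
  -- the support lines are transversal to the chord
  have key : ∀ (F : ℂ → ℝ), (∀ (c : ℝ) (z : ℂ), 0 ≤ c → F (c • z) = c * F z) →
      (∀ z, 0 ≤ F z) → ∀ (u d : ℂ) (k κ : ℝ), BJ F u d → k * F u ≤ F (k • u + κ • d) := by
    intro F hFh hFn u d k κ hB
    rcases le_or_gt k 0 with hk | hk
    · exact le_trans (mul_nonpos_of_nonpos_of_nonneg hk (hFn u)) (hFn _)
    · have : k • u + κ • d = k • (u + (κ / k) • d) := by
        rw [smul_add, smul_smul, mul_div_cancel₀ _ hk.ne']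
      rw [this, hFh _ _ hk.le]
      exact mul_le_mul_of_nonneg_left (hB _) hk.le
  set Gm : ℂ → ℝ := fun z => G (-z) with hGm
  have hGmh : ∀ (c : ℝ) (z : ℂ), 0 ≤ c → Gm (c • z) = c * Gm z := by
    intro c z hc; simp only [hGm]; rw [← smul_neg, hGh c _ hc]
  have Gmnn : ∀ z, 0 ≤ Gm z := fun z => Gnn _
  -- constancy of `G z / G (-z)` along the line `e₁ + t e₂`
  have chart : ∀ e₁ e₂ : ℂ, e₁ ≠ 0 → e₂ ≠ 0 → (e₁ * (starRingEnd ℂ) e₂).re = 0 →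
      ∀ a b : ℝ, G (e₁ + a • e₂) / Gm (e₁ + a • e₂) = G (e₁ + b • e₂) / Gm (e₁ + b • e₂) := by
    intro e₁ e₂ h1 h2 hperp
    have horth : e₁.re * e₂.re + e₁.im * e₂.im = 0 := by
      simpa [Complex.mul_re] using hperp
    have hdet : e₁.re * e₂.im - e₁.im * e₂.re ≠ 0 := by
      intro h0
      have : (e₁.re ^ 2 + e₁.im ^ 2) * (e₂.re ^ 2 + e₂.im ^ 2) = 0 := by
        have : (e₁.re ^ 2 + e₁.im ^ 2) * (e₂.re ^ 2 + e₂.im ^ 2) =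
          (e₁.re * e₂.re + e₁.im * e₂.im) ^ 2 + (e₁.re * e₂.im - e₁.im * e₂.re) ^ 2 := by ring
        rw [this, horth, h0]; norm_num
      have q1 : 0 < e₁.re ^ 2 + e₁.im ^ 2 := by
        have := Complex.normSq_pos.2 h1; rw [Complex.normSq_apply] at this; nlinarith
      have q2 : 0 < e₂.re ^ 2 + e₂.im ^ 2 := by
        have := Complex.normSq_pos.2 h2; rw [Complex.normSq_apply] at this; nlinarith
      exact absurd this (mul_pos q1 q2).ne'
    have une : ∀ t : ℝ, e₁ + t • e₂ ≠ 0 := by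
      intro t h
      have hr := congrArg Complex.re h
      have hi := congrArg Complex.im h
      simp at hr hi
      apply hdet
      have a1 : e₁.re = -(t * e₂.re) := by linarith
      have a2 : e₁.im = -(t * e₂.im) := by linarith
      rw [a1, a2]; ring
    -- decomposition of `e₂` along the chord and the support line
    have dec : ∀ t : ℝ, ∃ d : ℂ, ∃ k κ : ℝ, BJ G (e₁ + t • e₂) d ∧ BJ G (-(e₁ + t • e₂)) d ∧
        e₂ = k • (e₁ + t • e₂) + κ • d := by
      intro t
      obtain ⟨d, hd0, hd1, hd2⟩ := hP _ (une t)
      set u := e₁ + t • e₂ with hu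
      have hdu : cdet u d ≠ 0 := by
        intro h0
        obtain ⟨τ, hτ⟩ := exists_smul_of_cdet hd0 h0
        have := hd1 (-τ)
        rw [show u + (-τ) • d = 0 by rw [hτ]; module, G0] at this
        exact absurd (hGp u (une t)) (not_lt.2 this)
      exact ⟨d, _, _, hd1, hd2, cdet_dec hdu e₂⟩
    choose d k κ hd1 hd2 hdec using dec
    -- a lower bound for `G` on the chart
    obtain ⟨w, hw, hmin⟩ := (isCompact_sphere (0 : ℂ) 1).exists_isMinOn
      ⟨1, by simp⟩ hGc.continuousOn
    have hwp : 0 < G w := hGp w (by rintro rfl; simp at hw)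
    have hlow : ∀ u : ℂ, G w * ‖u‖ ≤ G u := by
      intro u
      by_cases hu : u = 0
      · simp [hu, G0]
      · have hun : 0 < ‖u‖ := norm_pos_iff.2 hu
        have h := hmin (show (‖u‖⁻¹ • u) ∈ sphere (0 : ℂ) 1 by
          simp only [mem_sphere_iff_norm, sub_zero, norm_smul, norm_inv, norm_norm]
          exact inv_mul_cancel₀ hun.ne')
        simp only [Set.mem_ofPred_eq] at h
        rw [hGh _ _ (by positivity)] at h
        calc G w * ‖u‖ ≤ (‖u‖⁻¹ * G u) * ‖u‖ := mul_le_mul_of_nonneg_right h hun.le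
          _ = G u := by field_simp
    have hnorm : ∀ t : ℝ, ‖e₁‖ ≤ ‖e₁ + t • e₂‖ := by
      intro t
      rw [← sq_le_sq₀ (norm_nonneg _) (norm_nonneg _), ← Complex.normSq_eq_norm_sq,
        ← Complex.normSq_eq_norm_sq, Complex.normSq_apply, Complex.normSq_apply]
      simp only [Complex.add_re, Complex.add_im, Complex.real_smul, Complex.mul_re, Complex.mul_im,
        Complex.ofReal_re, Complex.ofReal_im]
      have hh : 2 * t * (e₁.re * e₂.re + e₁.im * e₂.im) = 0 := by rw [horth, mul_zero]
      nlinarith [sq_nonneg (t * e₂.re), sq_nonneg (t * e₂.im)]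
    set c0 := G w * ‖e₁‖ with hc0
    have hc0p : 0 < c0 := mul_pos hwp (norm_pos_iff.2 h1)
    have hlow' : ∀ t : ℝ, c0 ≤ G (e₁ + t • e₂) := fun t =>
      le_trans (mul_le_mul_of_nonneg_left (hnorm t) hwp.le) (hlow _)
    have hkb : ∀ t, |k t| ≤ (G e₂ + G (-e₂)) / c0 := by
      intro t
      rw [le_div_iff₀ hc0p]
      have q1 := key G hGh Gnn _ _ (k t) (κ t) (hd1 t)
      rw [← hdec t] at q1
      have q2 := key G hGh Gnn _ _ (-k t) (-κ t) (hd1 t)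
      rw [show (-k t) • (e₁ + t • e₂) + (-κ t) • d t = -e₂ by
        conv_rhs => rw [hdec t]
        simp only [neg_smul]; abel] at q2
      have q3 := hlow' t
      have q4 := Gnn e₂
      have q5 := Gnn (-e₂)
      rcases abs_cases (k t) with ⟨h, h'⟩ | ⟨h, h'⟩ <;> rw [h] <;> nlinarith
    refine ratio_const (f := fun t => G (e₁ + t • e₂)) (g := fun t => Gm (e₁ + t • e₂))
      (k := k) (fun t => hGp _ (une t)) (fun t => hGp _ (neg_ne_zero.2 (une t))) hkb ?_ ?_
    · intro t s
      have := key G hGh Gnn _ _ (1 + k t * (s - t)) ((s - t) * κ t) (hd1 t)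
      have e : (1 + k t * (s - t)) • (e₁ + t • e₂) + ((s - t) * κ t) • d t = e₁ + s • e₂ := by
        calc _ = (e₁ + t • e₂) + (s - t) • (k t • (e₁ + t • e₂) + κ t • d t) := by module
          _ = (e₁ + t • e₂) + (s - t) • e₂ := by rw [← hdec t]
          _ = _ := by module
      rw [e] at this
      linarith
    · intro t s
      have hB : BJ Gm (e₁ + t • e₂) (d t) := by
        intro τ
        have := hd2 t (-τ)
        simp only [hGm]
        rwa [show -(e₁ + t • e₂ + τ • d t) = -(e₁ + t • e₂) + (-τ) • d t by module]
      have := key Gm hGmh Gmnn _ _ (1 + k t * (s - t)) ((s - t) * κ t) hB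
      have e : (1 + k t * (s - t)) • (e₁ + t • e₂) + ((s - t) * κ t) • d t = e₁ + s • e₂ := by
        calc _ = (e₁ + t • e₂) + (s - t) • (k t • (e₁ + t • e₂) + κ t • d t) := by module
          _ = (e₁ + t • e₂) + (s - t) • e₂ := by rw [← hdec t]
          _ = _ := by module
      rw [e] at this
      linarith
  by_cases hz : z = 0
  · simp [hz]
  have hz' : Complex.I * z ≠ 0 := mul_ne_zero Complex.I_ne_zero hz
  have p1 : (z * (starRingEnd ℂ) (Complex.I * z)).re = 0 := by
    simp [Complex.mul_re, Complex.mul_im]; ring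
  have p2 : (Complex.I * z * (starRingEnd ℂ) z).re = 0 := by
    simp [Complex.mul_re, Complex.mul_im]; ring
  have p3 : (-z * (starRingEnd ℂ) (Complex.I * z)).re = 0 := by
    simp [Complex.mul_re, Complex.mul_im]; ring
  have c1 := chart z (Complex.I * z) hz hz' p1 0 1
  have c2 := chart (Complex.I * z) z hz' hz p2 1 (-1)
  have c3 := chart (-z) (Complex.I * z) (neg_ne_zero.2 hz) hz' p3 1 0
  simp only [zero_smul, add_zero, one_smul, neg_smul] at c1 c2 c3
  rw [add_comm (Complex.I * z) z] at c2
  rw [add_comm (Complex.I * z) (-z)] at c2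
  have e := c1.trans (c2.trans c3)
  simp only [hGm, neg_neg] at e
  have a1 := hGp z hz
  have a2 := hGp (-z) (neg_ne_zero.2 hz)
  rw [div_eq_div_iff a2.ne' a1.ne'] at e
  nlinarith

/-! ### Planar norms with a linear family of support directions -/

lemma cdet_add_left (x y z : ℂ) : cdet (x + y) z = cdet x z + cdet y z := by
  simp [cdet]; ring
lemma cdet_add_right (x y z : ℂ) : cdet x (y + z) = cdet x y + cdet x z := by
  simp [cdet]; ring
lemma cdet_smul_left (c : ℝ) (x z : ℂ) : cdet (c • x) z = c * cdet x z := by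
  simp [cdet]; ring
lemma cdet_smul_right (c : ℝ) (x z : ℂ) : cdet x (c • z) = c * cdet x z := by
  simp [cdet]; ring
lemma cdet_self (x : ℂ) : cdet x x = 0 := by simp [cdet]; ring
lemma cdet_swap (x y : ℂ) : cdet x y = -cdet y x := by simp [cdet]; ring

lemma BJ.smul {E : Type*} [AddCommGroup E] [Module ℝ E] {N : Seminorm ℝ E} {u d : E}
    (h : BJ N u d) {a : ℝ} (ha : a ≠ 0) (b : ℝ) : BJ N (a • u) (b • d) := by
  intro τ
  have e : a • u + τ • b • d = a • (u + (τ * b / a) • d) := by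
    rw [smul_add, smul_smul, smul_smul, mul_div_cancel₀ _ ha]
  rw [e, map_smul_eq_mul, map_smul_eq_mul]
  exact mul_le_mul_of_nonneg_left (h _) (norm_nonneg _)

lemma BJ.lower {E : Type*} [AddCommGroup E] [Module ℝ E] {N : Seminorm ℝ E} {u d : E}
    (h : BJ N u d) (k κ : ℝ) : |k| * N u ≤ N (k • u + κ • d) := by
  by_cases hk : k = 0
  · simp [hk]
  · have := h.smul hk 1 κ
    rw [map_smul_eq_mul, one_smul] at this
    exact this

lemma seminorm_lip {E : Type*} [NormedAddCommGroup E] [NormedSpace ℝ E] {N : Seminorm ℝ E}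
    {C : NNReal} (hC : ∀ z, N z ≤ C * ‖z‖) : LipschitzWith C N := by
  refine LipschitzWith.of_dist_le_mul fun x y => ?_
  rw [Real.dist_eq, dist_eq_norm]
  exact (abs_sub_map_le_sub N x y).trans (hC _)

/-- A planar norm whose unit circle at `u` has support direction `B u`, with `B` linear, satisfies
the parallelogram law: `N²` is proportional to the quadratic form `det (u, B u)`, because the
logarithmic derivative of the quotient along a line has constant sign, while the quotient has the
same limit at both ends of the line. -/
lemma parallelogram_of_linear_BJ {N : Seminorm ℝ ℂ} {C : NNReal} (hC : ∀ z, N z ≤ C * ‖z‖)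
    (hpos : ∀ z, z ≠ 0 → 0 < N z) (B : ℂ →ₗ[ℝ] ℂ) (hB0 : ∀ u, u ≠ 0 → B u ≠ 0)
    (hB : ∀ u, BJ N u (B u)) (x y : ℂ) :
    N (x + y) ^ 2 + N (x - y) ^ 2 = 2 * (N x ^ 2 + N y ^ 2) := by
  have hNc : Continuous N := (seminorm_lip hC).continuous
  have hBc : Continuous B := B.continuous_of_finiteDimensional
  set q : ℂ → ℝ := fun u => cdet u (B u) with hq
  have hqc : Continuous q := by simp only [hq, cdet]; fun_prop
  have hq0 : ∀ u, u ≠ 0 → q u ≠ 0 := by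
    intro u hu h0
    obtain ⟨τ, hτ⟩ := exists_smul_of_cdet (hB0 u hu) h0
    have := hB u (-τ)
    rw [show u + (-τ) • B u = 0 by nth_rw 1 [hτ]; module, map_zero] at this
    exact absurd (hpos u hu) (not_lt.2 this)
  have hlow : ∀ u v, u ≠ 0 → N u * (cdet v (B u) / q u) ≤ N v := by
    intro u v hu
    have h := (hB u).lower (cdet v (B u) / q u) (cdet u v / q u)
    rw [← cdet_dec (hq0 u hu) v] at h
    nlinarith [le_abs_self (cdet v (B u) / q u), apply_nonneg N u]
  have hqs : ∀ (c : ℝ) u, q (c • u) = c ^ 2 * q u := by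
    intro c u; simp only [hq, map_smul, cdet_smul_left, cdet_smul_right]; ring
  let U : ℝ → ℂ := fun t => 1 + t • Complex.I
  have hU0 : ∀ t, U t ≠ 0 := by
    intro t h; have := congrArg Complex.re h; simp [U] at this
  have hUc : Continuous U := by simp only [U]; fun_prop
  have hI : (Complex.I : ℂ) ≠ 0 := Complex.I_ne_zero
  let k : ℝ → ℝ := fun t => cdet Complex.I (B (U t)) / q (U t)
  have hkc : Continuous k := by
    refine Continuous.div ?_ (hqc.comp hUc) fun t => hq0 _ (hU0 t)
    simp only [cdet]; fun_prop
  let f : ℝ → ℝ := fun t => N (U t)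
  have hfc : Continuous f := hNc.comp hUc
  have hf : ∀ t s, f t + f t * k t * (s - t) ≤ f s := by
    intro t s
    have h := hlow (U t) (U s) (hU0 t)
    have e : U s = U t + (s - t) • Complex.I := by simp only [U]; module
    have e2 : cdet (U s) (B (U t)) / q (U t) = 1 + k t * (s - t) := by
      rw [e, cdet_add_left, cdet_smul_left]
      have : cdet (U t) (B (U t)) = q (U t) := rfl
      rw [this, add_div, div_self (hq0 _ (hU0 t))]
      simp only [k]; ring
    rw [e2] at h
    simp only [f]
    nlinarith
  have hfd : ∀ t, HasDerivAt f (f t * k t) t := by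
    intro t
    rw [hasDerivAt_iff_isLittleO, Asymptotics.isLittleO_iff]
    intro ε hε
    have hc : ContinuousAt (fun s => f s * k s) t := (hfc.mul hkc).continuousAt
    filter_upwards [Metric.continuousAt_iff'.1 hc ε hε] with s hs
    rw [Real.dist_eq] at hs
    have h1 := hf t s
    have h2 := hf s t
    rw [Real.norm_eq_abs, Real.norm_eq_abs, smul_eq_mul, abs_of_nonneg (by nlinarith)]
    calc f s - f t - (s - t) * (f t * k t) ≤ (f s * k s - f t * k t) * (s - t) := by nlinarith
      _ ≤ |f s * k s - f t * k t| * |s - t| := by rw [← abs_mul]; exact le_abs_self _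
      _ ≤ ε * |s - t| := mul_le_mul_of_nonneg_right hs.le (abs_nonneg _)
  set κ₀ : ℝ := (cdet Complex.I (B 1) - cdet 1 (B Complex.I)) / 2 with hκ
  have hqd : ∀ t, HasDerivAt (fun s => q (U s)) (2 * k t * q (U t) - 2 * κ₀) t := by
    intro t
    have e : (fun s => q (U s)) = fun s => q 1 + s * (cdet 1 (B Complex.I) + cdet Complex.I (B 1))
        + s ^ 2 * q Complex.I := by
      funext s
      simp only [hq, U, map_add, map_smul, cdet_add_left, cdet_add_right, cdet_smul_left,
        cdet_smul_right]
      ring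
    rw [e]
    have hd : HasDerivAt (fun s : ℝ => q 1 + s * (cdet 1 (B Complex.I) + cdet Complex.I (B 1))
        + s ^ 2 * q Complex.I)
        (1 * (cdet 1 (B Complex.I) + cdet Complex.I (B 1)) + (2 * t) * q Complex.I) t := by
      refine HasDerivAt.add (((hasDerivAt_id t).mul_const _).const_add _) ?_
      have := (hasDerivAt_pow 2 t).mul_const (q Complex.I)
      simpa using this
    convert hd using 1
    have e3 : k t * q (U t) = cdet Complex.I (B (U t)) := div_mul_cancel₀ _ (hq0 _ (hU0 t))
    rw [mul_assoc, e3, hκ]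
    simp only [U, map_add, map_smul, cdet_add_right, cdet_smul_right, hq]
    ring
  let φ : ℝ → ℝ := fun t => f t ^ 2 / q (U t)
  have hφd : ∀ t, HasDerivAt φ (2 * κ₀ * (f t ^ 2 / q (U t) ^ 2)) t := by
    intro t
    have h := ((hfd t).pow 2).div (hqd t) (hq0 _ (hU0 t))
    refine h.congr_deriv ?_
    have := hq0 _ (hU0 t)
    simp only [Nat.cast_ofNat, Nat.add_one_sub_one, pow_one, Pi.pow_apply]
    generalize q (U t) = Q at *
    field_simp
    ring
  have hlim : ∀ (l : Filter ℝ), Filter.Tendsto (fun t : ℝ => t⁻¹) l (nhds 0) → (∀ᶠ t in l, t ≠ 0) →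
      Filter.Tendsto φ l (nhds (N Complex.I ^ 2 / q Complex.I)) := by
    intro l hl hne
    have hcont : Continuous fun r : ℝ => (r • (1 : ℂ) + Complex.I) := by fun_prop
    have hh : ContinuousAt (fun r : ℝ => N (r • (1 : ℂ) + Complex.I) ^ 2 /
        q (r • (1 : ℂ) + Complex.I)) 0 := by
      refine ContinuousAt.div ((hNc.comp hcont).pow 2).continuousAt
        (hqc.comp hcont).continuousAt ?_
      simpa using hq0 _ hI
    have h2 := hh.tendsto.comp hl
    simp only [zero_smul, zero_add] at h2
    refine h2.congr' ?_
    filter_upwards [hne] with t ht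
    have e : U t = t • (t⁻¹ • (1 : ℂ) + Complex.I) := by
      simp only [U]; rw [smul_add, smul_smul, mul_inv_cancel₀ ht, one_smul]
    simp only [φ, f, Function.comp]
    rw [e, hqs, map_smul_eq_mul, mul_pow, Real.norm_eq_abs, sq_abs,
      mul_div_mul_left _ _ (pow_ne_zero 2 ht)]
  have lt := hlim Filter.atTop tendsto_inv_atTop_zero (Filter.eventually_ne_atTop 0)
  have lb := hlim Filter.atBot tendsto_inv_atBot_zero (Filter.eventually_ne_atBot 0)
  set c := N Complex.I ^ 2 / q Complex.I with hc
  have hφ : ∀ t, φ t = c := by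
    have hdiff : Differentiable ℝ φ := fun t => (hφd t).differentiableAt
    rcases le_total 0 κ₀ with h0 | h0
    · have hm : Monotone φ := monotone_of_deriv_nonneg hdiff fun t => by
        rw [(hφd t).deriv]; positivity
      exact fun t => le_antisymm (hm.ge_of_tendsto lt t) (hm.le_of_tendsto lb t)
    · have hm : Antitone φ := antitone_of_deriv_nonpos hdiff fun t => by
        rw [(hφd t).deriv]
        have : 0 ≤ f t ^ 2 / q (U t) ^ 2 := by positivity
        nlinarith
      exact fun t => le_antisymm (hm.ge_of_tendsto lb t) (hm.le_of_tendsto lt t)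
  have hN : ∀ z, N z ^ 2 = c * q z := by
    intro z
    by_cases hz : z.re = 0
    · have e : z = z.im • Complex.I := by apply Complex.ext <;> simp [hz]
      rw [e, hqs, map_smul_eq_mul, mul_pow, Real.norm_eq_abs, sq_abs, hc]
      have := hq0 _ hI
      field_simp
    · have e : z = z.re • U (z.im / z.re) := by
        apply Complex.ext
        · simp [U]
        · simp [U]; field_simp
      have h := hφ (z.im / z.re)
      have hne := hq0 _ (hU0 (z.im / z.re))
      rw [e, hqs, map_smul_eq_mul, mul_pow, Real.norm_eq_abs, sq_abs]
      simp only [φ, f] at h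
      rw [div_eq_iff hne] at h
      rw [h]; ring
  rw [hN, hN, hN, hN]
  have : q (x + y) + q (x - y) = 2 * (q x + q y) := by
    simp only [hq, cdet, map_add, map_sub, Complex.add_re, Complex.sub_re, Complex.add_im,
      Complex.sub_im]
    ring
  linear_combination c * this

/-! ### Rigidity of planar maps with prescribed chord directions -/

/-- `d` spans the unique support direction of `N` at `u`. -/
def SmoothDir (N : Seminorm ℝ ℂ) (u d : ℂ) : Prop :=
  d ≠ 0 ∧ BJ N u d ∧ ∀ x, BJ N u x → ∃ r : ℝ, x = r • d

lemma SmoothDir.smul {N : Seminorm ℝ ℂ} {u d : ℂ} (h : SmoothDir N u d) {c : ℝ} (hc : c ≠ 0) :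
    SmoothDir N (c • u) d := by
  refine ⟨h.1, by simpa using h.2.1.smul hc 1, fun x hx => h.2.2 x ?_⟩
  have := hx.smul (inv_ne_zero hc) 1
  rwa [smul_smul, inv_mul_cancel₀ hc, one_smul, one_smul] at this

lemma smoothDir_of_differentiableAt {N : Seminorm ℝ ℂ} {u : ℂ} (hu : 0 < N u)
    (hd : DifferentiableAt ℝ N u) : ∃ d, SmoothDir N u d ∧ cdet u d ≠ 0 := by
  set D := fderiv ℝ N u with hD
  have hline : ∀ x : ℂ, HasDerivAt (fun τ : ℝ => N (u + τ • x)) (D x) 0 := by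
    intro x
    have h1 : HasDerivAt (fun τ : ℝ => u + τ • x) x 0 := by
      simpa using ((hasDerivAt_id (0 : ℝ)).smul_const x).const_add u
    have h2 : HasFDerivAt N D (u + (0 : ℝ) • x) := by simpa using hd.hasFDerivAt
    exact h2.comp_hasDerivAt (0 : ℝ) h1
  have hDu : D u = N u := by
    have h1 := hline u
    have h2 : HasDerivAt (fun τ : ℝ => (1 + τ) * N u) (1 * N u) 0 :=
      ((hasDerivAt_id (0 : ℝ)).const_add 1).mul_const _
    have h3 : (fun τ : ℝ => N (u + τ • u)) =ᶠ[nhds 0] fun τ => (1 + τ) * N u := by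
      filter_upwards [lt_mem_nhds (show (-1 : ℝ) < 0 by norm_num)] with τ hτ
      rw [show u + τ • u = (1 + τ) • u by module, map_smul_eq_mul, Real.norm_eq_abs,
        abs_of_pos (by linarith)]
    have := h1.unique (h2.congr_of_eventuallyEq h3)
    simpa using this
  have hker : ∀ x, BJ N u x → D x = 0 := by
    intro x hx
    refine IsLocalMin.hasDerivAt_eq_zero (f := fun τ : ℝ => N (u + τ • x)) ?_ (hline x)
    filter_upwards with τ
    simpa using hx τ
  have hBJ : ∀ x, D x = 0 → BJ N u x := by
    intro x hx τ
    -- the secant slope of a convex function dominates its derivative at the left endpoint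
    have hx' : Filter.Tendsto (fun ε : ℝ => ε⁻¹ • (N (u + ε • (τ • x)) - N u)) (nhdsWithin 0 (Ioi 0))
        (nhds 0) := by
      have := (hline (τ • x)).tendsto_slope_zero_right
      simpa only [zero_add, zero_smul, add_zero, map_smul, hx, smul_zero] using this
    have := le_of_tendsto hx' (b := N (u + τ • x) - N u) ?_
    · linarith
    · filter_upwards [Ioo_mem_nhdsGT (show (0 : ℝ) < 1 by norm_num)] with ε hε
      rw [smul_eq_mul, inv_mul_le_iff₀ hε.1]
      have e : u + ε • (τ • x) = (1 - ε) • u + ε • (u + τ • x) := by module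
      have h1 : N (u + ε • (τ • x)) ≤ (1 - ε) * N u + ε * N (u + τ • x) := by
        rw [e]
        refine (map_add_le_add N _ _).trans ?_
        rw [map_smul_eq_mul, map_smul_eq_mul, Real.norm_eq_abs, Real.norm_eq_abs,
          abs_of_pos hε.1, abs_of_pos (by linarith [hε.2])]
      nlinarith
  -- a kernel vector, by rotating within the plane
  set d : ℂ := (D (Complex.I * u)) • u - (D u) • (Complex.I * u) with hdd
  have hDd : D d = 0 := by
    rw [hdd, map_sub, map_smul, map_smul, smul_eq_mul, smul_eq_mul]; ring
  have hu0 : u ≠ 0 := by rintro rfl; simp at hu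
  have hnu : 0 < u.re ^ 2 + u.im ^ 2 := by
    have := Complex.normSq_pos.2 hu0; rw [Complex.normSq_apply] at this; nlinarith
  have hdet : cdet u d ≠ 0 := by
    have : cdet u d = -(N u * (u.re ^ 2 + u.im ^ 2)) := by
      rw [hdd, sub_eq_add_neg, cdet_add_right, cdet_smul_right, cdet_self, ← neg_smul,
        cdet_smul_right, hDu, show cdet u (Complex.I * u) = u.re ^ 2 + u.im ^ 2 by
          simp [cdet]; ring]
      ring
    rw [this]; exact neg_ne_zero.2 (mul_pos hu hnu).ne'
  refine ⟨d, ⟨?_, hBJ d hDd, ?_⟩, hdet⟩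
  · intro h; rw [h] at hdet; simp [cdet] at hdet
  · intro x hx
    have h := cdet_dec hdet x
    have hx0 := hker x hx
    rw [h, map_add, map_smul, map_smul, hDd, smul_zero, add_zero, hDu, smul_eq_mul] at hx0
    have : cdet x d / cdet u d = 0 := by
      rcases mul_eq_zero.1 hx0 with h0 | h0
      · exact h0
      · exact absurd h0 hu.ne'
    rw [this, zero_smul, zero_add] at h
    exact ⟨_, h⟩

lemma isClosed_BJ {E : Type*} [NormedAddCommGroup E] [NormedSpace ℝ E] {N : E → ℝ}
    (hN : Continuous N) : IsClosed {p : E × E | BJ N p.1 p.2} := by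
  have : {p : E × E | BJ N p.1 p.2} = ⋂ τ : ℝ, {p : E × E | N p.1 ≤ N (p.1 + τ • p.2)} := by
    ext p; simp [BJ]
  rw [this]
  exact isClosed_iInter fun τ => isClosed_le (by fun_prop) (by fun_prop)

/-- The directions `a`, `b`, `a + b` are such that the norm is smooth at each of them rotated by a
right angle, and the support directions of the first two are independent. -/
structure GoodFrame (N : Seminorm ℝ ℂ) (a b d₁ d₂ d₃ : ℂ) : Prop where
  ha : SmoothDir N (Complex.I * a) d₁
  hb : SmoothDir N (Complex.I * b) d₂
  hc : SmoothDir N (Complex.I * (a + b)) d₃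
  hab : cdet a b ≠ 0
  hd : cdet d₁ d₂ ≠ 0

lemma exists_goodFrame {N : Seminorm ℝ ℂ} {C : NNReal} (hC : ∀ z, N z ≤ C * ‖z‖)
    (hpos : ∀ z, z ≠ 0 → 0 < N z) : ∃ a b d₁ d₂ d₃, GoodFrame N a b d₁ d₂ d₃ := by
  have hNc : Continuous N := (seminorm_lip hC).continuous
  have hdense : Dense {z : ℂ | DifferentiableAt ℝ N z} :=
    MeasureTheory.Measure.dense_of_ae
      ((seminorm_lip hC).ae_differentiableAt (μ := MeasureTheory.volume))
  have hcd : ∀ w : ℂ, Continuous fun z => cdet w z := by intro w; simp only [cdet]; fun_prop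
  have hcd' : ∀ w : ℂ, Continuous fun z => cdet z w := by intro w; simp only [cdet]; fun_prop
  obtain ⟨u₁, hu₁o, hu₁⟩ := hdense.inter_open_nonempty {z : ℂ | z ≠ 0} isOpen_ne ⟨1, one_ne_zero⟩
  obtain ⟨d₁, hs₁, hud₁⟩ := smoothDir_of_differentiableAt (hpos u₁ hu₁o) hu₁
  have hopen : IsOpen {z : ℂ | ¬ BJ N z d₁ ∧ cdet u₁ z ≠ 0} := by
    refine IsOpen.inter ?_ (isOpen_ne_fun (hcd u₁) continuous_const)
    exact ((isClosed_BJ hNc).preimage (f := fun z : ℂ => (z, d₁)) (by fun_prop)).isOpen_compl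
  obtain ⟨u₂, ⟨hu₂o, hu₂'⟩, hu₂⟩ := hdense.inter_open_nonempty _ hopen ⟨d₁, by
    refine ⟨fun h => ?_, hud₁⟩
    have := h (-1)
    rw [show d₁ + (-1 : ℝ) • d₁ = 0 by module, map_zero] at this
    exact absurd (hpos _ hs₁.1) (not_lt.2 this)⟩
  have hu₂0 : u₂ ≠ 0 := by rintro rfl; simp [cdet] at hu₂'
  obtain ⟨d₂, hs₂, hud₂⟩ := smoothDir_of_differentiableAt (hpos u₂ hu₂0) hu₂
  have hdd : cdet d₁ d₂ ≠ 0 := by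
    intro h
    obtain ⟨r, hr⟩ := exists_smul_of_cdet hs₂.1 h
    apply hu₂o
    rw [hr]
    simpa using hs₂.2.1.smul one_ne_zero r
  have hopen3 : IsOpen {z : ℂ | 0 < cdet z u₂ / cdet u₁ u₂ ∧ 0 < cdet u₁ z / cdet u₁ u₂} := by
    refine IsOpen.inter (isOpen_lt continuous_const ((hcd' u₂).div_const _))
      (isOpen_lt continuous_const ((hcd u₁).div_const _))
  obtain ⟨u₃, ⟨hα, hβ⟩, hu₃⟩ := hdense.inter_open_nonempty _ hopen3 ⟨u₁ + u₂, by
    simp only [Set.mem_ofPred_eq, cdet_add_left, cdet_add_right, cdet_self, add_zero, zero_add]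
    rw [div_self hu₂']; norm_num⟩
  set α := cdet u₃ u₂ / cdet u₁ u₂
  set β := cdet u₁ u₃ / cdet u₁ u₂
  have h3 : u₃ = α • u₁ + β • u₂ := cdet_dec hu₂' u₃
  have hu₃0 : u₃ ≠ 0 := by
    intro h; simp [α, h, cdet] at hα
  obtain ⟨d₃, hs₃, -⟩ := smoothDir_of_differentiableAt (hpos u₃ hu₃0) hu₃
  have hI : ∀ z : ℂ, Complex.I * (-Complex.I * z) = z := by
    intro z; rw [← mul_assoc, mul_neg, Complex.I_mul_I]; simp
  refine ⟨-Complex.I * (α • u₁), -Complex.I * (β • u₂), d₁, d₂, d₃, ?_, ?_, ?_, ?_, hdd⟩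
  · rw [hI]; exact hs₁.smul hα.ne'
  · rw [hI]; exact hs₂.smul hβ.ne'
  · rw [← mul_add, hI, ← h3]; exact hs₃
  · have : cdet (-Complex.I * (α • u₁)) (-Complex.I * (β • u₂)) = α * β * cdet u₁ u₂ := by
      simp [cdet]; ring
    rw [this]; exact mul_ne_zero (mul_pos hα hβ).ne' hu₂'

/-- A bounded additive function on `[-1, 1]` is linear. -/
lemma linear_of_bdd_additive {f : ℝ → ℝ} {M : ℝ}
    (hb : ∀ s ∈ Icc (-1 : ℝ) 1, |f s| ≤ M)
    (ha : ∀ s h : ℝ, s ∈ Icc (-1 : ℝ) 1 → h ∈ Icc (-1 : ℝ) 1 → s + h ∈ Icc (-1 : ℝ) 1 →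
      f (s + h) = f s + f h) : ∀ s ∈ Icc (-1 : ℝ) 1, f s = s * f 1 := by
  set e : ℝ → ℝ := fun s => f s - s * f 1 with he
  have ea : ∀ s h : ℝ, s ∈ Icc (-1 : ℝ) 1 → h ∈ Icc (-1 : ℝ) 1 → s + h ∈ Icc (-1 : ℝ) 1 →
      e (s + h) = e s + e h := by
    intro s h h1 h2 h3; simp only [he]; rw [ha s h h1 h2 h3]; ring
  have e1 : e 1 = 0 := by simp [he]
  have m0 : (0 : ℝ) ∈ Icc (-1 : ℝ) 1 := by norm_num
  have m1 : (1 : ℝ) ∈ Icc (-1 : ℝ) 1 := by norm_num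
  have e0 : e 0 = 0 := by
    have := ea 0 0 m0 m0 (by norm_num); simp at this; linarith
  have en : ∀ s ∈ Icc (-1 : ℝ) 1, e (-s) = -e s := by
    intro s hs
    have := ea s (-s) hs ⟨by linarith [hs.2], by linarith [hs.1]⟩ (by simp)
    rw [add_neg_cancel, e0] at this; linarith
  have half : ∀ b : ℝ, (∀ s ∈ Icc (-1 : ℝ) 1, |e s| ≤ b) →
      ∀ s ∈ Icc (-1 : ℝ) 1, |e s| ≤ b / 2 := by
    intro b hbd
    have q1 : ∀ s ∈ Icc (0 : ℝ) (1 / 2), |e s| ≤ b / 2 := by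
      intro s hs
      have hs1 : s ∈ Icc (-1 : ℝ) 1 := ⟨by linarith [hs.1], by linarith [hs.2]⟩
      have hs2 : s + s ∈ Icc (-1 : ℝ) 1 := ⟨by linarith [hs.1], by linarith [hs.2]⟩
      have h1 := hbd _ hs2
      rw [ea s s hs1 hs1 hs2, ← two_mul, abs_mul, abs_two] at h1
      linarith
    have q2 : ∀ s ∈ Icc (0 : ℝ) 1, |e s| ≤ b / 2 := by
      intro s hs
      rcases le_total s (1 / 2) with h | h
      · exact q1 s ⟨hs.1, h⟩
      · have hs1 : s ∈ Icc (-1 : ℝ) 1 := ⟨by linarith [hs.1], hs.2⟩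
        have hs2 : 1 - s ∈ Icc (-1 : ℝ) 1 := ⟨by linarith [hs.2], by linarith [hs.1]⟩
        have h1 := ea s (1 - s) hs1 hs2 (by simp)
        rw [add_sub_cancel, e1] at h1
        have h2 := q1 (1 - s) ⟨by linarith [hs.2], by linarith⟩
        rw [show e s = -e (1 - s) by linarith, abs_neg]; exact h2
    intro s hs
    rcases le_total 0 s with h | h
    · exact q2 s ⟨h, hs.2⟩
    · have := q2 (-s) ⟨by linarith, by linarith [hs.1]⟩
      rwa [en s hs, abs_neg] at this
  have hall : ∀ n : ℕ, ∀ s ∈ Icc (-1 : ℝ) 1, |e s| ≤ (M + |f 1|) * (1 / 2) ^ n := by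
    intro n
    induction n with
    | zero =>
      intro s hs
      simp only [he, pow_zero, mul_one]
      refine (abs_sub _ _).trans (add_le_add (hb s hs) ?_)
      rw [abs_mul]
      exact mul_le_of_le_one_left (abs_nonneg _) (abs_le.2 hs)
    | succ n ih =>
      intro s hs
      refine (half _ ih s hs).trans (le_of_eq ?_)
      rw [pow_succ]; ring
  intro s hs
  have hl : Filter.Tendsto (fun n : ℕ => (M + |f 1|) * (1 / 2 : ℝ) ^ n) Filter.atTop (nhds 0) := by
    simpa using (tendsto_pow_atTop_nhds_zero_of_lt_one (r := (1 / 2 : ℝ)) (by norm_num)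
      (by norm_num)).const_mul (M + |f 1|)
  have h0 : |e s| ≤ 0 := ge_of_tendsto' hl fun n => hall n s hs
  have : e s = 0 := abs_nonpos_iff.1 h0
  simp only [he] at this
  linarith

/-! ### Rigidity on parallelograms -/

/-- The parallelogram with centre `0` and half-sides `a`, `b`. -/
def pgram (a b : ℂ) : Set ℂ :=
  {y | ∃ s ∈ Icc (-1 : ℝ) 1, ∃ t ∈ Icc (-1 : ℝ) 1, y = s • a + t • b}

lemma isCompact_pgram (a b : ℂ) : IsCompact (pgram a b) := by
  have : pgram a b = (fun p : ℝ × ℝ => p.1 • a + p.2 • b) '' (Icc (-1 : ℝ) 1 ×ˢ Icc (-1 : ℝ) 1) := by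
    ext y
    simp only [pgram, Set.mem_ofPred_eq, mem_image, mem_prod, Prod.exists]
    constructor
    · rintro ⟨s, hs, t, ht, rfl⟩; exact ⟨s, t, ⟨hs, ht⟩, rfl⟩
    · rintro ⟨s, t, ⟨hs, ht⟩, rfl⟩; exact ⟨s, hs, t, ht, rfl⟩
  rw [this]
  exact (isCompact_Icc.prod isCompact_Icc).image (by fun_prop)

lemma zero_mem_pgram (a b : ℂ) : (0 : ℂ) ∈ pgram a b :=
  ⟨0, by norm_num, 0, by norm_num, by simp⟩

lemma smul_mem_pgram {a b : ℂ} (hab : cdet a b ≠ 0) (y : ℂ) :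
    ∃ c : ℝ, 0 < c ∧ ∀ c', 0 ≤ c' → c' ≤ c → c' • y ∈ pgram a b := by
  set s := cdet y b / cdet a b
  set t := cdet a y / cdet a b
  have hy : y = s • a + t • b := cdet_dec hab y
  have hp : 0 < 1 + |s| + |t| := by positivity
  have hk : ∀ c' r : ℝ, 0 ≤ c' → c' ≤ (1 + |s| + |t|)⁻¹ → |r| ≤ 1 + |s| + |t| →
      c' * r ∈ Icc (-1 : ℝ) 1 := by
    intro c' r h0 h1 h2
    rw [mem_Icc, ← abs_le, abs_mul, abs_of_nonneg h0]
    calc c' * |r| ≤ (1 + |s| + |t|)⁻¹ * (1 + |s| + |t|) := by gcongr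
      _ = 1 := inv_mul_cancel₀ hp.ne'
  refine ⟨(1 + |s| + |t|)⁻¹, by positivity, fun c' h0 h1 => ?_⟩
  refine ⟨c' * s, hk _ _ h0 h1 ?_, c' * t, hk _ _ h0 h1 ?_, ?_⟩
  · linarith [abs_nonneg t]
  · linarith [abs_nonneg s]
  · conv_lhs => rw [hy]
    module

/-- If all increments of `F` on the parallelogram are parallel to `d₂`, and they depend on the
`b`-coordinate only, then `F` is constant: otherwise `d₂` would be a support direction at
`I (a + η b)` for arbitrarily small `η`, hence at `I a`. -/
lemma const_of_degenerate {N : Seminorm ℝ ℂ} (hNc : Continuous N) {a b d₁ d₂ : ℂ}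
    (ha : SmoothDir N (Complex.I * a) d₁) (hd : cdet d₁ d₂ ≠ 0) (hab : cdet a b ≠ 0)
    {F : ℂ → ℂ} {g : ℝ → ℝ}
    (hR : ∀ y ∈ pgram a b, ∀ y' ∈ pgram a b, y ≠ y' → BJ N (Complex.I * (y' - y)) (F y' - F y))
    (hF : ∀ s ∈ Icc (-1 : ℝ) 1, ∀ t ∈ Icc (-1 : ℝ) 1, F (s • a + t • b) = g t • d₂) :
    ∀ t ∈ Icc (-1 : ℝ) 1, ∀ t' ∈ Icc (-1 : ℝ) 1, g t = g t' := by
  by_contra hcon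
  push Not at hcon
  obtain ⟨t₀, ht₀, t₁, ht₁, hne⟩ := hcon
  have bis : ∀ n : ℕ, ∃ t ∈ Icc (-1 : ℝ) 1, ∃ t' ∈ Icc (-1 : ℝ) 1, g t ≠ g t' ∧
      |t' - t| ≤ 2 * (1 / 2) ^ n := by
    intro n
    induction n with
    | zero =>
      refine ⟨t₀, ht₀, t₁, ht₁, hne, ?_⟩
      rw [abs_le]; constructor <;> norm_num <;> linarith [ht₀.1, ht₀.2, ht₁.1, ht₁.2]
    | succ n ih =>
      obtain ⟨t, ht, t', ht', hg, hl⟩ := ih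
      have hm : (t + t') / 2 ∈ Icc (-1 : ℝ) 1 :=
        ⟨by linarith [ht.1, ht'.1], by linarith [ht.2, ht'.2]⟩
      by_cases h : g t = g ((t + t') / 2)
      · refine ⟨(t + t') / 2, hm, t', ht', by rwa [← h], ?_⟩
        rw [show t' - (t + t') / 2 = (t' - t) / 2 by ring, abs_div, abs_two, pow_succ]; linarith
      · refine ⟨t, ht, (t + t') / 2, hm, h, ?_⟩
        rw [show (t + t') / 2 - t = (t' - t) / 2 by ring, abs_div, abs_two, pow_succ]; linarith
  choose t ht t' ht' hg hl using bis
  have hBn : ∀ n, BJ N (Complex.I * (a + (t' n - t n) • b)) d₂ := by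
    intro n
    have m0 : (0 : ℝ) ∈ Icc (-1 : ℝ) 1 := by norm_num
    have m1 : (1 : ℝ) ∈ Icc (-1 : ℝ) 1 := by norm_num
    have e : (1 : ℝ) • a + t' n • b - ((0 : ℝ) • a + t n • b) = a + (t' n - t n) • b := by module
    have h := hR _ ⟨0, m0, t n, ht n, rfl⟩ _ ⟨1, m1, t' n, ht' n, rfl⟩ (by
      intro h
      rw [← sub_eq_zero, ← neg_sub, e, neg_eq_zero] at h
      have : cdet (a + (t' n - t n) • b) b = cdet a b := by
        rw [cdet_add_left, cdet_smul_left, cdet_self]; ring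
      rw [h] at this
      apply hab; rw [← this]; simp [cdet])
    rw [e, hF _ m0 _ (ht n), hF _ m1 _ (ht' n), ← sub_smul] at h
    have hgn : g (t' n) - g (t n) ≠ 0 := sub_ne_zero.2 (hg n).symm
    have h2 := h.smul one_ne_zero (g (t' n) - g (t n))⁻¹
    rwa [smul_smul, inv_mul_cancel₀ hgn, one_smul, one_smul] at h2
  have hlim : Filter.Tendsto (fun n => t' n - t n) Filter.atTop (nhds 0) := by
    refine squeeze_zero_norm hl ?_
    simpa using (tendsto_pow_atTop_nhds_zero_of_lt_one (r := (1 / 2 : ℝ)) (by norm_num)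
      (by norm_num)).const_mul 2
  have hB : BJ N (Complex.I * a) d₂ := by
    have h1 : Filter.Tendsto (fun n => (Complex.I * (a + (t' n - t n) • b), d₂)) Filter.atTop
        (nhds (Complex.I * (a + (0 : ℝ) • b), d₂)) :=
      ((((hlim.smul_const b).const_add a).const_mul Complex.I)).prodMk_nhds tendsto_const_nhds
    have := (isClosed_BJ hNc).mem_of_tendsto h1 (Filter.Eventually.of_forall hBn)
    simpa using this
  obtain ⟨r, hr⟩ := ha.2.2 _ hB
  apply hd
  rw [hr, cdet_smul_right, cdet_self, mul_zero]

/-- A bounded map `F` of the plane whose increments `F y' - F y` are support directions of `N` at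
`I (y' - y)` is linear and injective on the parallelogram of a good frame, provided it is not
degenerate. Non-degeneracy is expressed by a further admissible nonzero value `fs` at `ys`, which
need not be the value of `F`. -/
lemma rigidity {N : Seminorm ℝ ℂ} (hNc : Continuous N) {a b d₁ d₂ d₃ : ℂ}
    (hG : GoodFrame N a b d₁ d₂ d₃) {F : ℂ → ℂ} {M : ℝ} (hF0 : F 0 = 0)
    (hFb : ∀ y ∈ pgram a b, ‖F y‖ ≤ M)
    (hR : ∀ y ∈ pgram a b, ∀ y' ∈ pgram a b, y ≠ y' → BJ N (Complex.I * (y' - y)) (F y' - F y))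
    {ys fs : ℂ} (hys : ys ∈ pgram a b) (hfs : fs ≠ 0)
    (hS : ∀ y ∈ pgram a b, y ≠ ys → BJ N (Complex.I * (ys - y)) (fs - F y)) :
    ∃ A : ℂ →ₗ[ℝ] ℂ, (∀ w, w ≠ 0 → A w ≠ 0) ∧ (∀ w, BJ N (Complex.I * w) (A w)) ∧
      ∀ y ∈ pgram a b, F y = A y := by
  have ha0 : a ≠ 0 := by rintro rfl; exact hG.hab (by simp [cdet])
  have hb0 : b ≠ 0 := by rintro rfl; exact hG.hab (by simp [cdet])
  set D := cdet d₁ d₂ with hD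
  have hD0 : D ≠ 0 := hG.hd
  have m0 : (0 : ℝ) ∈ Icc (-1 : ℝ) 1 := by norm_num
  have m1 : (1 : ℝ) ∈ Icc (-1 : ℝ) 1 := by norm_num
  have Ism : ∀ (r : ℝ) (z : ℂ), Complex.I * (r • z) = r • (Complex.I * z) := by
    intro r z; rw [mul_smul_comm]
  -- increments along `a`
  have incA : ∀ s ∈ Icc (-1 : ℝ) 1, ∀ s' ∈ Icc (-1 : ℝ) 1, ∀ t ∈ Icc (-1 : ℝ) 1,
      ∃ r : ℝ, F (s' • a + t • b) - F (s • a + t • b) = r • d₁ := by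
    intro s hs s' hs' t ht
    by_cases h : s = s'
    · exact ⟨0, by rw [h]; simp⟩
    · have e : s' • a + t • b - (s • a + t • b) = (s' - s) • a := by module
      have hc : s' - s ≠ 0 := sub_ne_zero.2 (Ne.symm h)
      have hB := hR _ ⟨s, hs, t, ht, rfl⟩ _ ⟨s', hs', t, ht, rfl⟩ (by
        intro h'; rw [← h', sub_self] at e; exact smul_ne_zero hc ha0 e.symm)
      rw [e, Ism] at hB
      exact (hG.ha.smul hc).2.2 _ hB
  have incB : ∀ s ∈ Icc (-1 : ℝ) 1, ∀ t ∈ Icc (-1 : ℝ) 1, ∀ t' ∈ Icc (-1 : ℝ) 1,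
      ∃ r : ℝ, F (s • a + t' • b) - F (s • a + t • b) = r • d₂ := by
    intro s hs t ht t' ht'
    by_cases h : t = t'
    · exact ⟨0, by rw [h]; simp⟩
    · have e : s • a + t' • b - (s • a + t • b) = (t' - t) • b := by module
      have hc : t' - t ≠ 0 := sub_ne_zero.2 (Ne.symm h)
      have hB := hR _ ⟨s, hs, t, ht, rfl⟩ _ ⟨s, hs, t', ht', rfl⟩ (by
        intro h'; rw [← h', sub_self] at e; exact smul_ne_zero hc hb0 e.symm)
      rw [e, Ism] at hB
      exact (hG.hb.smul hc).2.2 _ hB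
  have incC : ∀ s ∈ Icc (-1 : ℝ) 1, ∀ t ∈ Icc (-1 : ℝ) 1, ∀ h : ℝ, s + h ∈ Icc (-1 : ℝ) 1 →
      t + h ∈ Icc (-1 : ℝ) 1 →
      ∃ r : ℝ, F ((s + h) • a + (t + h) • b) - F (s • a + t • b) = r • d₃ := by
    intro s hs t ht h hs' ht'
    by_cases hh : h = 0
    · exact ⟨0, by rw [hh]; simp⟩
    · have e : (s + h) • a + (t + h) • b - (s • a + t • b) = h • (a + b) := by module
      have hB := hR _ ⟨s, hs, t, ht, rfl⟩ _ ⟨_, hs', _, ht', rfl⟩ (by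
        intro h'; rw [← h', sub_self] at e
        refine smul_ne_zero hh ?_ e.symm
        intro h0
        apply hG.hab
        have : cdet (a + b) b = cdet a b := by rw [cdet_add_left, cdet_self, add_zero]
        rw [← this, h0]; simp [cdet])
      rw [e, Ism] at hB
      exact (hG.hc.smul hh).2.2 _ hB
  set f : ℝ → ℝ := fun s => cdet (F (s • a)) d₂ / D with hf
  set g : ℝ → ℝ := fun t => cdet d₁ (F (t • b)) / D with hg
  have hFfg : ∀ s ∈ Icc (-1 : ℝ) 1, ∀ t ∈ Icc (-1 : ℝ) 1,
      F (s • a + t • b) = f s • d₁ + g t • d₂ := by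
    intro s hs t ht
    obtain ⟨r, hr⟩ := incB s hs 0 m0 t ht
    obtain ⟨r', hr'⟩ := incA 0 m0 s hs t ht
    rw [zero_smul, add_zero, sub_eq_iff_eq_add] at hr
    rw [zero_smul, zero_add, sub_eq_iff_eq_add] at hr'
    have h := cdet_dec hG.hd (F (s • a + t • b))
    rw [h]
    congr 2
    · rw [hr, cdet_add_left, cdet_smul_left, cdet_swap d₂ d₂, cdet_self]; simp [hf, hD]
    · rw [hr', cdet_add_right, cdet_smul_right, cdet_self]; simp [hg, hD]
  have f0 : f 0 = 0 := by simp [hf, hF0, cdet]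
  have g0 : g 0 = 0 := by simp [hg, hF0, cdet]
  -- the third direction
  set γ₁ := cdet d₃ d₂ / D with hγ₁
  set γ₂ := cdet d₁ d₃ / D with hγ₂
  have hd₃ : d₃ = γ₁ • d₁ + γ₂ • d₂ := cdet_dec hG.hd d₃
  have rel : ∀ s ∈ Icc (-1 : ℝ) 1, ∀ t ∈ Icc (-1 : ℝ) 1, ∀ h : ℝ, s + h ∈ Icc (-1 : ℝ) 1 →
      t + h ∈ Icc (-1 : ℝ) 1 → γ₂ * (f (s + h) - f s) = γ₁ * (g (t + h) - g t) := by
    intro s hs t ht h hs' ht'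
    obtain ⟨r, hr⟩ := incC s hs t ht h hs' ht'
    rw [hFfg _ hs' _ ht', hFfg _ hs _ ht] at hr
    have e : cdet (f (s + h) • d₁ + g (t + h) • d₂ - (f s • d₁ + g t • d₂)) d₃ = 0 := by
      rw [hr, cdet_smul_left, cdet_self, mul_zero]
    rw [show f (s + h) • d₁ + g (t + h) • d₂ - (f s • d₁ + g t • d₂) =
      (f (s + h) - f s) • d₁ + (g (t + h) - g t) • d₂ by module, cdet_add_left, cdet_smul_left,
      cdet_smul_left, cdet_swap d₂ d₃] at e
    have e1 : cdet d₁ d₃ = γ₂ * D := by rw [hγ₂, div_mul_cancel₀ _ hD0]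
    have e2 : cdet d₃ d₂ = γ₁ * D := by rw [hγ₁, div_mul_cancel₀ _ hD0]
    rw [e1, e2] at e
    have : D * (γ₂ * (f (s + h) - f s) - γ₁ * (g (t + h) - g t)) = 0 := by linear_combination e
    rcases mul_eq_zero.1 this with h' | h'
    · exact absurd h' hD0
    · linarith
  -- `F` does not vanish identically
  have hnz : ¬ ((∀ s ∈ Icc (-1 : ℝ) 1, f s = 0) ∧ (∀ t ∈ Icc (-1 : ℝ) 1, g t = 0)) := by
    rintro ⟨hf0, hg0⟩
    have hFz : ∀ y ∈ pgram a b, F y = 0 := by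
      rintro y ⟨s, hs, t, ht, rfl⟩
      rw [hFfg s hs t ht, hf0 s hs, hg0 t ht]; simp
    obtain ⟨s, hs, t, ht, hst⟩ := hys
    have pick : ∀ s : ℝ, ∃ s' ∈ Icc (-1 : ℝ) 1, s' ≠ s := by
      intro s
      by_cases h : s = 0
      · exact ⟨1, m1, by rw [h]; norm_num⟩
      · exact ⟨0, m0, Ne.symm h⟩
    obtain ⟨s', hs', hss⟩ := pick s
    obtain ⟨t', ht', htt⟩ := pick t
    have c1 : s - s' ≠ 0 := sub_ne_zero.2 hss.symm
    have c2 : t - t' ≠ 0 := sub_ne_zero.2 htt.symm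
    have e1 : ys - (s' • a + t • b) = (s - s') • a := by rw [hst]; module
    have e2 : ys - (s • a + t' • b) = (t - t') • b := by rw [hst]; module
    have b1 := hS _ ⟨s', hs', t, ht, rfl⟩ (by
      intro h'; rw [h', sub_self] at e1; exact smul_ne_zero c1 ha0 e1.symm)
    have b2 := hS _ ⟨s, hs, t', ht', rfl⟩ (by
      intro h'; rw [h', sub_self] at e2; exact smul_ne_zero c2 hb0 e2.symm)
    rw [e1, Ism, hFz _ ⟨s', hs', t, ht, rfl⟩, sub_zero] at b1
    rw [e2, Ism, hFz _ ⟨s, hs, t', ht', rfl⟩, sub_zero] at b2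
    obtain ⟨r1, h1⟩ := (hG.ha.smul c1).2.2 _ b1
    obtain ⟨r2, h2⟩ := (hG.hb.smul c2).2.2 _ b2
    have : r1 * D = 0 := by
      rw [hD, ← cdet_smul_left, ← h1, h2, cdet_smul_left, cdet_self, mul_zero]
    rcases mul_eq_zero.1 this with h' | h'
    · rw [h', zero_smul] at h1; exact hfs h1
    · exact hD0 h'
  have hγ1 : γ₁ ≠ 0 := by
    intro hz
    have hγ2 : γ₂ ≠ 0 := by
      intro hz2; apply hG.hc.1; rw [hd₃, hz, hz2]; simp
    have hf0 : ∀ s ∈ Icc (-1 : ℝ) 1, f s = 0 := by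
      intro s hs
      have := rel 0 m0 0 m0 s (by simpa using hs) (by simpa using hs)
      rw [hz, zero_mul, zero_add, f0, sub_zero] at this
      exact (mul_eq_zero.1 this).resolve_left hγ2
    have := const_of_degenerate hNc hG.ha hG.hd hG.hab (g := g) hR (by
      intro s hs t ht; rw [hFfg s hs t ht, hf0 s hs, zero_smul, zero_add])
    exact hnz ⟨hf0, fun t ht => (this t ht 0 m0).trans g0⟩
  have hγ2 : γ₂ ≠ 0 := by
    intro hz
    have hg0 : ∀ s ∈ Icc (-1 : ℝ) 1, g s = 0 := by
      intro s hs
      have := rel 0 m0 0 m0 s (by simpa using hs) (by simpa using hs)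
      rw [hz, zero_mul, zero_add, g0, sub_zero] at this
      exact (mul_eq_zero.1 this.symm).resolve_left hγ1
    have hsw : pgram b a = pgram a b := by
      ext y; constructor
      · rintro ⟨s, hs, t, ht, rfl⟩; exact ⟨t, ht, s, hs, by rw [add_comm]⟩
      · rintro ⟨s, hs, t, ht, rfl⟩; exact ⟨t, ht, s, hs, by rw [add_comm]⟩
    have := const_of_degenerate hNc hG.hb (d₂ := d₁) (b := a)
      (by rw [cdet_swap]; exact neg_ne_zero.2 hG.hd)
      (by rw [cdet_swap]; exact neg_ne_zero.2 hG.hab) (g := f) (F := F)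
      (by rw [hsw]; exact hR) (by
      intro s hs t ht; rw [add_comm, hFfg t ht s hs, hg0 s hs, zero_smul, add_zero])
    exact hnz ⟨fun t ht => (this t ht 0 m0).trans f0, hg0⟩
  have hfg : ∀ h ∈ Icc (-1 : ℝ) 1, γ₂ * f h = γ₁ * g h := by
    intro h hh
    have := rel 0 m0 0 m0 h (by simpa using hh) (by simpa using hh)
    simpa [f0, g0] using this
  have fadd : ∀ s h : ℝ, s ∈ Icc (-1 : ℝ) 1 → h ∈ Icc (-1 : ℝ) 1 → s + h ∈ Icc (-1 : ℝ) 1 →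
      f (s + h) = f s + f h := by
    intro s h hs hh hsh
    have h1 := rel s hs 0 m0 h hsh (by simpa using hh)
    have h2 := hfg h hh
    rw [zero_add, g0, sub_zero, ← h2] at h1
    have := mul_left_cancel₀ hγ2 h1
    linarith
  have fb : ∀ s ∈ Icc (-1 : ℝ) 1, |f s| ≤ (M * |d₂.im| + M * |d₂.re|) / |D| := by
    intro s hs
    have hm : s • a ∈ pgram a b := ⟨s, hs, 0, m0, by simp⟩
    have hM := hFb _ hm
    simp only [hf, abs_div, cdet]
    gcongr
    refine (abs_sub _ _).trans ?_
    rw [abs_mul, abs_mul]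
    gcongr
    · exact (Complex.abs_re_le_norm _).trans hM
    · exact (Complex.abs_im_le_norm _).trans hM
  have flin := linear_of_bdd_additive fb fadd
  have glin : ∀ t ∈ Icc (-1 : ℝ) 1, g t = t * g 1 := by
    intro t ht
    have h1 := hfg t ht
    have h2 := hfg 1 m1
    rw [flin t ht] at h1
    have : γ₁ * g t = γ₁ * (t * g 1) := by linear_combination -h1 + t * h2
    exact mul_left_cancel₀ hγ1 this
  have hf1 : f 1 ≠ 0 := by
    intro hz
    have hg1 : g 1 = 0 := by
      have := hfg 1 m1
      rw [hz, mul_zero] at this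
      exact (mul_eq_zero.1 this.symm).resolve_left hγ1
    exact hnz ⟨fun s hs => by rw [flin s hs, hz, mul_zero],
      fun s hs => by rw [glin s hs, hg1, mul_zero]⟩
  have hg1 : g 1 ≠ 0 := by
    intro hz
    have := hfg 1 m1
    rw [hz, mul_zero] at this
    rcases mul_eq_zero.1 this with h | h
    · exact hγ2 h
    · exact hf1 h
  let A : ℂ →ₗ[ℝ] ℂ :=
    { toFun := fun z => (cdet z b / cdet a b * f 1) • d₁ + (cdet a z / cdet a b * g 1) • d₂
      map_add' := by intro x y; rw [cdet_add_left, cdet_add_right]; module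
      map_smul' := by
        intro r x; rw [cdet_smul_left, cdet_smul_right, RingHom.id_apply]; module }
  have hAF : ∀ y ∈ pgram a b, F y = A y := by
    rintro y ⟨s, hs, t, ht, rfl⟩
    rw [hFfg s hs t ht, flin s hs, glin t ht]
    simp only [A, LinearMap.coe_mk, AddHom.coe_mk, cdet_add_left, cdet_add_right, cdet_smul_left,
      cdet_smul_right, cdet_self, mul_zero, add_zero, zero_add, mul_div_cancel_right₀ _ hG.hab]
  refine ⟨A, ?_, ?_, hAF⟩
  · intro w hw hA
    have e1 : cdet (A w) d₂ = 0 := by rw [hA]; simp [cdet]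
    have e2 : cdet d₁ (A w) = 0 := by rw [hA]; simp [cdet]
    simp only [A, LinearMap.coe_mk, AddHom.coe_mk, cdet_add_left, cdet_add_right, cdet_smul_left,
      cdet_smul_right, cdet_self, mul_zero, add_zero, zero_add] at e1 e2
    have k1 := (mul_eq_zero.1 ((mul_eq_zero.1 e1).resolve_right hD0)).resolve_right hf1
    have k2 := (mul_eq_zero.1 ((mul_eq_zero.1 e2).resolve_right hD0)).resolve_right hg1
    apply hw
    have := cdet_dec hG.hab w
    rw [this, k1, k2]; simp
  · intro w
    by_cases hw : w = 0
    · intro τ; simp [hw]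
    obtain ⟨c, hc, hcm⟩ := smul_mem_pgram hG.hab w
    have hm := hcm c hc.le le_rfl
    have h := hR 0 (zero_mem_pgram a b) _ hm (smul_ne_zero hc.ne' hw).symm
    rw [sub_zero, hF0, sub_zero, hAF _ hm, map_smul, Ism] at h
    have h2 := h.smul (inv_ne_zero hc.ne') c⁻¹
    rwa [smul_smul, smul_smul, inv_mul_cancel₀ hc.ne', one_smul, one_smul] at h2

/-! ### Contact points and the blow-up of the contact map -/

section BlowUp

variable {V : Type*} [NormedAddCommGroup V] [InnerProductSpace ℝ V]

/-- `p` is a point of `L` at which the linear form `⟪v, ·⟫` attains its maximum over `L`. -/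
def IsContact (L : Set V) (v p : V) : Prop := p ∈ L ∧ ∀ x ∈ L, ⟪v, x⟫ ≤ ⟪v, p⟫

/-- Every section of `K` by a support hyperplane of `L` is a translate of the intersection of the
unit ball of `N` with the parallel linear hyperplane, centred at the contact point. -/
def CentredSections (K L : Set V) (N : V → ℝ) : Prop :=
  ∀ v p, v ≠ 0 → IsContact L v p → ∀ w, ⟪v, w⟫ = 0 → (p + w ∈ K ↔ N w ≤ 1)

lemma exists_isContact {L : Set V} (hL : IsCompact L) (hne : L.Nonempty) (v : V) :
    ∃ p, IsContact L v p := by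
  obtain ⟨p, hp, hmax⟩ := hL.exists_isMaxOn hne (f := fun x => ⟪v, x⟫)
    (Continuous.continuousOn (by fun_prop))
  exact ⟨p, hp, fun x hx => hmax hx⟩

/-- A second contact point `p'` would give sections centred at two different points of one
hyperplane. -/
lemma CentredSections.top_unique {K L : Set V} {N : Seminorm ℝ V} (hpos : ∀ x, x ≠ 0 → 0 < N x)
    (hS : CentredSections K L N) {v p p' : V} (hv : v ≠ 0) (hp : IsContact L v p) (hp' : IsContact L v p') :
    p = p' := by
  by_contra hne
  set w := p' - p with hw
  have hw0 : w ≠ 0 := sub_ne_zero.2 (Ne.symm hne)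
  have hN := hpos w hw0
  have hperp : ⟪v, w⟫ = 0 := by
    rw [hw, inner_sub_right]; linarith [hp.2 p' hp'.1, hp'.2 p hp.1]
  have hperp' : ∀ r : ℝ, ⟪v, r • w⟫ = 0 := by intro r; rw [inner_smul_right, hperp, mul_zero]
  have h1 := (hS v p' hv hp' ((N w)⁻¹ • w) (hperp' _)).2 (by
    rw [map_smul_eq_mul, Real.norm_eq_abs, abs_of_pos (inv_pos.2 hN), inv_mul_cancel₀ hN.ne'])
  rw [show p' + (N w)⁻¹ • w = p + (1 + (N w)⁻¹) • w by rw [hw]; module] at h1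
  have h2 := (hS v p hv hp _ (hperp' _)).1 h1
  rw [map_smul_eq_mul, Real.norm_eq_abs, abs_of_pos (by positivity), add_mul,
    inv_mul_cancel₀ hN.ne'] at h2
  linarith

/-- A selection of contact points is continuous where the contact point is unique. -/
lemma continuousAt_top {L : Set V} (hL : IsCompact L) {p : V → V} {v : V}
    (hp : ∀ v, IsContact L v (p v)) (hu : ∀ q, IsContact L v q → q = p v) : ContinuousAt p v := by
  rw [ContinuousAt, Filter.tendsto_iff_ultrafilter]
  intro g hg
  obtain ⟨q, hqL, hq⟩ := hL.ultrafilter_le_nhds' (g.map p) (by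
    rw [Ultrafilter.mem_map]; exact Filter.univ_mem' fun v => (hp v).1)
  have hpq : Filter.Tendsto p g (nhds q) := hq
  have : IsContact L v q := by
    refine ⟨hqL, fun x hx => ?_⟩
    have hid : Filter.Tendsto (fun v : V => v) g (nhds v) := hg
    exact le_of_tendsto_of_tendsto' (hid.inner tendsto_const_nhds)
      (hid.inner hpq) fun w => (hp w).2 x hx
  rw [hu q this] at hpq
  exact hpq

/-- If the parallel lines `a + ℝ u` and `a - D + ℝ u` meet the unit ball of `N` for the same
parameters, then their exit points differ by `D`, and the line through them misses the interior of
the ball outside of the segment between them. -/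
lemma chordal {N : Seminorm ℝ V} (hNc : Continuous N) {a u D : V} (ha : N a < 1) (hu : 0 < N u)
    (h : ∀ τ : ℝ, N (a + τ • u) ≤ 1 ↔ N (a - D + τ • u) ≤ 1) :
    ∃ τ : ℝ, 0 ≤ τ ∧ N (a + τ • u) = 1 ∧
      ∀ x : ℝ, 0 ≤ x ∨ x ≤ -1 → 1 ≤ N (a + τ • u + x • D) := by
  have hT : 1 ≤ N (a + (2 / N u) • u) := by
    have h1 : N ((2 / N u) • u) ≤ N (a + (2 / N u) • u) + N a := by
      have := map_sub_le_add N (a + (2 / N u) • u) a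
      rwa [add_sub_cancel_left] at this
    rw [map_smul_eq_mul, Real.norm_eq_abs, abs_of_pos (by positivity),
      div_mul_cancel₀ _ hu.ne'] at h1
    linarith
  have hc : Continuous fun τ : ℝ => N (a + τ • u) := by fun_prop
  obtain ⟨τ, hτ, hτ1⟩ := intermediate_value_Icc (show (0 : ℝ) ≤ 2 / N u by positivity)
    hc.continuousOn (show (1 : ℝ) ∈ Icc (N (a + (0 : ℝ) • u)) (N (a + (2 / N u) • u)) from
      ⟨by simpa using ha.le, hT⟩)
  simp only at hτ1
  have hτpos : 0 < τ := by
    rcases hτ.1.lt_or_eq with h0 | h0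
    · exact h0
    · rw [← h0] at hτ1; simp at hτ1; linarith
  have hbeyond : ∀ τ' : ℝ, τ < τ' → 1 < N (a + τ' • u) := by
    intro τ' hlt
    have hτ' : 0 < τ' := hτpos.trans hlt
    have e : a + τ • u = (1 - τ / τ') • a + (τ / τ') • (a + τ' • u) := by
      have : (τ / τ') * τ' = τ := div_mul_cancel₀ _ hτ'.ne'
      rw [smul_add, smul_smul, this]; module
    have hr : τ / τ' < 1 := (div_lt_one hτ').2 hlt
    have hr0 : 0 < τ / τ' := by positivity
    have h1 : N (a + τ • u) ≤ (1 - τ / τ') * N a + (τ / τ') * N (a + τ' • u) := by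
      rw [e]
      refine (map_add_le_add N _ _).trans ?_
      rw [map_smul_eq_mul, map_smul_eq_mul, Real.norm_eq_abs, Real.norm_eq_abs,
        abs_of_pos hr0, abs_of_pos (by linarith)]
    rw [hτ1] at h1
    by_contra hcon
    push Not at hcon
    nlinarith
  have hD1 : N (a - D + τ • u) = 1 := by
    refine le_antisymm ((h τ).1 hτ1.le) ?_
    by_contra hcon
    push Not at hcon
    have hc2 : Continuous fun τ : ℝ => N (a - D + τ • u) := by fun_prop
    have hev : ∀ᶠ τ' in nhds τ, N (a - D + τ' • u) < 1 :=
      hc2.continuousAt.eventually_lt continuousAt_const hcon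
    obtain ⟨δ, hδ, hball⟩ := Metric.eventually_nhds_iff.1 hev
    have hs := hball (y := τ + δ / 2) (by
      rw [Real.dist_eq, add_sub_cancel_left, abs_of_pos (by linarith)]; linarith)
    have := (h (τ + δ / 2)).2 hs.le
    exact absurd (hbeyond _ (by linarith)) (not_lt.2 this)
  refine ⟨τ, hτpos.le, hτ1, ?_⟩
  set b := a + τ • u with hb
  have hbD : N (b - D) = 1 := by rw [← hD1, hb]; congr 1; abel
  have conv : ∀ (x y : V) (r : ℝ), 0 ≤ r → r ≤ 1 →
      N ((1 - r) • x + r • y) ≤ (1 - r) * N x + r * N y := by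
    intro x y r h0 h1
    refine (map_add_le_add N _ _).trans ?_
    rw [map_smul_eq_mul, map_smul_eq_mul, Real.norm_eq_abs, Real.norm_eq_abs, abs_of_nonneg h0,
      abs_of_nonneg (by linarith)]
  rintro x (hx | hx)
  · -- `b` lies between `b - D` and `b + x D`
    have h1 := conv (b - D) (b + x • D) (1 / (1 + x)) (by positivity)
      ((div_le_one (by linarith)).2 (by linarith))
    have e : (1 - 1 / (1 + x)) • (b - D) + (1 / (1 + x)) • (b + x • D) = b := by
      have : 1 / (1 + x) * x = 1 - 1 / (1 + x) := by field_simp; ring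
      rw [smul_add, smul_smul, this]; module
    rw [e, hτ1, hbD] at h1
    have hr : 0 < 1 / (1 + x) := by positivity
    by_contra hcon
    push Not at hcon
    nlinarith
  · -- `b - D` lies between `b` and `b + x D`
    have hx0 : 0 < -x := by linarith
    have h1 := conv b (b + x • D) (1 / (-x)) (by positivity) ((div_le_one hx0).2 (by linarith))
    have e : (1 - 1 / (-x)) • b + (1 / (-x)) • (b + x • D) = b - D := by
      have hxne : x ≠ 0 := by intro h0; rw [h0] at hx0; simp at hx0
      have : 1 / (-x) * x = -1 := by field_simp
      rw [smul_add (1 / (-x)) b, smul_smul (1 / (-x)) x, this]; module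
    rw [e, hτ1, hbD] at h1
    have hr : 0 < 1 / (-x) := by positivity
    by_contra hcon
    push Not at hcon
    nlinarith

/-- The limiting relation between increments of the contact map: as the normals `v₀ + ε y` and
`v₀ + ε y'` tend to `v₀`, rescaled increments of the contact point tend to a support direction of
the section norm at `I (y' - y)`. -/
lemma limit_relation {K L : Set V} {N : Seminorm ℝ V} (hNc : Continuous N)
    (hpos : ∀ x, x ≠ 0 → 0 < N x)
    (hS : CentredSections K L N) {p : V → V} (hp : ∀ v, IsContact L v (p v)) {v₀ : V} (hv₀ : ‖v₀‖ = 1)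
    (hpc : ContinuousAt p v₀) (e : ℂ →ₗᵢ[ℝ] V) (he : ∀ z, ⟪v₀, e z⟫ = 0)
    {ι : Type*} {l : Filter ι} [l.NeBot] {ε σ : ι → ℝ} {y y' : ι → ℂ} {y₀ y₀' δ : ℂ}
    (hε : ∀ k, 0 < ε k) (hε0 : Filter.Tendsto ε l (nhds 0)) (hσ : ∀ k, 0 < σ k)
    (hσ0 : Filter.Tendsto σ l (nhds 0)) (hy : Filter.Tendsto y l (nhds y₀))
    (hy' : Filter.Tendsto y' l (nhds y₀')) (hne : y₀ ≠ y₀')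
    (hδ : Filter.Tendsto (fun k => (σ k)⁻¹ • (p (v₀ + ε k • e (y' k)) - p (v₀ + ε k • e (y k)))) l
      (nhds (e δ))) : BJ (N.comp e.toLinearMap) (Complex.I * (y₀' - y₀)) δ := by
  set v : ι → V := fun k => v₀ + ε k • e (y k) with hv
  set v' : ι → V := fun k => v₀ + ε k • e (y' k) with hv'
  set D : ι → V := fun k => p (v' k) - p (v k) with hD
  set W : ι → V := fun k => e (y' k - y k) with hW
  set u : ι → V := fun k => e (Complex.I * (y' k - y k)) with hu
  set E : ι → V := fun k => W k - (ε k * ⟪W k, e (y k)⟫) • v₀ with hE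
  set û : ι → V := fun k => u k - (ε k * ⟪e (y k), u k⟫) • v₀ with hû
  set s : ι → ℝ := fun k => ⟪D k, v' k⟫ / (ε k * ‖W k‖ ^ 2) with hs
  have hec : Continuous e := e.continuous
  have he' : ∀ z, ⟪e z, v₀⟫ = 0 := fun z => by rw [real_inner_comm]; exact he z
  have hv₀2 : ⟪v₀, v₀⟫ = 1 := by rw [real_inner_self_eq_norm_sq, hv₀]; norm_num
  have hvlim : Filter.Tendsto v l (nhds v₀) := by
    have := (hε0.smul ((hec.tendsto _).comp hy)).const_add v₀
    simpa using this
  have hvlim' : Filter.Tendsto v' l (nhds v₀) := by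
    have := (hε0.smul ((hec.tendsto _).comp hy')).const_add v₀
    simpa using this
  have hDlim : Filter.Tendsto D l (nhds 0) := by
    have := (hpc.tendsto.comp hvlim').sub (hpc.tendsto.comp hvlim)
    simpa using this
  have hwlim : Filter.Tendsto (fun k => y' k - y k) l (nhds (y₀' - y₀)) := hy'.sub hy
  have hWlim : Filter.Tendsto W l (nhds (e (y₀' - y₀))) := (hec.tendsto _).comp hwlim
  have hulim : Filter.Tendsto u l (nhds (e (Complex.I * (y₀' - y₀)))) :=
    (hec.tendsto _).comp (hwlim.const_mul _)
  have heylim : Filter.Tendsto (fun k => e (y k)) l (nhds (e y₀)) := (hec.tendsto _).comp hy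
  have hElim : Filter.Tendsto E l (nhds (e (y₀' - y₀))) := by
    have := hWlim.sub ((hε0.mul (hWlim.inner heylim)).smul_const v₀)
    simpa using this
  have hûlim : Filter.Tendsto û l (nhds (e (Complex.I * (y₀' - y₀)))) := by
    have := hulim.sub ((hε0.mul (heylim.inner hulim)).smul_const v₀)
    simpa using this
  have hw0 : y₀' - y₀ ≠ 0 := sub_ne_zero.2 hne.symm
  have hU0 : e (Complex.I * (y₀' - y₀)) ≠ 0 := by
    rw [Ne, map_eq_zero_iff e e.injective]; exact mul_ne_zero Complex.I_ne_zero hw0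
  have hNU := hpos _ hU0
  set U := e (Complex.I * (y₀' - y₀)) with hUdef
  have hW0 : ∀ᶠ k in l, W k ≠ 0 := hWlim.eventually_ne (by
    rw [Ne, map_eq_zero_iff e e.injective]; exact hw0)
  have hv0 : ∀ k, v k ≠ 0 := by
    intro k h
    have : ⟪v₀, v k⟫ = 1 := by
      simp only [hv]; rw [inner_add_right, inner_smul_right, he, hv₀2]; ring
    rw [h, inner_zero_right] at this; norm_num at this
  have hv0' : ∀ k, v' k ≠ 0 := by
    intro k h
    have : ⟪v₀, v' k⟫ = 1 := by
      simp only [hv']; rw [inner_add_right, inner_smul_right, he, hv₀2]; ring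
    rw [h, inner_zero_right] at this; norm_num at this
  have hvv : ∀ k, v' k = v k + ε k • W k := by
    intro k; simp only [hv, hv', hW, map_sub]; module
  have hWu : ∀ k, ⟪W k, u k⟫ = 0 := by
    intro k
    simp only [hW, hu, LinearIsometry.inner_map_map, Complex.inner]
    simp [Complex.mul_re, Complex.mul_im]; ring
  have hEv : ∀ k, ⟪v k, E k⟫ = 0 := by
    intro k
    simp only [hv, hE]
    rw [inner_sub_right, inner_add_left, inner_add_left, inner_smul_left, inner_smul_right,
      inner_smul_right, inner_smul_left, hv₀2, he' (y k), real_inner_comm (W k) (e (y k))]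
    simp only [hW, he, conj_trivial]; ring
  have hWv0 : ∀ k, ⟪W k, v₀⟫ = 0 := fun k => he' _
  have hEv' : ∀ k, ⟪v' k, E k⟫ = ε k * ‖W k‖ ^ 2 := by
    intro k
    rw [hvv, inner_add_left, hEv, inner_smul_left]
    simp only [hE]
    rw [inner_sub_right, inner_smul_right, hWv0, real_inner_self_eq_norm_sq]
    simp
  have hûv : ∀ k, ⟪v k, û k⟫ = 0 := by
    intro k
    simp only [hv, hû]
    rw [inner_sub_right, inner_add_left, inner_add_left, inner_smul_left, inner_smul_right,
      inner_smul_right, inner_smul_left, hv₀2, he' (y k)]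
    simp only [hu, he, conj_trivial]; ring
  have hûv' : ∀ k, ⟪v' k, û k⟫ = 0 := by
    intro k
    rw [hvv, inner_add_left, hûv, inner_smul_left]
    simp only [hû]
    rw [inner_sub_right, inner_smul_right, hWv0, hWu]
    simp
  have hs0 : ∀ k, 0 ≤ s k := by
    intro k
    have h1 := (hp (v' k)).2 _ (hp (v k)).1
    simp only [hs, hD]
    refine div_nonneg ?_ (mul_nonneg (hε k).le (sq_nonneg _))
    rw [real_inner_comm, inner_sub_right]; linarith
  have hsle : ∀ k, W k ≠ 0 → s k ≤ ‖D k‖ / ‖W k‖ := by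
    intro k hk
    have h1 := (hp (v k)).2 _ (hp (v' k)).1
    have hWp : 0 < ‖W k‖ := norm_pos_iff.2 hk
    have h2 : ⟪D k, v' k⟫ ≤ ε k * (‖D k‖ * ‖W k‖) := by
      rw [hvv, inner_add_right, inner_smul_right]
      have : ⟪D k, v k⟫ ≤ 0 := by
        rw [real_inner_comm]; simp only [hD]; rw [inner_sub_right]; linarith
      have h3 := mul_le_mul_of_nonneg_left (real_inner_le_norm (D k) (W k)) (hε k).le
      linarith
    simp only [hs]
    rw [div_le_div_iff₀ (mul_pos (hε k) (by positivity)) hWp]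
    nlinarith
  have hslim : Filter.Tendsto s l (nhds 0) := by
    have hb : Filter.Tendsto (fun k => ‖D k‖ / ‖W k‖) l (nhds (‖(0 : V)‖ / ‖e (y₀' - y₀)‖)) :=
      hDlim.norm.div hWlim.norm (by rw [LinearIsometry.norm_map]; exact norm_ne_zero_iff.2 hw0)
    rw [norm_zero, zero_div] at hb
    exact tendsto_of_tendsto_of_tendsto_of_le_of_le' tendsto_const_nhds hb
      (Filter.Eventually.of_forall hs0) (hW0.mono hsle)
  set a : ι → V := fun k => s k • E k with ha
  have halim : Filter.Tendsto a l (nhds 0) := by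
    have := hslim.smul hElim
    rwa [zero_smul] at this
  have hNa : Filter.Tendsto (fun k => N (a k)) l (nhds 0) := by
    have := (hNc.tendsto 0).comp halim
    rwa [map_zero] at this
  have hNû : Filter.Tendsto (fun k => N (û k)) l (nhds (N U)) := (hNc.tendsto _).comp hûlim
  -- the two sections of `K` through the common line of the two support hyperplanes
  have hsame : ∀ k, W k ≠ 0 → ∀ τ : ℝ,
      N (a k + τ • û k) ≤ 1 ↔ N (a k - D k + τ • û k) ≤ 1 := by
    intro k hk τ
    have hWp : 0 < ‖W k‖ := norm_pos_iff.2 hk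
    have q1 : ⟪v k, a k + τ • û k⟫ = 0 := by
      simp only [ha]; rw [inner_add_right, inner_smul_right, inner_smul_right, hEv, hûv]; ring
    have q2 : ⟪v' k, a k - D k + τ • û k⟫ = 0 := by
      simp only [ha]
      rw [inner_add_right, inner_sub_right, inner_smul_right, inner_smul_right, hEv', hûv']
      simp only [hs]
      rw [div_mul_cancel₀ _ (mul_pos (hε k) (by positivity)).ne', real_inner_comm]; ring
    rw [← hS _ _ (hv0 k) (hp _) _ q1, ← hS _ _ (hv0' k) (hp _) _ q2]
    rw [show p (v k) + (a k + τ • û k) = p (v' k) + (a k - D k + τ • û k) by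
      simp only [hD]; abel]
  have hex : ∀ᶠ k in l, ∃ τ : ℝ, 0 ≤ τ ∧ N (a k + τ • û k) = 1 ∧
      ∀ x : ℝ, 0 ≤ x ∨ x ≤ -1 → 1 ≤ N (a k + τ • û k + x • D k) := by
    filter_upwards [hW0, hNa.eventually_lt tendsto_const_nhds (show (0 : ℝ) < 1 by norm_num),
      (tendsto_const_nhds (x := (0 : ℝ))).eventually_lt hNû hNU] with k h1 h2 h3
    exact chordal hNc h2 h3 (hsame k h1)
  have : ∃ τ : ι → ℝ, ∀ᶠ k in l, 0 ≤ τ k ∧ N (a k + τ k • û k) = 1 ∧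
      ∀ x : ℝ, 0 ≤ x ∨ x ≤ -1 → 1 ≤ N (a k + τ k • û k + x • D k) := by
    classical
    refine ⟨fun k => if h : _ then Classical.choose (p := fun τ : ℝ => 0 ≤ τ ∧
      N (a k + τ • û k) = 1 ∧ ∀ x : ℝ, 0 ≤ x ∨ x ≤ -1 → 1 ≤ N (a k + τ • û k + x • D k)) h
      else 0, ?_⟩
    filter_upwards [hex] with k hk
    rw [dif_pos hk]
    exact Classical.choose_spec hk
  obtain ⟨τ, hτ⟩ := this
  have hτN : Filter.Tendsto (fun k => τ k * N (û k)) l (nhds 1) := by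
    rw [tendsto_iff_norm_sub_tendsto_zero]
    refine tendsto_of_tendsto_of_tendsto_of_le_of_le' tendsto_const_nhds hNa
      (Filter.Eventually.of_forall fun k => norm_nonneg _) ?_
    filter_upwards [hτ] with k hk
    have e1 : τ k * N (û k) = N (τ k • û k) := by
      rw [map_smul_eq_mul, Real.norm_eq_abs, abs_of_nonneg hk.1]
    rw [e1, ← hk.2.1, Real.norm_eq_abs]
    refine (abs_sub_map_le_sub N _ _).trans (le_of_eq ?_)
    rw [show τ k • û k - (a k + τ k • û k) = -a k by abel, map_neg_eq_map]
  have hτlim : Filter.Tendsto τ l (nhds (N U)⁻¹) := by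
    have h1 := hτN.div hNû hNU.ne'
    rw [one_div] at h1
    refine h1.congr' ?_
    filter_upwards [(tendsto_const_nhds (x := (0 : ℝ))).eventually_lt hNû hNU] with k hk
    simp only [Pi.div_apply]
    rw [mul_div_cancel_right₀ _ hk.ne']
  have hblim : Filter.Tendsto (fun k => a k + τ k • û k) l (nhds ((N U)⁻¹ • U)) := by
    have := halim.add (hτlim.smul hûlim)
    rwa [zero_add] at this
  have hfin : ∀ x : ℝ, 1 ≤ N ((N U)⁻¹ • U + x • e δ) := by
    intro x
    by_cases hx : x = 0
    · rw [hx, zero_smul, add_zero, map_smul_eq_mul, Real.norm_eq_abs,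
        abs_of_pos (inv_pos.2 hNU), inv_mul_cancel₀ hNU.ne']
    have hl := (hNc.tendsto _).comp (hblim.add (hδ.const_smul x))
    refine ge_of_tendsto hl ?_
    filter_upwards [hτ, hσ0.eventually_lt tendsto_const_nhds (abs_pos.2 hx)] with k hk hσk
    simp only [Function.comp]
    rw [smul_smul]
    refine hk.2.2 _ ?_
    rcases lt_or_gt_of_ne hx with h | h
    · right
      rw [abs_of_neg h] at hσk
      rw [← div_eq_mul_inv, div_le_iff₀ (hσ k)]; linarith
    · left; exact mul_nonneg h.le (inv_pos.2 (hσ k)).le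
  intro x
  have h1 := hfin (x / N U)
  have e1 : (N U)⁻¹ • U + (x / N U) • e δ = (N U)⁻¹ • (U + x • e δ) := by
    rw [smul_add, smul_smul, inv_mul_eq_div]
  rw [e1, map_smul_eq_mul, Real.norm_eq_abs, abs_of_pos (inv_pos.2 hNU), le_inv_mul_iff₀ hNU,
    mul_one] at h1
  rw [Seminorm.comp_apply, Seminorm.comp_apply, map_add, map_smul]
  exact h1

end BlowUp

/-! ### The blow-up is linear -/

section BlowUp2

variable {V : Type*} [NormedAddCommGroup V] [InnerProductSpace ℝ V]

/-- The plane orthogonal to `v₀ ≠ 0` in a three-dimensional space, parametrized isometrically by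
the complex numbers. -/
lemma exists_frame (hV : Module.finrank ℝ V = 3) {v₀ : V} (hv₀ : v₀ ≠ 0) :
    ∃ e : ℂ →ₗᵢ[ℝ] V, (∀ z, ⟪v₀, e z⟫ = 0) ∧ ∀ x, ⟪v₀, x⟫ = 0 → ∃ z, e z = x := by
  have : FiniteDimensional ℝ V := Module.finite_of_finrank_pos (by omega)
  have : Fact (Module.finrank ℝ V = 2 + 1) := ⟨hV⟩
  have h2 : Module.finrank ℝ (ℝ ∙ v₀)ᗮ = 2 := Submodule.finrank_orthogonal_span_singleton hv₀
  let b := (stdOrthonormalBasis ℝ (ℝ ∙ v₀)ᗮ).reindex (finCongr h2)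
  let i : ℂ ≃ₗᵢ[ℝ] (ℝ ∙ v₀)ᗮ := Complex.orthonormalBasisOneI.equiv b (Equiv.refl _)
  refine ⟨(ℝ ∙ v₀)ᗮ.subtypeₗᵢ.comp i.toLinearIsometry, fun z => ?_, fun x hx => ?_⟩
  · exact Submodule.mem_orthogonal_singleton_iff_inner_right.1 (i z).2
  · refine ⟨i.symm ⟨x, Submodule.mem_orthogonal_singleton_iff_inner_right.2 hx⟩, ?_⟩
    simp

lemma pgram_nhds {a b : ℂ} (hab : cdet a b ≠ 0) : ∃ ρ > 0, ∀ y : ℂ, ‖y‖ < ρ → y ∈ pgram a b := by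
  have hc1 : Continuous fun y : ℂ => |cdet y b / cdet a b| := by simp only [cdet]; fun_prop
  have hc2 : Continuous fun y : ℂ => |cdet a y / cdet a b| := by simp only [cdet]; fun_prop
  have h1 : ∀ᶠ y in nhds (0 : ℂ), |cdet y b / cdet a b| < 1 :=
    hc1.continuousAt.eventually_lt continuousAt_const (by simp [cdet])
  have h2 : ∀ᶠ y in nhds (0 : ℂ), |cdet a y / cdet a b| < 1 :=
    hc2.continuousAt.eventually_lt continuousAt_const (by simp [cdet])
  obtain ⟨ρ, hρ, h⟩ := Metric.eventually_nhds_iff.1 (h1.and h2)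
  refine ⟨ρ, hρ, fun y hy => ?_⟩
  have := h (y := y) (by simpa using hy)
  exact ⟨_, abs_le.1 this.1.le, _, abs_le.1 this.2.le, cdet_dec hab y⟩

/-- Blow-up of the contact map at a normal `v₀` near which it is not constant: the rescaled limits
form an injective linear map of the plane `v₀⊥`, compatible with the support directions of the
section norm. The last clause records that a direction along which the contact point is stationary
lies in the kernel of this map. -/
lemma blowup {K L : Set V} {N : Seminorm ℝ V} {C : NNReal} (hC : ∀ x, N x ≤ C * ‖x‖)
    [FiniteDimensional ℝ V]
    (hpos : ∀ x, x ≠ 0 → 0 < N x)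
    (hS : CentredSections K L N) {p : V → V} (hp : ∀ v, IsContact L v (p v))
    (hpc : ∀ v, v ≠ 0 → ContinuousAt p v) {v₀ : V} (hv₀ : ‖v₀‖ = 1)
    (e : ℂ →ₗᵢ[ℝ] V) (he : ∀ z, ⟪v₀, e z⟫ = 0) (he' : ∀ x, ⟪v₀, x⟫ = 0 → ∃ z, e z = x)
    (hnv : ∀ η > 0, ∃ y : ℂ, ‖y‖ < η ∧ p (v₀ + e y) ≠ p v₀) :
    ∃ A : ℂ →ₗ[ℝ] ℂ, (∀ w, w ≠ 0 → A w ≠ 0) ∧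
      (∀ w, BJ (N.comp e.toLinearMap) (Complex.I * w) (A w)) ∧
      ∀ y₀ : ℂ, (∃ η > 0, ∀ r : ℝ, 0 ≤ r → r ≤ η → p (v₀ + r • e y₀) = p v₀) → A y₀ = 0 := by
  have hNc : Continuous N := (seminorm_lip hC).continuous
  set n : Seminorm ℝ ℂ := N.comp e.toLinearMap with hn
  have hnC : ∀ z, n z ≤ C * ‖z‖ := fun z => by
    have := hC (e z); rwa [e.norm_map] at this
  have hnpos : ∀ z, z ≠ 0 → 0 < n z := fun z hz =>
    hpos (e z) (by rw [Ne, map_eq_zero_iff e e.injective]; exact hz)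
  obtain ⟨a, b, d₁, d₂, d₃, hG⟩ := exists_goodFrame hnC hnpos
  set Q := pgram a b with hQ
  have hQc : IsCompact Q := isCompact_pgram a b
  have hQ0 : (0 : ℂ) ∈ Q := zero_mem_pgram a b
  have hv₀2 : ⟪v₀, v₀⟫ = 1 := by rw [real_inner_self_eq_norm_sq, hv₀]; norm_num
  have hv00 : v₀ ≠ 0 := by rintro rfl; simp at hv₀
  have hne : ∀ z, v₀ + e z ≠ 0 := by
    intro z h
    have : ⟪v₀, v₀ + e z⟫ = 1 := by rw [inner_add_right, he, hv₀2]; ring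
    rw [h, inner_zero_right] at this; norm_num at this
  set ε : ℕ → ℝ := fun k => 1 / ((k : ℝ) + 1) with hε
  have hεp : ∀ k, 0 < ε k := fun k => by simp only [hε]; positivity
  have hε0 : Filter.Tendsto ε Filter.atTop (nhds 0) := tendsto_one_div_add_atTop_nhds_zero_nat
  set P : ℕ → ℂ → V := fun k y => p (v₀ + ε k • e y) with hP
  have hPc : ∀ k, Continuous (P k) := by
    intro k
    rw [continuous_iff_continuousAt]
    intro y
    refine ContinuousAt.comp (f := fun y : ℂ => v₀ + ε k • e y) ?_ ?_
    · rw [← map_smul]; exact hpc _ (hne _)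
    · exact (continuous_const.add (e.continuous.const_smul _)).continuousAt
  have hmax : ∀ k, ∃ y ∈ Q, ∀ y' ∈ Q, ‖P k y' - p v₀‖ ≤ ‖P k y - p v₀‖ := by
    intro k
    obtain ⟨y, hy, h⟩ := hQc.exists_isMaxOn ⟨0, hQ0⟩ (f := fun y => ‖P k y - p v₀‖)
      (((hPc k).sub continuous_const).norm).continuousOn
    exact ⟨y, hy, fun y' hy' => h hy'⟩
  choose ym hymQ hym using hmax
  set σ : ℕ → ℝ := fun k => ‖P k (ym k) - p v₀‖ with hσ
  obtain ⟨ρ, hρ, hball⟩ := pgram_nhds hG.hab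
  have hσp : ∀ k, 0 < σ k := by
    intro k
    obtain ⟨y, hy, hpy⟩ := hnv (ρ * ε k) (mul_pos hρ (hεp k))
    have hm : (ε k)⁻¹ • y ∈ Q := by
      refine hball _ ?_
      rw [norm_smul, norm_inv, Real.norm_eq_abs, abs_of_pos (hεp k), inv_mul_lt_iff₀ (hεp k)]
      linarith
    have h1 := hym k _ hm
    have h2 : P k ((ε k)⁻¹ • y) = p (v₀ + e y) := by
      simp only [hP]; rw [← map_smul, smul_smul, mul_inv_cancel₀ (hεp k).ne', one_smul]
    rw [h2] at h1
    exact lt_of_lt_of_le (norm_pos_iff.2 (sub_ne_zero.2 hpy)) h1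
  obtain ⟨R, hR⟩ := hQc.isBounded.exists_norm_le
  have hσ0 : Filter.Tendsto σ Filter.atTop (nhds 0) := by
    have h1 : Filter.Tendsto (fun k => v₀ + ε k • e (ym k)) Filter.atTop (nhds v₀) := by
      have : Filter.Tendsto (fun k => ε k • e (ym k)) Filter.atTop (nhds 0) := by
        refine squeeze_zero_norm (a := fun k => ε k * R) (fun k => ?_) ?_
        · rw [norm_smul, e.norm_map, Real.norm_eq_abs, abs_of_pos (hεp k)]
          exact mul_le_mul_of_nonneg_left (hR _ (hymQ k)) (hεp k).le
        · simpa using hε0.mul_const R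
      simpa using this.const_add v₀
    have h2 := ((hpc v₀ hv00).tendsto.comp h1).sub_const (p v₀)
    rw [sub_self] at h2
    have := h2.norm
    rw [norm_zero] at this
    exact this
  let U : Ultrafilter ℕ := Filter.hyperfilter ℕ
  have hU : (U : Filter ℕ) ≤ Filter.atTop := by
    rw [← Nat.cofinite_eq_atTop]; exact Filter.hyperfilter_le_cofinite
  -- ultralimits of the rescaled contact points
  have hlimex : ∀ z : ℕ → ℂ, (∀ k, z k ∈ Q) →
      ∃ f : ℂ, Filter.Tendsto (fun k => (σ k)⁻¹ • (P k (z k) - p v₀)) U (nhds (e f)) := by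
    intro z hz
    obtain ⟨x, -, hx⟩ := (isCompact_closedBall (0 : V) 1).ultrafilter_le_nhds'
      (U.map fun k => (σ k)⁻¹ • (P k (z k) - p v₀)) (by
        rw [Ultrafilter.mem_map]
        refine Filter.univ_mem' fun k => ?_
        simp only [mem_preimage, mem_closedBall_zero_iff]
        rw [norm_smul, norm_inv, Real.norm_eq_abs, abs_of_pos (hσp k), inv_mul_le_iff₀ (hσp k),
          mul_one]
        exact hym k _ (hz k))
    have hx' : Filter.Tendsto (fun k => (σ k)⁻¹ • (P k (z k) - p v₀)) U (nhds x) := hx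
    have hperp : ⟪v₀, x⟫ = 0 := by
      have hl : Filter.Tendsto (fun k => ⟪v₀, (σ k)⁻¹ • (P k (z k) - p v₀)⟫) U (nhds ⟪v₀, x⟫) :=
        tendsto_const_nhds.inner hx'
      refine tendsto_nhds_unique hl ?_
      refine squeeze_zero_norm (a := fun k => ε k * R) (fun k => ?_) ?_
      · set D := P k (z k) - p v₀ with hD
        have hDn : ‖D‖ ≤ σ k := hym k _ (hz k)
        have a1 : ⟪v₀, D⟫ ≤ 0 := by
          have := (hp v₀).2 _ (hp (v₀ + ε k • e (z k))).1
          rw [hD, inner_sub_right]; simp only [hP]; linarith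
        have a2 : 0 ≤ ⟪v₀ + ε k • e (z k), D⟫ := by
          have := (hp (v₀ + ε k • e (z k))).2 _ (hp v₀).1
          rw [hD, inner_sub_right]; simp only [hP]; linarith
        rw [inner_add_left, inner_smul_left, conj_trivial] at a2
        have a3 : ⟪e (z k), D⟫ ≤ R * σ k := by
          refine (real_inner_le_norm _ _).trans ?_
          rw [e.norm_map]
          exact mul_le_mul (hR _ (hz k)) hDn (norm_nonneg _) ((norm_nonneg _).trans (hR _ (hz k)))
        rw [inner_smul_right, norm_mul, norm_inv, Real.norm_eq_abs, Real.norm_eq_abs,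
          abs_of_pos (hσp k), abs_of_nonpos a1, inv_mul_le_iff₀ (hσp k)]
        nlinarith [hεp k]
      · have := (hε0.mono_left hU).mul_const R
        rwa [zero_mul] at this
    obtain ⟨f, hf⟩ := he' x hperp
    exact ⟨f, by rw [hf]; exact hx'⟩
  have hFex : ∀ y : ℂ, ∃ f : ℂ, y ∈ Q →
      Filter.Tendsto (fun k => (σ k)⁻¹ • (P k y - p v₀)) U (nhds (e f)) := by
    intro y
    by_cases hy : y ∈ Q
    · obtain ⟨f, hf⟩ := hlimex (fun _ => y) (fun _ => hy)
      exact ⟨f, fun _ => hf⟩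
    · exact ⟨0, fun h => absurd h hy⟩
  choose F hF using hFex
  have hconst : ∀ y ∈ Q, (∀ᶠ k in (U : Filter ℕ), P k y = p v₀) → F y = 0 := by
    intro y hy hk
    have h1 : Filter.Tendsto (fun k => (σ k)⁻¹ • (P k y - p v₀)) U (nhds (e 0)) := by
      rw [map_zero]
      refine tendsto_const_nhds.congr' ?_
      filter_upwards [hk] with k hk
      rw [hk, sub_self, smul_zero]
    exact e.injective (tendsto_nhds_unique (hF y hy) h1)
  have hF0 : F 0 = 0 := hconst 0 hQ0 (Filter.Eventually.of_forall fun k => by simp [hP])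
  have hFb : ∀ y ∈ Q, ‖F y‖ ≤ 1 := by
    intro y hy
    rw [← e.norm_map]
    refine le_of_tendsto (hF y hy).norm (Filter.Eventually.of_forall fun k => ?_)
    rw [norm_smul, norm_inv, Real.norm_eq_abs, abs_of_pos (hσp k), inv_mul_le_iff₀ (hσp k),
      mul_one]
    exact hym k _ hy
  obtain ⟨ys, hys, hyslim⟩ := hQc.ultrafilter_le_nhds' (U.map ym) (by
    rw [Ultrafilter.mem_map]; exact Filter.univ_mem' hymQ)
  have hyslim' : Filter.Tendsto ym U (nhds ys) := hyslim
  obtain ⟨fs, hfs⟩ := hlimex ym hymQ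
  have hfs0 : fs ≠ 0 := by
    have h1 : Filter.Tendsto (fun k => ‖(σ k)⁻¹ • (P k (ym k) - p v₀)‖) U (nhds 1) := by
      refine tendsto_const_nhds.congr fun k => ?_
      rw [norm_smul, norm_inv, Real.norm_eq_abs, abs_of_pos (hσp k)]
      exact (inv_mul_cancel₀ (hσp k).ne').symm
    have h2 := tendsto_nhds_unique hfs.norm h1
    rintro rfl
    simp at h2
  have hdiff : ∀ (x x' x₀ : V) (r : ℝ), r • (x' - x₀) - r • (x - x₀) = r • (x' - x) := by
    intro x x' x₀ r; module
  obtain ⟨A, hA1, hA2, hA3⟩ := rigidity (seminorm_lip hnC).continuous hG hF0 hFb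
    (fun y hy y' hy' hyy => by
      refine limit_relation hNc hpos hS hp hv₀ (hpc v₀ hv00) e he (l := (U : Filter ℕ)) (ε := ε)
        (σ := σ) (y := fun _ => y) (y' := fun _ => y') hεp (hε0.mono_left hU) hσp
        (hσ0.mono_left hU) tendsto_const_nhds tendsto_const_nhds hyy ?_
      have := (hF y' hy').sub (hF y hy)
      simp only [hdiff] at this
      rw [map_sub]
      exact this) hys hfs0
    (fun y hy hyy => by
      refine limit_relation hNc hpos hS hp hv₀ (hpc v₀ hv00) e he (l := (U : Filter ℕ)) (ε := ε)
        (σ := σ) (y := fun _ => y) (y' := ym) hεp (hε0.mono_left hU) hσp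
        (hσ0.mono_left hU) tendsto_const_nhds hyslim' hyy ?_
      have := hfs.sub (hF y hy)
      simp only [hdiff] at this
      rw [map_sub]
      exact this)
  refine ⟨A, hA1, hA2, ?_⟩
  rintro y₀ ⟨η, hη, hst⟩
  obtain ⟨c, hc, hcm⟩ := smul_mem_pgram hG.hab y₀
  have hm := hcm c hc.le le_rfl
  have h0 : F (c • y₀) = 0 := by
    refine hconst _ hm ?_
    have hlt : ∀ᶠ k in (U : Filter ℕ), ε k * c < η := by
      have : Filter.Tendsto (fun k => ε k * c) U (nhds 0) := by
        simpa using (hε0.mono_left hU).mul_const c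
      exact this.eventually_lt tendsto_const_nhds hη
    filter_upwards [hlt] with k hk
    simp only [hP]
    rw [map_smul, smul_smul]
    exact hst _ (mul_pos (hεp k) hc).le hk.le
  rw [hA3 _ hm, map_smul] at h0
  exact (smul_eq_zero.1 h0).resolve_left hc.ne'

end BlowUp2

/-! ### The parallelogram law in dimension three -/

section Vertex

variable {V : Type*} [NormedAddCommGroup V] [InnerProductSpace ℝ V]

lemma IsContact.cone {L : Set V} {v v' q : V} (h : IsContact L v q) (h' : IsContact L v' q)
    {a b : ℝ} (ha : 0 ≤ a) (hb : 0 ≤ b) : IsContact L (a • v + b • v') q := by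
  refine ⟨h.1, fun x hx => ?_⟩
  simp only [inner_add_left, inner_smul_left, conj_trivial]
  exact add_le_add (mul_le_mul_of_nonneg_left (h.2 x hx) ha)
    (mul_le_mul_of_nonneg_left (h'.2 x hx) hb)

lemma IsContact.smul {L : Set V} {v q : V} (h : IsContact L v q) {a : ℝ} (ha : 0 ≤ a) :
    IsContact L (a • v) q := by
  simpa using h.cone h ha le_rfl

/-- The normal cone of a set with interior points contains no full line of the form `v + ℝ t`. -/
lemma exists_not_contact {L : Set V} (hLint : (interior L).Nonempty) (v q : V) {t : V}
    (ht : t ≠ 0) : ∃ τ : ℝ, ¬ IsContact L (v + τ • t) q := by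
  by_contra hcon
  push Not at hcon
  have hz : ∀ x ∈ L, ⟪t, x - q⟫ = 0 := by
    intro x hx
    by_contra hne
    have := (hcon ((1 - ⟪v, x - q⟫) / ⟪t, x - q⟫)).2 x hx
    have h2 : ⟪v + ((1 - ⟪v, x - q⟫) / ⟪t, x - q⟫) • t, x - q⟫ = 1 := by
      rw [inner_add_left, inner_smul_left, conj_trivial, div_mul_cancel₀ _ hne]; ring
    rw [inner_sub_right] at h2
    linarith
  obtain ⟨o, ho⟩ := hLint
  have hc : Filter.Tendsto (fun δ : ℝ => o + δ • t) (nhdsWithin 0 (Ioi 0)) (nhds o) := by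
    have : Continuous fun δ : ℝ => o + δ • t := by fun_prop
    have := this.tendsto 0
    rw [zero_smul, add_zero] at this
    exact this.mono_left nhdsWithin_le_nhds
  have hev := hc.eventually (isOpen_interior.mem_nhds ho)
  obtain ⟨δ, hδ, hδ0⟩ := (hev.and self_mem_nhdsWithin).exists
  have h1 := hz o (interior_subset ho)
  have h2 := hz _ (interior_subset hδ)
  rw [show o + δ • t - q = (o - q) + δ • t by abel, inner_add_right, h1, inner_smul_right,
    zero_add] at h2
  rcases mul_eq_zero.1 h2 with h | h
  · exact absurd h (ne_of_gt hδ0)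
  · exact ht (inner_self_eq_zero.1 h)

/-- Moving out of the normal cone of `q` along a segment, there is a last normal. -/
lemma last_normal {L : Set V} {v t q : V} (h : IsContact L v q) (h' : ¬ IsContact L (v + t) q) :
    ∃ r : ℝ, 0 ≤ r ∧ r < 1 ∧ IsContact L (v + r • t) q ∧
      ∀ s, r < s → s ≤ 1 → ¬ IsContact L (v + s • t) q := by
  have hcl : IsClosed {r : ℝ | IsContact L (v + r • t) q} := by
    have : {r : ℝ | IsContact L (v + r • t) q} =
        ⋂ x ∈ L, {r : ℝ | ⟪v + r • t, x⟫ ≤ ⟪v + r • t, q⟫} := by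
      ext r; simp [IsContact, h.1]
    rw [this]
    exact isClosed_biInter fun x _ => isClosed_le (by fun_prop) (by fun_prop)
  have hcpt : IsCompact (Icc (0 : ℝ) 1 ∩ {r : ℝ | IsContact L (v + r • t) q}) :=
    isCompact_Icc.inter_right hcl
  obtain ⟨r, ⟨hr1, hr2⟩, hr⟩ := hcpt.exists_isGreatest ⟨0, by norm_num, by simpa using h⟩
  refine ⟨r, hr1.1, lt_of_le_of_ne hr1.2 ?_, hr2, fun s hs hs1 hc => ?_⟩
  · rintro rfl; simp only [Set.mem_ofPred_eq, one_smul] at hr2; exact h' hr2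
  · exact absurd (hr ⟨⟨hr1.1.trans hs.le, hs1⟩, hc⟩) (not_le.2 hs)

/-- The norm of a three-dimensional body with centred sections satisfies the parallelogram law on
every plane. A normal `v₀` near which the contact point is constant is ruled out: at a boundary
point of its normal cone the blow-up would be injective and yet stationary towards `v₀`. -/
lemma parallelogram_perp (hV : Module.finrank ℝ V = 3) {K L : Set V} {N : Seminorm ℝ V}
    {C : NNReal} (hC : ∀ x, N x ≤ C * ‖x‖) (hpos : ∀ x, x ≠ 0 → 0 < N x)
    (hL : IsCompact L) (hLint : (interior L).Nonempty)
    (hS : CentredSections K L N) {v₀ : V} (hv₀ : ‖v₀‖ = 1) {x y : V} (hx : ⟪v₀, x⟫ = 0)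
    (hy : ⟪v₀, y⟫ = 0) : N (x + y) ^ 2 + N (x - y) ^ 2 = 2 * (N x ^ 2 + N y ^ 2) := by
  have : FiniteDimensional ℝ V := Module.finite_of_finrank_pos (by omega)
  choose p hp using exists_isContact hL (hLint.mono interior_subset)
  have huniq : ∀ v q, v ≠ 0 → IsContact L v q → q = p v := fun v q hv hq =>
    hS.top_unique hpos hv hq (hp v)
  have hpc : ∀ v, v ≠ 0 → ContinuousAt p v := fun v hv =>
    continuousAt_top hL hp fun q hq => huniq v q hv hq
  have hv00 : v₀ ≠ 0 := by rintro rfl; simp at hv₀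
  have hv₀2 : ⟪v₀, v₀⟫ = 1 := by rw [real_inner_self_eq_norm_sq, hv₀]; norm_num
  obtain ⟨e, he, he'⟩ := exists_frame hV hv00
  have hnv : ∀ η > 0, ∃ y : ℂ, ‖y‖ < η ∧ p (v₀ + e y) ≠ p v₀ := by
    by_contra hcon
    push Not at hcon
    obtain ⟨η, hη, hvert⟩ := hcon
    set q := p v₀ with hq
    have e1 : e 1 ≠ 0 := by rw [Ne, map_eq_zero_iff e e.injective]; exact one_ne_zero
    obtain ⟨τ, hτ⟩ := exists_not_contact hLint v₀ q e1
    rw [← map_smul] at hτ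
    set y₁ : ℂ := τ • (1 : ℂ) with hy₁
    obtain ⟨r, hr0, hr1, hrc, hrn⟩ := last_normal (hp v₀) hτ
    -- the vertex property makes `r` positive
    have hrpos : 0 < r := by
      by_contra hr
      have hr' : r ≤ 0 := not_lt.1 hr
      have hs : ∃ s : ℝ, 0 < s ∧ s ≤ 1 ∧ s * ‖y₁‖ < η := by
        refine ⟨min 1 (η / (2 * (‖y₁‖ + 1))), by positivity, min_le_left _ _, ?_⟩
        calc _ ≤ η / (2 * (‖y₁‖ + 1)) * ‖y₁‖ := by gcongr; exact min_le_right _ _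
          _ < η := by rw [div_mul_eq_mul_div, div_lt_iff₀ (by positivity)]; nlinarith [norm_nonneg y₁]
      obtain ⟨s, hs0, hs1, hs2⟩ := hs
      refine hrn s (by linarith) hs1 ?_
      have := hvert (s • y₁) (by rwa [norm_smul, Real.norm_eq_abs, abs_of_pos hs0])
      have h := hp (v₀ + e (s • y₁))
      rw [this, map_smul] at h
      exact h
    set v₁ := v₀ + r • e y₁ with hv₁
    have hv₁0 : ⟪v₀, v₁⟫ = 1 := by rw [hv₁, inner_add_right, inner_smul_right, he, hv₀2]; ring
    have hv₁ne : v₁ ≠ 0 := by intro h; rw [h, inner_zero_right] at hv₁0; norm_num at hv₁0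
    set m := ‖v₁‖ with hm
    have hmp : 0 < m := norm_pos_iff.2 hv₁ne
    set w := m⁻¹ • v₁ with hw
    have hwn : ‖w‖ = 1 := by
      rw [hw, norm_smul, norm_inv, Real.norm_eq_abs, abs_of_pos hmp, ← hm, inv_mul_cancel₀ hmp.ne']
    have hw2 : ⟪w, w⟫ = 1 := by rw [real_inner_self_eq_norm_sq, hwn]; norm_num
    have hwne : w ≠ 0 := by intro h; rw [h, norm_zero] at hwn; norm_num at hwn
    have hwc : IsContact L w q := hrc.smul (inv_pos.2 hmp).le
    have hpw : p w = q := (huniq w q hwne hwc).symm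
    have hv₁w : v₁ = m • w := by rw [hw, smul_smul, mul_inv_cancel₀ hmp.ne', one_smul]
    obtain ⟨f, hf, hf'⟩ := exists_frame hV hwne
    have hwf : ∀ z, w + f z ≠ 0 := by
      intro z h
      have : ⟪w, w + f z⟫ = 1 := by rw [inner_add_right, hf, hw2]; ring
      rw [h, inner_zero_right] at this; norm_num at this
    have split : ∀ x : V, ∃ z : ℂ, x = ⟪w, x⟫ • w + f z := by
      intro x
      obtain ⟨z, hz⟩ := hf' (x - ⟪w, x⟫ • w) (by
        rw [inner_sub_right, inner_smul_right, hw2]; ring)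
      exact ⟨z, by rw [hz]; abel⟩
    obtain ⟨A, hA1, -, hA3⟩ := blowup hC hpos hS hp hpc hwn f hf hf' (by
      by_contra hcon
      push Not at hcon
      obtain ⟨η', hη', hvert'⟩ := hcon
      obtain ⟨z₁, hz₁⟩ := split (e y₁)
      set g := ⟪w, e y₁⟫ with hg
      have hlim : Filter.Tendsto (fun s : ℝ => m + s * g) (nhdsWithin 0 (Ioi 0)) (nhds m) := by
        have h : Continuous fun s : ℝ => m + s * g := by fun_prop
        have := h.tendsto 0
        simp only [zero_mul, add_zero] at this
        exact this.mono_left nhdsWithin_le_nhds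
      have hlim2 : Filter.Tendsto (fun s : ℝ => ‖(s / (m + s * g)) • z₁‖) (nhdsWithin 0 (Ioi 0))
          (nhds 0) := by
        have hid : Filter.Tendsto (fun s : ℝ => s) (nhdsWithin 0 (Ioi 0)) (nhds 0) :=
          nhdsWithin_le_nhds
        have := ((hid.div hlim hmp.ne').smul_const z₁).norm
        simpa using this
      obtain ⟨s, ⟨⟨hs1, hs2⟩, hs3⟩⟩ := (((hlim.eventually (lt_mem_nhds hmp)).and
        (hlim2.eventually (gt_mem_nhds hη'))).and
        (Ioo_mem_nhdsGT (show (0 : ℝ) < 1 - r by linarith))).exists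
      refine hrn (r + s) (by linarith [hs3.1]) (by linarith [hs3.2]) ?_
      have hpq := hvert' _ hs2
      have hc := hp (w + f ((s / (m + s * g)) • z₁))
      rw [hpq, hpw] at hc
      have hc2 := hc.smul hs1.le
      convert hc2 using 1
      calc v₀ + (r + s) • e y₁ = v₁ + s • e y₁ := by rw [hv₁]; module
        _ = m • w + s • (g • w + f z₁) := by rw [← hv₁w, ← hz₁]
        _ = (m + s * g) • w + s • f z₁ := by module
        _ = _ := by rw [map_smul, smul_add (m + s * g) w, smul_smul (m + s * g) _ (f z₁),
              mul_div_cancel₀ _ hs1.ne'])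
    obtain ⟨z₀, hz₀⟩ := split v₀
    set κ := ⟪w, v₀⟫ with hκ
    have hκp : 0 < κ := by
      rw [hκ, real_inner_comm, hw, inner_smul_right, hv₁0, mul_one]; exact inv_pos.2 hmp
    have hz0 : z₀ ≠ 0 := by
      rintro rfl
      rw [map_zero, add_zero] at hz₀
      -- then `v₀` is parallel to `v₁ = v₀ + r e(y₁)`
      have h1 : ⟪e y₁, v₀⟫ = 0 := by rw [real_inner_comm]; exact he _
      have h2 : ⟪e y₁, w⟫ = m⁻¹ * (r * ‖y₁‖ ^ 2) := by
        rw [hw, inner_smul_right, hv₁, inner_add_right, h1, inner_smul_right,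
          real_inner_self_eq_norm_sq, e.norm_map]; ring
      have hy₁0 : y₁ ≠ 0 := by
        intro h0; apply hτ; rw [h0, map_zero, add_zero]; exact hp v₀
      rw [hz₀, inner_smul_right, h2] at h1
      have : 0 < κ * (m⁻¹ * (r * ‖y₁‖ ^ 2)) := by
        have := norm_pos_iff.2 hy₁0
        positivity
      exact this.ne' h1
    refine hA1 z₀ hz0 (hA3 z₀ ⟨κ⁻¹, inv_pos.2 hκp, fun t ht0 ht1 => ?_⟩)
    rw [hpw]
    refine (huniq _ q (by rw [← map_smul]; exact hwf _) ?_).symm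
    have h1 : 0 ≤ 1 - t * κ := by
      have := mul_le_mul_of_nonneg_right ht1 hκp.le
      rw [inv_mul_cancel₀ hκp.ne'] at this; linarith
    have hc := hwc.cone (hp v₀) h1 ht0
    convert hc using 1
    calc w + t • f z₀ = (1 - t * κ) • w + t • (κ • w + f z₀) := by module
      _ = _ := by rw [← hz₀]
  obtain ⟨A, hA1, hA2, -⟩ := blowup hC hpos hS hp hpc hv₀ e he he' hnv
  let B : ℂ →ₗ[ℝ] ℂ := A ∘ₗ (LinearMap.mulLeft ℝ (-Complex.I))
  obtain ⟨z, rfl⟩ := he' x hx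
  obtain ⟨z', rfl⟩ := he' y hy
  have := parallelogram_of_linear_BJ (N := N.comp e.toLinearMap) (C := C)
    (fun z => by have := hC (e z); rwa [e.norm_map] at this)
    (fun z hz => hpos (e z) (by rw [Ne, map_eq_zero_iff e e.injective]; exact hz)) B
    (fun u hu => hA1 _ (mul_ne_zero (neg_ne_zero.2 Complex.I_ne_zero) hu))
    (fun u => by
      have := hA2 (-Complex.I * u)
      rwa [show Complex.I * (-Complex.I * u) = u by
        rw [← mul_assoc, mul_neg, Complex.I_mul_I]; simp] at this) z z'
  rw [← map_add, ← map_sub]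
  exact this

end Vertex

/-! ### Equal chords have parallel support lines at their ends -/

section GaugeAt

variable {V : Type*} [NormedAddCommGroup V] [InnerProductSpace ℝ V]

/-- The gauge of `K` with respect to the base point `p`; if `u ≠ 0` and `p` is interior to the
convex body `K`, the ray from `p` in direction `u` leaves `K` after the time `(gaugeAt K p u)⁻¹`. -/
def gaugeAt (K : Set V) (p : V) : V → ℝ := gauge {w | p + w ∈ K}

/-- All chords of `K` of direction `u` supporting `L` have the same length `ℓ u` (measured in
multiples of `u`); the chord through `p` is split by `p` into its two summands. -/
def EqualChords (K L : Set V) (ℓ : V → ℝ) : Prop :=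
  ∀ p ∈ L, ∀ u, u ≠ 0 → (∀ s : ℝ, p + s • u ∉ interior L) →
    (gaugeAt K p u)⁻¹ + (gaugeAt K p (-u))⁻¹ = ℓ u

variable {K L : Set V} {p q : V}

lemma gaugeAt_aux (hp : p ∈ interior K) : {w | p + w ∈ K} ∈ nhds (0 : V) := by
  have : Filter.Tendsto (fun w => p + w) (nhds 0) (nhds p) := by
    have h : Continuous fun w : V => p + w := by fun_prop
    simpa using h.tendsto 0
  exact this (mem_interior_iff_mem_nhds.1 hp)

lemma gaugeAt_conv (hK : Convex ℝ K) (p : V) : Convex ℝ {w | p + w ∈ K} :=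
  hK.translate_preimage_right p

lemma continuous_gaugeAt (hK : Convex ℝ K) (hp : p ∈ interior K) : Continuous (gaugeAt K p) :=
  continuous_gauge (gaugeAt_conv hK p) (gaugeAt_aux hp)

lemma gaugeAt_le_one (hKc : IsClosed K) (hK : Convex ℝ K) (hp : p ∈ interior K) {w : V} :
    gaugeAt K p w ≤ 1 ↔ p + w ∈ K := by
  have hcl : IsClosed {w | p + w ∈ K} := hKc.preimage (by fun_prop)
  rw [gaugeAt, gauge_le_one_iff_mem_closure (gaugeAt_conv hK p) (gaugeAt_aux hp), hcl.closure_eq]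
  rfl

lemma gaugeAt_lt_one (hK : Convex ℝ K) (hp : p ∈ interior K) {w : V} :
    gaugeAt K p w < 1 ↔ p + w ∈ interior K := by
  rw [gaugeAt, gauge_lt_one_iff_mem_interior (gaugeAt_conv hK p) (gaugeAt_aux hp)]
  have := (Homeomorph.addLeft p).preimage_interior K
  exact (Set.ext_iff.1 this w).symm

lemma gaugeAt_smul {c : ℝ} (hc : 0 ≤ c) (w : V) : gaugeAt K p (c • w) = c * gaugeAt K p w :=
  gauge_smul_of_nonneg hc w

lemma gaugeAt_pos (hKb : Bornology.IsBounded K) (hp : p ∈ interior K) {w : V} (hw : w ≠ 0) :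
    0 < gaugeAt K p w := by
  refine (gauge_pos (absorbent_nhds_zero (gaugeAt_aux hp)) ?_).2 hw
  rw [NormedSpace.isVonNBounded_iff]
  have : {w | p + w ∈ K} ⊆ (fun x => -p + x) '' K := fun w hw => ⟨p + w, hw, by simp⟩
  exact (Bornology.IsBounded.subset (hKb.vadd (-p)) this)

lemma exit_mem (hKc : IsCompact K) (hK : Convex ℝ K) (hp : p ∈ interior K) {u : V} (hu : u ≠ 0) :
    p + (gaugeAt K p u)⁻¹ • u ∈ K ∧ p + (gaugeAt K p u)⁻¹ • u ∉ interior K := by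
  have h0 := gaugeAt_pos hKc.isBounded hp hu
  have h1 : gaugeAt K p ((gaugeAt K p u)⁻¹ • u) = 1 := by
    rw [gaugeAt_smul (inv_pos.2 h0).le, inv_mul_cancel₀ h0.ne']
  exact ⟨(gaugeAt_le_one hKc.isClosed hK hp).1 h1.le, fun h =>
    absurd ((gaugeAt_lt_one hK hp).2 h) (by rw [h1]; exact lt_irrefl 1)⟩

/-- Lower semicontinuity of the exit time in the base point. -/
lemma exit_lower (hKc : IsCompact K) (hK : Convex ℝ K) (hp : p ∈ interior K) {u : V} (hu : u ≠ 0)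
    {ε : ℝ} (hε : 0 < ε) : ∀ᶠ q in nhds p, (gaugeAt K p u)⁻¹ - ε ≤ (gaugeAt K q u)⁻¹ := by
  have h0 := gaugeAt_pos hKc.isBounded hp hu
  set α := (gaugeAt K p u)⁻¹ with hα
  have hev : ∀ᶠ q in nhds p, q ∈ interior K := isOpen_interior.mem_nhds hp
  by_cases hs : α - ε ≤ 0
  · filter_upwards [hev] with q hq
    exact hs.trans (inv_pos.2 (gaugeAt_pos hKc.isBounded hq hu)).le
  push Not at hs
  have h1 : p + (α - ε) • u ∈ interior K := by
    rw [← gaugeAt_lt_one hK hp, gaugeAt_smul hs.le, ← lt_div_iff₀ h0, one_div, ← hα]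
    linarith
  have hc : Continuous fun q : V => q + (α - ε) • u := by fun_prop
  have h2 := hc.continuousAt.eventually (isOpen_interior.mem_nhds h1)
  filter_upwards [hev, h2] with q hq hq2
  have h3 := (gaugeAt_lt_one hK hq).2 hq2
  rw [gaugeAt_smul hs.le, ← lt_div_iff₀ (gaugeAt_pos hKc.isBounded hq hu), one_div] at h3
  exact h3.le

/-- A line through two boundary points `x, x + D` of a convex set misses its interior outside of
the segment between them. -/
lemma notMem_interior_of_chord (hK : Convex ℝ K) {x D : V} (hx : x ∈ K) (hx' : x ∉ interior K)
    (hy : x + D ∈ K) (hy' : x + D ∉ interior K) {τ : ℝ} (hτ : τ ≤ 0 ∨ 1 ≤ τ) :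
    x + τ • D ∉ interior K := by
  intro h
  rcases hτ with hτ | hτ
  · apply hx'
    have hpos : 0 < 1 - τ := by linarith
    have := hK.combo_interior_self_mem_interior h hy (a := (1 - τ)⁻¹) (b := -τ * (1 - τ)⁻¹)
      (by positivity) (by have : 0 ≤ -τ := by linarith
                          positivity) (by field_simp; ring)
    convert this using 1
    have e1 : (1 - τ)⁻¹ + -τ * (1 - τ)⁻¹ = 1 := by field_simp; ring
    calc x = ((1 - τ)⁻¹ + -τ * (1 - τ)⁻¹) • x := by rw [e1, one_smul]
      _ = _ := by module
  · apply hy'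
    have hpos : 0 < τ := by linarith
    have := hK.combo_interior_self_mem_interior h hx (a := τ⁻¹) (b := 1 - τ⁻¹)
      (by positivity) (by have := inv_le_one_of_one_le₀ hτ; linarith) (by ring)
    convert this using 1
    have e1 : τ⁻¹ * τ = 1 := inv_mul_cancel₀ hpos.ne'
    calc x + D = x + (τ⁻¹ * τ) • D := by rw [e1, one_smul]
      _ = _ := by module

/-- If contact points `q` of supporting lines of direction `u` approach `p`, asymptotically within
the support plane `v₁^⊥` and not along `u`, then in the limit the two end points of the chord
through `p` have parallel support lines in that plane. -/
lemma parallel_of_approach [FiniteDimensional ℝ V] (hKc : IsCompact K) (hK : Convex ℝ K)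
    (hLK : L ⊆ interior K) {ℓ : V → ℝ} (hH : EqualChords K L ℓ) {v₁ u t : V} (hu : u ≠ 0)
    (huv : ⟪v₁, u⟫ = 0) (hut : ⟪t, u⟫ = 0) (hpL : p ∈ L)
    (hps : ∀ s : ℝ, p + s • u ∉ interior L)
    (happ : ∀ δ > 0, ∃ q ∈ L, (∀ s : ℝ, q + s • u ∉ interior L) ∧ ‖q - p‖ < δ ∧ ⟪t, q - p⟫ ≠ 0 ∧
      |⟪v₁, q - p⟫| ≤ δ * |⟪t, q - p⟫|) :
    ∃ d, ‖d‖ = 1 ∧ ⟪v₁, d⟫ = 0 ∧ BJ (gaugeAt K p) u d ∧ BJ (gaugeAt K p) (-u) d := by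
  have hp := hLK hpL
  have hnu : -u ≠ 0 := neg_ne_zero.2 hu
  set α := (gaugeAt K p u)⁻¹ with hα
  set β := (gaugeAt K p (-u))⁻¹ with hβ
  have hu0 := gaugeAt_pos hKc.isBounded hp hu
  have hnu0 := gaugeAt_pos hKc.isBounded hp hnu
  have hα0 : 0 < α := inv_pos.2 hu0
  have hβ0 : 0 < β := inv_pos.2 hnu0
  choose q hqL hqs hqp hqt hqv using fun k : ℕ => happ (1 / ((k : ℝ) + 1)) (by positivity)
  have hδ0 : Filter.Tendsto (fun k : ℕ => 1 / ((k : ℝ) + 1)) Filter.atTop (nhds 0) :=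
    tendsto_one_div_add_atTop_nhds_zero_nat
  have hq0 : Filter.Tendsto (fun k => q k - p) Filter.atTop (nhds 0) :=
    squeeze_zero_norm (fun k => (hqp k).le) hδ0
  have hq : Filter.Tendsto q Filter.atTop (nhds p) := tendsto_sub_nhds_zero_iff.1 hq0
  set a : ℕ → ℝ := fun k => (gaugeAt K (q k) u)⁻¹ with ha
  set b : ℕ → ℝ := fun k => (gaugeAt K (q k) (-u))⁻¹ with hb
  have hsum : ∀ k, a k + b k = α + β := fun k => by
    rw [hH (q k) (hqL k) u hu (hqs k), hH p hpL u hu hps]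
  have halim : Filter.Tendsto (fun k => a k - α) Filter.atTop (nhds 0) := by
    rw [Metric.tendsto_nhds]
    intro ε hε
    filter_upwards [hq.eventually (exit_lower hKc hK hp hu (half_pos hε)),
      hq.eventually (exit_lower hKc hK hp hnu (half_pos hε))] with k h1 h2
    have := hsum k
    rw [Real.dist_eq, sub_zero, abs_lt]
    simp only [← hα, ← hβ] at h1 h2
    constructor <;> simp only [ha, hb] at this ⊢ <;> linarith
  set D : ℕ → V := fun k => (q k - p) + (a k - α) • u with hD
  have hD0 : Filter.Tendsto D Filter.atTop (nhds 0) := by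
    simpa using hq0.add (halim.smul_const u)
  have hDt : ∀ k, ⟪t, D k⟫ = ⟪t, q k - p⟫ := fun k => by
    rw [hD]; simp only [inner_add_right, inner_smul_right, hut]; ring
  have hDv : ∀ k, ⟪v₁, D k⟫ = ⟪v₁, q k - p⟫ := fun k => by
    rw [hD]; simp only [inner_add_right, inner_smul_right, huv]; ring
  have hDne : ∀ k, D k ≠ 0 := fun k h => hqt k (by rw [← hDt, h, inner_zero_right])
  have hDpos : ∀ k, 0 < ‖D k‖ := fun k => norm_pos_iff.2 (hDne k)
  -- `D k` joins both pairs of corresponding end points of the chords through `p` and `q k`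
  have out1 : ∀ k (τ : ℝ), τ ≤ 0 ∨ 1 ≤ τ → 1 ≤ gaugeAt K p (α • u + τ • D k) := by
    intro k τ hτ
    have h1 := exit_mem hKc hK hp hu
    have h2 := exit_mem hKc hK (hLK (hqL k)) hu
    have e1 : q k + (gaugeAt K (q k) u)⁻¹ • u = p + α • u + D k := by
      simp only [hD, ha]; module
    rw [e1] at h2
    have := notMem_interior_of_chord hK h1.1 h1.2 h2.1 h2.2 hτ
    rw [add_assoc, ← gaugeAt_lt_one hK hp] at this
    exact not_lt.1 this
  have out2 : ∀ k (τ : ℝ), τ ≤ 0 ∨ 1 ≤ τ → 1 ≤ gaugeAt K p (β • -u + τ • D k) := by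
    intro k τ hτ
    have h1 := exit_mem hKc hK hp hnu
    have h2 := exit_mem hKc hK (hLK (hqL k)) hnu
    have e1 : q k + (gaugeAt K (q k) (-u))⁻¹ • -u = p + β • -u + D k := by
      have : (gaugeAt K (q k) (-u))⁻¹ = α + β - a k := by rw [← hsum k]; simp only [hb]; ring
      rw [this]
      simp only [hD]; module
    rw [e1] at h2
    have := notMem_interior_of_chord hK h1.1 h1.2 h2.1 h2.2 hτ
    rw [add_assoc, ← gaugeAt_lt_one hK hp] at this
    exact not_lt.1 this
  have : ProperSpace V := FiniteDimensional.proper_real V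
  obtain ⟨d, hd, φ, hφ, hlim⟩ := (isCompact_sphere (0 : V) 1).tendsto_subseq
    (x := fun k => ‖D k‖⁻¹ • D k) (fun k => by
      rw [mem_sphere_zero_iff_norm, norm_smul, norm_inv, norm_norm, inv_mul_cancel₀ (hDpos k).ne'])
  have hφt := hφ.tendsto_atTop
  have hg := continuous_gaugeAt hK hp
  have key : ∀ (x : V), (∀ k (τ : ℝ), τ ≤ 0 ∨ 1 ≤ τ → 1 ≤ gaugeAt K p (x + τ • D k)) →
      ∀ s : ℝ, s ≠ 0 → 1 ≤ gaugeAt K p (x + s • d) := by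
    intro x hx s hs
    have hl : Filter.Tendsto (fun k => gaugeAt K p (x + s • (‖D (φ k)‖⁻¹ • D (φ k)))) Filter.atTop
        (nhds (gaugeAt K p (x + s • d))) :=
      (hg.tendsto _).comp (tendsto_const_nhds.add (hlim.const_smul s))
    refine ge_of_tendsto hl ?_
    have hsm : ∀ᶠ k in Filter.atTop, ‖D (φ k)‖ < |s| := by
      have := (hD0.comp hφt).norm
      simp only [norm_zero] at this
      exact this.eventually (gt_mem_nhds (abs_pos.2 hs))
    filter_upwards [hsm] with k hk
    rw [smul_smul]
    apply hx
    rcases lt_or_gt_of_ne hs with h | h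
    · left; exact (mul_neg_of_neg_of_pos h (inv_pos.2 (hDpos _))).le
    · right
      rw [abs_of_pos h] at hk
      rw [← div_eq_mul_inv, le_div_iff₀ (hDpos _)]; linarith
  refine ⟨d, mem_sphere_zero_iff_norm.1 hd, ?_, ?_, ?_⟩
  · have hl : Filter.Tendsto (fun k => ⟪v₁, ‖D (φ k)‖⁻¹ • D (φ k)⟫) Filter.atTop (nhds ⟪v₁, d⟫) :=
      tendsto_const_nhds.inner hlim
    refine tendsto_nhds_unique hl (squeeze_zero_norm (a := fun k => 1 / ((φ k : ℝ) + 1) * ‖t‖)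
      (fun k => ?_) ?_)
    · rw [inner_smul_right, norm_mul, norm_inv, norm_norm, inv_mul_le_iff₀ (hDpos _), hDv,
        Real.norm_eq_abs]
      refine (hqv (φ k)).trans ?_
      have := abs_real_inner_le_norm t (D (φ k))
      rw [hDt] at this
      calc _ ≤ 1 / ((φ k : ℝ) + 1) * (‖t‖ * ‖D (φ k)‖) := by gcongr
        _ = _ := by ring
    · simpa using (hδ0.comp hφt).mul_const ‖t‖
  · intro s
    rcases eq_or_ne s 0 with rfl | hs
    · simp
    have := key (α • u) out1 (α * s) (mul_ne_zero hα0.ne' hs)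
    rw [mul_smul, ← smul_add, gaugeAt_smul hα0.le, hα, inv_mul_eq_div, le_div_iff₀ hu0, one_mul]
      at this
    exact this
  · intro s
    rcases eq_or_ne s 0 with rfl | hs
    · simp
    have := key (β • -u) out2 (β * s) (mul_ne_zero hβ0.ne' hs)
    rw [mul_smul, ← smul_add, gaugeAt_smul hβ0.le, hβ, inv_mul_eq_div, le_div_iff₀ hnu0, one_mul]
      at this
    exact this

end GaugeAt

/-! ### Approximation of contact points -/

section Even

variable {V : Type*} [NormedAddCommGroup V] [InnerProductSpace ℝ V]

lemma IsContact.line {L : Set V} {v q u : V} (h : IsContact L v q) (hv : v ≠ 0) (hu : ⟪v, u⟫ = 0)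
    (s : ℝ) : q + s • u ∉ interior L := by
  intro hin
  have hc : Filter.Tendsto (fun δ : ℝ => (q + s • u) + δ • v) (nhdsWithin 0 (Ioi 0))
      (nhds (q + s • u)) := by
    have : Continuous fun δ : ℝ => (q + s • u) + δ • v := by fun_prop
    have := this.tendsto 0
    rw [zero_smul, add_zero] at this
    exact this.mono_left nhdsWithin_le_nhds
  obtain ⟨δ, hδ, hδ0⟩ :=
    ((hc.eventually (isOpen_interior.mem_nhds hin)).and self_mem_nhdsWithin).exists
  have := h.2 _ (interior_subset hδ)
  rw [inner_add_right, inner_add_right, inner_smul_right, inner_smul_right, hu] at this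
  have h2 : 0 < δ * ⟪v, v⟫ := mul_pos hδ0 (real_inner_self_pos.2 hv)
  linarith

/-- The position of the contact points of support lines of direction `u` relative to `p`, required
to compare the end points of the chord through `p` with nearby ones. -/
def Approach (L : Set V) (v₁ p u t : V) : Prop :=
  ∀ δ > 0, ∃ q ∈ L, (∀ s : ℝ, q + s • u ∉ interior L) ∧ ‖q - p‖ < δ ∧ ⟪t, q - p⟫ ≠ 0 ∧
      |⟪v₁, q - p⟫| ≤ δ * |⟪t, q - p⟫|

/-- If `p` is the only contact point for `v₁` and the normal cone of `p` is left when moving from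
`v₁` in direction `t`, contact points for `v₁ + ε t` provide the approximation. -/
lemma approach_of_leave {L : Set V} (hL : IsCompact L) {v₁ p u t : V} (hv₁ : ‖v₁‖ = 1)
    (huv : ⟪v₁, u⟫ = 0) (htu : ⟪t, u⟫ = 0) (htv : ⟪v₁, t⟫ = 0) (hp : IsContact L v₁ p)
    (huniq : ∀ q, IsContact L v₁ q → q = p)
    (hleave : ∀ ε : ℝ, 0 < ε → ¬ IsContact L (v₁ + ε • t) p) : Approach L v₁ p u t := by
  intro δ hδ
  choose P hP using exists_isContact hL ⟨p, hp.1⟩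
  have hPp : P v₁ = p := huniq _ (hP _)
  have hcont : ContinuousAt P v₁ := continuousAt_top hL hP fun q hq => by
    rw [hPp]; exact huniq q hq
  have hc : Filter.Tendsto (fun ε : ℝ => v₁ + ε • t) (nhdsWithin 0 (Ioi 0)) (nhds v₁) := by
    have : Continuous fun ε : ℝ => v₁ + ε • t := by fun_prop
    have := this.tendsto 0
    rw [zero_smul, add_zero] at this
    exact this.mono_left nhdsWithin_le_nhds
  have hlim : Filter.Tendsto (fun ε : ℝ => ‖P (v₁ + ε • t) - p‖) (nhdsWithin 0 (Ioi 0))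
      (nhds 0) := by
    have := ((hcont.tendsto.comp hc).sub_const p).norm
    rw [hPp, sub_self, norm_zero] at this
    exact this
  obtain ⟨ε, ⟨h1, h2⟩⟩ := ((hlim.eventually (gt_mem_nhds hδ)).and (Ioo_mem_nhdsGT hδ)).exists
  set q := P (v₁ + ε • t) with hq
  have hqc : IsContact L (v₁ + ε • t) q := hP _
  have hne : v₁ + ε • t ≠ 0 := by
    intro h
    have h3 : ⟪v₁, v₁ + ε • t⟫ = 1 := by
      rw [inner_add_right, inner_smul_right, htv, real_inner_self_eq_norm_sq, hv₁]; ring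
    rw [h, inner_zero_right] at h3; norm_num at h3
  have hA := hqc.2 p hp.1
  have hB := hp.2 q hqc.1
  rw [inner_add_left, inner_add_left, inner_smul_left, inner_smul_left, conj_trivial] at hA
  have h0 : 0 ≤ ⟪t, q - p⟫ := by
    rw [inner_sub_right]
    by_contra hneg
    push Not at hneg
    have := mul_neg_of_pos_of_neg h2.1 hneg
    linarith
  refine ⟨q, hqc.1, hqc.line hne (by rw [inner_add_left, inner_smul_left, huv, htu]; simp), h1,
    ?_, ?_⟩
  · intro hz
    refine hleave ε h2.1 ⟨hp.1, fun x hx => (hqc.2 x hx).trans ?_⟩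
    rw [inner_sub_right] at hz
    rw [inner_add_left, inner_add_left, inner_smul_left, inner_smul_left, conj_trivial]
    have : ⟪t, q⟫ = ⟪t, p⟫ := by linarith
    rw [this]; linarith
  · rw [abs_of_nonneg h0, abs_of_nonpos (by rw [inner_sub_right]; linarith)]
    have : ε * ⟪t, q - p⟫ ≤ δ * ⟪t, q - p⟫ := mul_le_mul_of_nonneg_right h2.2.le h0
    rw [inner_sub_right, inner_sub_right] at *
    linarith

lemma Approach.neg {L : Set V} {v₁ p u t : V} (h : Approach L v₁ p u (-t)) :
    Approach L v₁ p u t := by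
  simpa only [Approach, inner_neg_left, abs_neg, ne_eq, neg_eq_zero] using h

/-- If the face of `L` with normal `v₁` contains a further point `p'`, points of the segment from `p` to
`p'` provide the approximation. -/
lemma approach_of_face {L : Set V} (hLc : Convex ℝ L) {v₁ p p' u t : V} (hv₁ : v₁ ≠ 0)
    (huv : ⟪v₁, u⟫ = 0) (hp : IsContact L v₁ p) (hp' : IsContact L v₁ p')
    (ht : ⟪t, p' - p⟫ ≠ 0) : Approach L v₁ p u t := by
  intro δ hδ
  have hlim : Filter.Tendsto (fun s : ℝ => ‖s • (p' - p)‖) (nhdsWithin 0 (Ioi 0)) (nhds 0) := by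
    have : Continuous fun s : ℝ => ‖s • (p' - p)‖ := by fun_prop
    have := this.tendsto 0
    rw [zero_smul, norm_zero] at this
    exact this.mono_left nhdsWithin_le_nhds
  obtain ⟨s, ⟨h1, h2⟩⟩ :=
    ((hlim.eventually (gt_mem_nhds hδ)).and (Ioo_mem_nhdsGT one_pos)).exists
  have hv : ⟪v₁, p' - p⟫ = 0 := by
    rw [inner_sub_right]; linarith [hp.2 p' hp'.1, hp'.2 p hp.1]
  have hq : IsContact L v₁ (p + s • (p' - p)) := by
    refine ⟨hLc.add_smul_sub_mem hp.1 hp'.1 ⟨h2.1.le, h2.2.le⟩, fun x hx => ?_⟩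
    rw [inner_add_right, inner_smul_right, hv, mul_zero, add_zero]
    exact hp.2 x hx
  refine ⟨_, hq.1, hq.line hv₁ huv, ?_, ?_, ?_⟩
  · rwa [add_sub_cancel_left]
  · rw [add_sub_cancel_left, inner_smul_right]; exact mul_ne_zero h2.1.ne' ht
  · rw [add_sub_cancel_left, inner_smul_right, hv, mul_zero, abs_zero]
    positivity

/-- Contact at `v₁ ± e a` and `v₁ ± e b` for independent `a, b` puts `v₁` in the relative interior
of the slice of the normal cone. -/
lemma slice_interior {L : Set V} {v₁ p : V} {e : ℂ →ₗᵢ[ℝ] V} {a b : ℂ} (hab : cdet a b ≠ 0)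
    (ha : IsContact L (v₁ + e a) p) (ha' : IsContact L (v₁ - e a) p)
    (hb : IsContact L (v₁ + e b) p) (hb' : IsContact L (v₁ - e b) p) :
    ∃ η > 0, ∀ y : ℂ, ‖y‖ < η → IsContact L (v₁ + e y) p := by
  obtain ⟨ρ, hρ, hρ'⟩ := pgram_nhds hab
  refine ⟨ρ / 2, by positivity, fun y hy => ?_⟩
  obtain ⟨r, hr, s, hs, hy2⟩ := hρ' ((2 : ℝ) • y) (by
    rw [norm_smul, Real.norm_eq_abs, abs_of_pos two_pos]; linarith)
  have h1 := ha.cone ha' (a := (1 + r) / 2) (b := (1 - r) / 2) (by linarith [hr.1])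
    (by linarith [hr.2])
  have h2 := hb.cone hb' (a := (1 + s) / 2) (b := (1 - s) / 2) (by linarith [hs.1])
    (by linarith [hs.2])
  have h3 := h1.cone h2 (a := 1 / 2) (b := 1 / 2) (by norm_num) (by norm_num)
  convert h3 using 1
  have hy3 : y = (1 / 2 : ℝ) • (r • a + s • b) := by
    rw [← hy2, smul_smul]; norm_num
  rw [hy3, map_smul, map_add, map_smul, map_smul]
  module

/-- The directions of the support plane for which `Approach` may fail are all parallel. -/
lemma exists_exceptional {L : Set V} (hL : IsCompact L) (hLc : Convex ℝ L) {v₁ p : V}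
    (hv₁ : ‖v₁‖ = 1) (hp : IsContact L v₁ p) (e : ℂ →ₗᵢ[ℝ] V) (he : ∀ z, ⟪v₁, e z⟫ = 0)
    (he' : ∀ x, ⟪v₁, x⟫ = 0 → ∃ z, e z = x)
    (hb : ∀ η > 0, ∃ y : ℂ, ‖y‖ < η ∧ ¬ IsContact L (v₁ + e y) p) :
    ∃ B : Set ℂ, (∀ z ∈ B, ∀ z' ∈ B, cdet z z' = 0) ∧
      ∀ z, z ∉ B → Approach L v₁ p (e z) (e (Complex.I * z)) := by
  have hperp : ∀ z, ⟪e (Complex.I * z), e z⟫ = 0 := fun z => by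
    rw [e.inner_map_map]; simp [Complex.inner, mul_comm]
  have hv0 : v₁ ≠ 0 := by rintro rfl; simp at hv₁
  by_cases huniq : ∀ q, IsContact L v₁ q → q = p
  · refine ⟨{z | (∃ ε : ℝ, 0 < ε ∧ IsContact L (v₁ + ε • e (Complex.I * z)) p) ∧
      ∃ ε : ℝ, 0 < ε ∧ IsContact L (v₁ + ε • -e (Complex.I * z)) p}, ?_, ?_⟩
    · rintro z ⟨⟨ε₁, h1, h1'⟩, ⟨ε₂, h2, h2'⟩⟩ z' ⟨⟨ε₃, h3, h3'⟩, ⟨ε₄, h4, h4'⟩⟩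
      by_contra hne
      -- shrink to a common radius
      have shrink : ∀ {x : V} {ε ε' : ℝ}, 0 < ε' → ε' ≤ ε → IsContact L (v₁ + ε • x) p →
          IsContact L (v₁ + ε' • x) p := by
        intro x ε ε' h h' hc
        have hε : 0 < ε := by linarith
        have := hp.cone hc (a := 1 - ε' / ε) (b := ε' / ε)
          (by rw [sub_nonneg, div_le_one hε]; exact h') (by positivity)
        convert this using 1
        rw [smul_add, smul_smul, div_mul_cancel₀ _ hε.ne']; module
      have hm := lt_min h1 h2
      have hm' := lt_min h3 h4
      obtain ⟨η, hη, hη'⟩ := slice_interior (L := L) (v₁ := v₁) (p := p) (e := e)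
        (a := min ε₁ ε₂ • (Complex.I * z)) (b := min ε₃ ε₄ • (Complex.I * z'))
        (by
          have : cdet (min ε₁ ε₂ • (Complex.I * z)) (min ε₃ ε₄ • (Complex.I * z')) =
            min ε₁ ε₂ * min ε₃ ε₄ * cdet z z' := by simp [cdet]; ring
          rw [this]
          exact mul_ne_zero (mul_pos hm hm').ne' hne)
        (by rw [map_smul]; exact shrink hm (min_le_left _ _) h1')
        (by rw [map_smul, sub_eq_add_neg, ← smul_neg]; exact shrink hm (min_le_right _ _) h2')
        (by rw [map_smul]; exact shrink hm' (min_le_left _ _) h3')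
        (by rw [map_smul, sub_eq_add_neg, ← smul_neg]; exact shrink hm' (min_le_right _ _) h4')
      obtain ⟨y, hy, hy'⟩ := hb η hη
      exact hy' (hη' y hy)
    · intro z hz
      rw [Set.mem_ofPred_eq, not_and_or] at hz
      push Not at hz
      rcases hz with hz | hz
      · exact approach_of_leave hL hv₁ (he z) (hperp z) (he _) hp huniq hz
      · exact (approach_of_leave hL hv₁ (he z) (by rw [inner_neg_left, hperp, neg_zero])
          (by rw [inner_neg_right, he, neg_zero]) hp huniq hz).neg
  · push Not at huniq
    obtain ⟨p', hp', hne⟩ := huniq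
    obtain ⟨w, hw⟩ := he' (p' - p) (by
      rw [inner_sub_right]; linarith [hp.2 p' hp'.1, hp'.2 p hp.1])
    have hw0 : w ≠ 0 := by
      rintro rfl; rw [map_zero] at hw; exact hne (sub_eq_zero.1 hw.symm)
    refine ⟨{z | cdet z w = 0}, ?_, ?_⟩
    · intro z hz z' hz'
      obtain ⟨τ, rfl⟩ := exists_smul_of_cdet hw0 hz
      obtain ⟨τ', rfl⟩ := exists_smul_of_cdet hw0 hz'
      simp [cdet]; ring
    · intro z hz
      refine approach_of_face hLc hv0 (he z) hp hp' ?_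
      rw [← hw, e.inner_map_map]
      intro h
      apply hz
      simp only [Complex.inner, cdet, Set.mem_ofPred_eq] at h ⊢
      simp at h
      linarith

end Even

/-! ### Chords through contact points are bisected -/

section Bisect

variable {V : Type*} [NormedAddCommGroup V] [InnerProductSpace ℝ V]

/-- If `v₁` is a boundary normal of the normal cone of `p`, the section of `K` by the support plane is
symmetric about `p`: away from the exceptional directions the ends of a chord have parallel support
lines, and the exceptional ones are limits of the others. -/
lemma even_slice [FiniteDimensional ℝ V] {K L : Set V} (hKc : IsCompact K) (hK : Convex ℝ K)
    (hL : IsCompact L) (hLc : Convex ℝ L)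
    (hLK : L ⊆ interior K) {ℓ : V → ℝ} (hH : EqualChords K L ℓ) {v₁ p : V}
    (hv₁ : ‖v₁‖ = 1) (hp : IsContact L v₁ p) (e : ℂ →ₗᵢ[ℝ] V) (he : ∀ z, ⟪v₁, e z⟫ = 0)
    (he' : ∀ x, ⟪v₁, x⟫ = 0 → ∃ z, e z = x)
    (hb : ∀ η > 0, ∃ y : ℂ, ‖y‖ < η ∧ ¬ IsContact L (v₁ + e y) p) (z : ℂ) :
    gaugeAt K p (-e z) = gaugeAt K p (e z) := by
  have hv0 : v₁ ≠ 0 := by rintro rfl; simp at hv₁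
  have hpK := hLK hp.1
  obtain ⟨B, hB, hgood⟩ := exists_exceptional hL hLc hv₁ hp e he he' hb
  set G : ℂ → ℝ := fun z => gaugeAt K p (e z) with hG
  have hGc : Continuous G := (continuous_gaugeAt hK hpK).comp e.continuous
  have hcl : IsClosed {q : ℂ × ℂ | BJ G q.1 q.2} := isClosed_BJ hGc
  have hgd : ∀ z, z ≠ 0 → z ∉ B → ∃ d, ‖d‖ = 1 ∧ BJ G z d ∧ BJ G (-z) d := by
    intro z hz hzB
    obtain ⟨d, hd1, hd2, hd3, hd4⟩ := parallel_of_approach hKc hK hLK hH (v₁ := v₁) (p := p)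
      (u := e z) (t := e (Complex.I * z)) (by rwa [Ne, map_eq_zero_iff e e.injective]) (he z)
      (by rw [e.inner_map_map]; simp [Complex.inner, mul_comm]) hp.1 (hp.line hv0 (he z))
      (hgood z hzB)
    obtain ⟨d, rfl⟩ := he' d hd2
    refine ⟨d, by rwa [e.norm_map] at hd1, fun τ => ?_, fun τ => ?_⟩
    · have := hd3 τ
      rwa [← map_smul, ← map_add] at this
    · have := hd4 τ
      rwa [← map_smul, ← map_neg, ← map_add] at this
  have hP : ∀ z, z ≠ 0 → ∃ d, d ≠ 0 ∧ BJ G z d ∧ BJ G (-z) d := by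
    intro z hz
    by_cases hzB : z ∈ B
    · -- approximate `z` by the non-exceptional directions `z + η i z`
      set y : ℕ → ℂ := fun k => z + (1 / ((k : ℝ) + 1)) • (Complex.I * z) with hy
      have hylim : Filter.Tendsto y Filter.atTop (nhds z) := by
        have := (tendsto_one_div_add_atTop_nhds_zero_nat (𝕜 := ℝ)).smul_const (Complex.I * z)
        have := this.const_add z
        rwa [zero_smul, add_zero] at this
      have hcd : ∀ k, cdet z (y k) ≠ 0 := by
        intro k
        have : cdet z (y k) = (1 / ((k : ℝ) + 1)) * (z.re ^ 2 + z.im ^ 2) := by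
          simp only [hy, cdet, Complex.add_re, Complex.add_im, Complex.smul_re, Complex.smul_im,
            smul_eq_mul, Complex.mul_re, Complex.mul_im, Complex.I_re, Complex.I_im]
          ring
        rw [this]
        have h2 : 0 < z.re ^ 2 + z.im ^ 2 := by
          have := Complex.normSq_pos.2 hz
          rw [Complex.normSq_apply] at this
          nlinarith
        positivity
      have hyB : ∀ k, y k ∉ B := fun k h => hcd k (hB z hzB _ h)
      have hy0 : ∀ k, y k ≠ 0 := fun k h => hcd k (by rw [h]; simp [cdet])
      choose d hd1 hd2 hd3 using fun k => hgd (y k) (hy0 k) (hyB k)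
      obtain ⟨d₀, hd₀, φ, hφ, hlim⟩ := (isCompact_sphere (0 : ℂ) 1).tendsto_subseq
        (x := d) (fun k => by rw [mem_sphere_zero_iff_norm]; exact hd1 k)
      have hyφ := hylim.comp hφ.tendsto_atTop
      refine ⟨d₀, ?_, ?_, ?_⟩
      · rintro rfl; simp at hd₀
      · exact hcl.mem_of_tendsto (hyφ.prodMk_nhds hlim) (Filter.Eventually.of_forall fun k => hd2 _)
      · exact hcl.mem_of_tendsto (hyφ.neg.prodMk_nhds hlim)
          (Filter.Eventually.of_forall fun k => hd3 _)
    · obtain ⟨d, hd, h⟩ := hgd z hz hzB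
      exact ⟨d, by rintro rfl; simp at hd, h⟩
  have := even_of_parallel hGc (fun c z hc => by
      simp only [hG]; rw [map_smul]; exact gaugeAt_smul hc _)
    (fun z hz => gaugeAt_pos hKc.isBounded hpK (by rwa [Ne, map_eq_zero_iff e e.injective])) hP z
  simpa only [hG, map_neg] using this

/-- In dimension three, every chord through a contact point in the support plane is bisected by
the contact point. Turning the normal about the chord to the boundary of the normal cone reduces
this to `even_slice`. -/
lemma even_of_contact (hV : Module.finrank ℝ V = 3) {K L : Set V} (hKc : IsCompact K)
    (hK : Convex ℝ K) (hL : IsCompact L) (hLc : Convex ℝ L) (hLint : (interior L).Nonempty)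
    (hLK : L ⊆ interior K) {ℓ : V → ℝ} (hH : EqualChords K L ℓ) {v p u : V}
    (hv : v ≠ 0) (hp : IsContact L v p) (hu : ⟪v, u⟫ = 0) :
    gaugeAt K p (-u) = gaugeAt K p u := by
  have : FiniteDimensional ℝ V := Module.finite_of_finrank_pos (by omega)
  rcases eq_or_ne u 0 with rfl | hu0
  · rw [neg_zero]
  obtain ⟨e, he, he'⟩ := exists_frame hV hv
  obtain ⟨z, rfl⟩ := he' u hu
  have hz : z ≠ 0 := by rintro rfl; exact hu0 (map_zero _)
  have ht0 : e (Complex.I * z) ≠ 0 := by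
    rw [Ne, map_eq_zero_iff e e.injective]; exact mul_ne_zero Complex.I_ne_zero hz
  have htu : ⟪e (Complex.I * z), e z⟫ = 0 := by
    rw [e.inner_map_map]; simp [Complex.inner, mul_comm]
  obtain ⟨τ, hτ⟩ := exists_not_contact hLint v p ht0
  set t := τ • e (Complex.I * z) with ht
  obtain ⟨r, hr0, hr1, hrc, hrn⟩ := last_normal hp hτ
  have htv : ⟪v, t⟫ = 0 := by rw [ht, inner_smul_right, he, mul_zero]
  have htu' : ⟪t, e z⟫ = 0 := by rw [ht, inner_smul_left, htu, mul_zero]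
  have hv₁ : v + r • t ≠ 0 := by
    intro h
    have h1 : ⟪v, v + r • t⟫ = ⟪v, v⟫ := by rw [inner_add_right, inner_smul_right, htv]; ring
    rw [h, inner_zero_right] at h1
    exact hv (inner_self_eq_zero.1 h1.symm)
  set m := ‖v + r • t‖ with hm
  have hmp : 0 < m := norm_pos_iff.2 hv₁
  obtain ⟨v₁, hv₁m⟩ : ∃ v₁, v₁ = m⁻¹ • (v + r • t) := ⟨_, rfl⟩
  have hmv : m • v₁ = v + r • t := by rw [hv₁m, smul_smul, mul_inv_cancel₀ hmp.ne', one_smul]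
  have hv₁n : ‖v₁‖ = 1 := by
    rw [hv₁m, norm_smul, norm_inv, Real.norm_eq_abs, abs_of_pos hmp, ← hm, inv_mul_cancel₀ hmp.ne']
  have hv₁0 : v₁ ≠ 0 := by rintro rfl; simp at hv₁n
  have hv₁2 : ⟪v₁, v₁⟫ = 1 := by rw [real_inner_self_eq_norm_sq, hv₁n]; norm_num
  have hc₁ : IsContact L v₁ p := by rw [hv₁m]; exact hrc.smul (inv_pos.2 hmp).le
  have hv₁u : ⟪v₁, e z⟫ = 0 := by
    rw [hv₁m, inner_smul_left, inner_add_left, inner_smul_left, he, htu']; simp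
  obtain ⟨f, hf, hf'⟩ := exists_frame hV hv₁0
  obtain ⟨z', hz'⟩ := hf' _ hv₁u
  rw [← hz']
  refine even_slice hKc hK hL hLc hLK hH hv₁n hc₁ f hf hf' ?_ z'
  by_contra hcon
  push Not at hcon
  obtain ⟨η, hη, hvert⟩ := hcon
  set g := ⟪v₁, t⟫ with hg
  obtain ⟨z₁, hz₁⟩ := hf' (t - g • v₁) (by
    rw [inner_sub_right, inner_smul_right _ v₁, hv₁2, ← hg]; ring)
  have hlim : Filter.Tendsto (fun s : ℝ => m + s * g) (nhdsWithin 0 (Ioi 0)) (nhds m) := by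
    have h : Continuous fun s : ℝ => m + s * g := by fun_prop
    have := h.tendsto 0
    simp only [zero_mul, add_zero] at this
    exact this.mono_left nhdsWithin_le_nhds
  have hlim2 : Filter.Tendsto (fun s : ℝ => ‖(s / (m + s * g)) • z₁‖) (nhdsWithin 0 (Ioi 0))
      (nhds 0) := by
    have hid : Filter.Tendsto (fun s : ℝ => s) (nhdsWithin 0 (Ioi 0)) (nhds 0) :=
      nhdsWithin_le_nhds
    have := ((hid.div hlim hmp.ne').smul_const z₁).norm
    simpa using this
  obtain ⟨s, ⟨⟨hs1, hs2⟩, hs3⟩⟩ := (((hlim.eventually (lt_mem_nhds hmp)).and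
    (hlim2.eventually (gt_mem_nhds hη))).and
    (Ioo_mem_nhdsGT (show (0 : ℝ) < 1 - r by linarith))).exists
  refine hrn (r + s) (by linarith [hs3.1]) (by linarith [hs3.2]) ?_
  have hc2 := (hvert _ hs2).smul hs1.le
  convert hc2 using 1
  calc v + (r + s) • t = (v + r • t) + s • t := by module
    _ = m • v₁ + s • (g • v₁ + f z₁) := by rw [hmv, hz₁]; module
    _ = (m + s * g) • v₁ + s • f z₁ := by module
    _ = _ := by rw [map_smul, smul_add (m + s * g) v₁, smul_smul (m + s * g) _ (f z₁),
          mul_div_cancel₀ _ hs1.ne']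

lemma gaugeAt_eq_of_contact (hV : Module.finrank ℝ V = 3) {K L : Set V} (hKc : IsCompact K)
    (hK : Convex ℝ K) (hL : IsCompact L) (hLc : Convex ℝ L) (hLint : (interior L).Nonempty)
    (hLK : L ⊆ interior K) {ℓ : V → ℝ} (hH : EqualChords K L ℓ) {v p u : V}
    (hv : v ≠ 0) (hp : IsContact L v p) (hu : ⟪v, u⟫ = 0) (hu0 : u ≠ 0) :
    gaugeAt K p u = 2 / ℓ u := by
  rw [← hH p hp.1 u hu0 (hp.line hv hu),
    even_of_contact hV hKc hK hL hLc hLint hLK hH hv hp hu]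
  have := gaugeAt_pos hKc.isBounded (hLK hp.1) hu0
  field_simp
  norm_num

end Bisect

/-! ### Reduction to three-dimensional sections -/

section Sections

variable {V : Type*} [NormedAddCommGroup V] [InnerProductSpace ℝ V]

lemma exists_submodule_ge [FiniteDimensional ℝ V] (S₀ : Submodule ℝ V) (j : ℕ)
    (hj : Module.finrank ℝ S₀ + j ≤ Module.finrank ℝ V) :
    ∃ S : Submodule ℝ V, S₀ ≤ S ∧ Module.finrank ℝ S = Module.finrank ℝ S₀ + j := by
  induction j with
  | zero => exact ⟨S₀, le_rfl, rfl⟩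
  | succ j ih =>
    obtain ⟨S, hS, hS'⟩ := ih (by omega)
    have hne : S ≠ ⊤ := by
      rintro rfl; rw [finrank_top] at hS'; omega
    obtain ⟨x, -, hx⟩ := SetLike.exists_of_lt (lt_top_iff_ne_top.2 hne)
    have hx0 : x ≠ 0 := by rintro rfl; exact hx S.zero_mem
    refine ⟨S ⊔ Submodule.span ℝ {x}, hS.trans le_sup_left, ?_⟩
    have h := Submodule.finrank_sup_add_finrank_inf_eq S (Submodule.span ℝ {x})
    rw [disjoint_iff.1 ((Submodule.disjoint_span_singleton' hx0).2 hx), finrank_bot,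
      finrank_span_singleton hx0] at h
    omega

lemma exists_submodule_three [FiniteDimensional ℝ V] (hV : 3 ≤ Module.finrank ℝ V) (a b : V) :
    ∃ S : Submodule ℝ V, Module.finrank ℝ S = 3 ∧ a ∈ S ∧ b ∈ S := by
  classical
  have h2 : Module.finrank ℝ (Submodule.span ℝ {a, b}) ≤ 2 := by
    have := finrank_span_finset_le_card (R := ℝ) ({a, b} : Finset V)
    rw [Set.finrank, Finset.coe_pair] at this
    exact this.trans Finset.card_le_two
  obtain ⟨S, hS, hS'⟩ := exists_submodule_ge (Submodule.span ℝ {a, b})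
    (3 - Module.finrank ℝ (Submodule.span ℝ {a, b})) (by omega)
  exact ⟨S, by omega, hS (Submodule.subset_span (by simp)), hS (Submodule.subset_span (by simp))⟩

lemma exists_unit_perp [FiniteDimensional ℝ V] (hV : 3 ≤ Module.finrank ℝ V) (a b : V) :
    ∃ v : V, ‖v‖ = 1 ∧ ⟪v, a⟫ = 0 ∧ ⟪v, b⟫ = 0 := by
  classical
  have h2 : Module.finrank ℝ (Submodule.span ℝ {a, b}) ≤ 2 := by
    have := finrank_span_finset_le_card (R := ℝ) ({a, b} : Finset V)
    rw [Set.finrank, Finset.coe_pair] at this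
    exact this.trans Finset.card_le_two
  have h3 := Submodule.finrank_add_finrank_orthogonal (Submodule.span ℝ {a, b})
  have hne : (Submodule.span ℝ {a, b})ᗮ ≠ ⊥ := by
    intro h; rw [h, finrank_bot] at h3; omega
  obtain ⟨v, hv, hv0⟩ := Submodule.exists_mem_ne_zero_of_ne_bot hne
  have hn : 0 < ‖v‖ := norm_pos_iff.2 hv0
  have hp : ∀ x ∈ ({a, b} : Set V), ⟪v, x⟫ = 0 := fun x hx => by
    rw [real_inner_comm]
    exact (Submodule.mem_orthogonal _ v).1 hv x (Submodule.subset_span hx)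
  refine ⟨‖v‖⁻¹ • v, ?_, ?_, ?_⟩
  · rw [norm_smul, norm_inv, norm_norm, inv_mul_cancel₀ hn.ne']
  · rw [inner_smul_left, hp a (by simp), mul_zero]
  · rw [inner_smul_left, hp b (by simp), mul_zero]

/-- The section of `K` by the affine subspace `o + S`, as a subset of `S`. -/
def sect (K : Set V) (o : V) (S : Submodule ℝ V) : Set S := {x | o + (x : V) ∈ K}

variable {K L : Set V} {o : V} {S : Submodule ℝ V}

lemma continuous_sect (o : V) (S : Submodule ℝ V) : Continuous fun x : S => o + (x : V) := by
  fun_prop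

lemma interior_sect (x : S) (hx : o + (x : V) ∈ interior K) : x ∈ interior (sect K o S) :=
  mem_interior.2 ⟨(fun x : S => o + (x : V)) ⁻¹' interior K, fun y hy => show o + (y : V) ∈ K from interior_subset hy,
    isOpen_interior.preimage (continuous_sect o S), hx⟩

lemma convex_sect (hK : Convex ℝ K) : Convex ℝ (sect K o S) := by
  intro x hx y hy a b ha hb hab
  have := hK hx hy ha hb hab
  simp only [sect, Set.mem_ofPred_eq, Submodule.coe_add, Submodule.coe_smul]
  convert this using 1
  have : o = (a + b) • o := by rw [hab, one_smul]
  nth_rw 1 [this]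
  module

lemma isCompact_sect [FiniteDimensional ℝ V] (hK : IsCompact K) : IsCompact (sect K o S) := by
  have hS : IsClosed (S : Set V) := S.closed_of_finiteDimensional
  have h1 : Topology.IsClosedEmbedding (fun x : S => o + (x : V)) :=
    (Homeomorph.addLeft o).isClosedEmbedding.comp hS.isClosedEmbedding_subtypeVal
  exact h1.isCompact_preimage hK

lemma gaugeAt_sect (x w : S) : gaugeAt (sect K o S) x w = gaugeAt K (o + x) w := by
  rw [gaugeAt, gaugeAt, gauge_def', gauge_def']
  simp [sect, add_assoc]

lemma equalChords_sect {ℓ : V → ℝ} (hH : EqualChords K L ℓ) :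
    EqualChords (sect K o S) (sect L o S) (fun x : S => ℓ x) := by
  intro p hp u hu hs
  rw [gaugeAt_sect, gaugeAt_sect, Submodule.coe_neg]
  refine hH _ hp u (by simpa using hu) fun s hin => hs s (interior_sect _ ?_)
  simpa [add_assoc] using hin

/-- The chord of `K` in direction `u` through a contact point for a normal orthogonal to `u` is
bisected, in any dimension at least three; the right-hand side does not involve `p`. -/
lemma gaugeAt_eq [FiniteDimensional ℝ V] (hV : 3 ≤ Module.finrank ℝ V) (hKc : IsCompact K)
    (hK : Convex ℝ K) (hL : IsCompact L) (hLc : Convex ℝ L) (hLint : (interior L).Nonempty)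
    (hLK : L ⊆ interior K) {ℓ : V → ℝ} (hH : EqualChords K L ℓ) {v p u : V}
    (hv : v ≠ 0) (hp : IsContact L v p) (hu : ⟪v, u⟫ = 0) (hu0 : u ≠ 0) :
    gaugeAt K p u = 2 / ℓ u := by
  obtain ⟨o, ho⟩ := hLint
  obtain ⟨S, hS3, huS, hpS⟩ := exists_submodule_three hV u (p - o)
  let v' : S := S.orthogonalProjectionOnto v
  have hinner : ∀ x : S, ⟪v', x⟫ = ⟪v, (x : V)⟫ := fun x => by
    simp only [v']
    exact S.inner_orthogonalProjectionOnto_eq_of_mem_right x v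
  have hpo : ⟪v, p - o⟫ ≠ 0 := by
    intro h
    refine hp.line hv (u := p - o) h (-1) ?_
    convert ho using 1; module
  have hv' : v' ≠ 0 := by
    intro h
    have := hinner ⟨p - o, hpS⟩
    rw [h, inner_zero_left] at this
    exact hpo this.symm
  have hsub : ∀ x : S, x ∈ sect L o S → x ∈ interior (sect K o S) := fun x hx =>
    interior_sect x (hLK hx)
  have hc : IsContact (sect L o S) v' ⟨p - o, hpS⟩ := by
    refine ⟨?_, fun x hx => ?_⟩
    · simp only [sect, Set.mem_ofPred_eq]; convert hp.1 using 1; abel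
    · rw [hinner, hinner, inner_sub_right]
      have := hp.2 _ hx
      rw [inner_add_right] at this
      linarith
  have := gaugeAt_eq_of_contact hS3 (isCompact_sect hKc) (convex_sect hK) (isCompact_sect hL)
    (convex_sect hLc) ⟨0, interior_sect 0 (by simpa using ho)⟩ hsub (equalChords_sect hH) hv' hc
    (u := ⟨u, huS⟩) (by rw [hinner]; exact hu) (by simpa using hu0)
  rw [gaugeAt_sect] at this
  simpa using this

/-- The sections of `K` by support hyperplanes of `L` are centred translates of the central
sections of a single norm ball, and this norm satisfies the parallelogram law. -/
theorem exists_centred_norm [FiniteDimensional ℝ V] (hV : 3 ≤ Module.finrank ℝ V)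
    (hKc : IsCompact K) (hK : Convex ℝ K) (hL : IsCompact L) (hLc : Convex ℝ L)
    (hLint : (interior L).Nonempty) (hLK : L ⊆ interior K) {ℓ : V → ℝ} (hH : EqualChords K L ℓ) :
    ∃ N : Seminorm ℝ V, (∀ x, x ≠ 0 → 0 < N x) ∧ CentredSections K L N ∧
      ∀ x y, N (x + y) ^ 2 + N (x - y) ^ 2 = 2 * (N x ^ 2 + N y ^ 2) := by
  classical
  have hLne : L.Nonempty := hLint.mono interior_subset
  set f : V → ℝ := fun u => if u = 0 then 0 else 2 / ℓ u with hf
  have hfg : ∀ v p u, v ≠ 0 → IsContact L v p → ⟪v, u⟫ = 0 → f u = gaugeAt K p u := by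
    intro v p u hv hp hu
    by_cases h : u = 0
    · simp [hf, h, gaugeAt, gauge_zero]
    · simp only [hf, h, if_false]
      exact (gaugeAt_eq hV hKc hK hL hLc hLint hLK hH hv hp hu h).symm
  have hpair : ∀ x y, ∃ v p, v ≠ 0 ∧ IsContact L v p ∧ ⟪v, x⟫ = 0 ∧ ⟪v, y⟫ = 0 := by
    intro x y
    obtain ⟨v, hv, h1, h2⟩ := exists_unit_perp hV x y
    obtain ⟨p, hp⟩ := exists_isContact hL hLne v
    exact ⟨v, p, by rintro rfl; simp at hv, hp, h1, h2⟩
  have hneg : ∀ x, f (-x) = f x := by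
    intro x
    by_cases h : x = 0
    · simp [h]
    obtain ⟨v, p, hv, hp, hx, -⟩ := hpair x x
    have h1 := hH p hp.1 x h (hp.line hv hx)
    have hx' : ⟪v, -x⟫ = 0 := by rw [inner_neg_right, hx, neg_zero]
    have h2 := hH p hp.1 (-x) (neg_ne_zero.2 h) (hp.line hv hx')
    rw [neg_neg, add_comm, h1] at h2
    simp [hf, h, h2]
  have hsm0 : ∀ (a : ℝ) x, 0 ≤ a → f (a • x) = a * f x := by
    intro a x ha
    obtain ⟨v, p, hv, hp, hx, -⟩ := hpair x x
    rw [hfg v p _ hv hp (by rw [inner_smul_right, hx, mul_zero]), hfg v p _ hv hp hx,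
      gaugeAt_smul ha]
  let N : Seminorm ℝ V := Seminorm.of f (fun x y => by
      obtain ⟨v, p, hv, hp, hx, hy⟩ := hpair x y
      rw [hfg v p _ hv hp (by rw [inner_add_right, hx, hy, add_zero]), hfg v p _ hv hp hx,
        hfg v p _ hv hp hy]
      exact gauge_add_le (gaugeAt_conv hK p) (absorbent_nhds_zero (gaugeAt_aux (hLK hp.1))) x y)
    (fun a x => by
      rcases le_total 0 a with h | h
      · rw [hsm0 a x h, Real.norm_eq_abs, abs_of_nonneg h]
      · rw [show a • x = -((-a) • x) by module, hneg, hsm0 _ x (by linarith), Real.norm_eq_abs,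
          abs_of_nonpos h])
  have hNf : ∀ x, N x = f x := fun x => rfl
  have hpos : ∀ x, x ≠ 0 → 0 < N x := by
    intro x hx
    obtain ⟨v, p, hv, hp, hx', -⟩ := hpair x x
    rw [hNf, hfg v p _ hv hp hx']
    exact gaugeAt_pos hKc.isBounded (hLK hp.1) hx
  obtain ⟨δ, hδ, hthick⟩ := hL.exists_thickening_subset_open isOpen_interior hLK
  have hbound : ∀ x, N x ≤ (δ⁻¹).toNNReal * ‖x‖ := by
    intro x
    obtain ⟨v, p, hv, hp, hx, -⟩ := hpair x x
    rw [hNf, hfg v p _ hv hp hx, Real.coe_toNNReal _ (inv_pos.2 hδ).le, inv_mul_eq_div,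
      le_div_iff₀ hδ, mul_comm]
    refine mul_gauge_le_norm fun w hw => ?_
    change p + w ∈ K
    refine interior_subset (hthick (mem_thickening_iff.2 ⟨p, hp.1, ?_⟩))
    simpa using hw
  refine ⟨N, hpos, fun v p hv hp w hw => ?_, fun x y => ?_⟩
  · rw [hNf, hfg v p w hv hp hw, gaugeAt_le_one hKc.isClosed hK (hLK hp.1)]
  · obtain ⟨o, ho⟩ := hLint
    obtain ⟨S, hS3, hxS, hyS⟩ := exists_submodule_three hV x y
    have : FiniteDimensional ℝ S := Module.finite_of_finrank_pos (by omega)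
    obtain ⟨v₀, hv₀, h1, h2⟩ := exists_unit_perp (V := S) hS3.ge ⟨x, hxS⟩ ⟨y, hyS⟩
    have hsub : sect L o S ⊆ interior (sect K o S) := fun x hx => interior_sect x (hLK hx)
    have hLint : (interior (sect L o S)).Nonempty := ⟨0, interior_sect 0 (by simpa using ho)⟩
    have hCS : CentredSections (sect K o S) (sect L o S) (N.comp S.subtype) := by
      intro v p hv hp w hw
      rw [← gaugeAt_le_one (isCompact_sect hKc).isClosed (convex_sect hK) (hsub hp.1)]
      by_cases h : w = 0
      · simp [h, gaugeAt, gauge_zero]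
      rw [gaugeAt_eq_of_contact hS3 (isCompact_sect hKc) (convex_sect hK) (isCompact_sect hL)
        (convex_sect hLc) hLint hsub (equalChords_sect hH) hv hp hw h]
      have : N.comp S.subtype w = 2 / ℓ w := by
        have h' : (w : V) ≠ 0 := by simpa using h
        simp [hNf, hf, h']
      rw [this]
    have := parallelogram_perp hS3 (N := N.comp S.subtype) (C := (δ⁻¹).toNNReal)
      (fun x => hbound x) (fun x hx => hpos x (by simpa using hx)) (isCompact_sect hL) hLint hCS hv₀
      h1 h2
    exact this

end Sections

/-! ### Centred sections of Euclidean type force concentric balls -/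

section Balls

variable {V : Type*} [NormedAddCommGroup V] [InnerProductSpace ℝ V]

/-- The centred interval `τ² ≤ 1 - A` determines the quadratic inequality describing it. -/
lemma quad_aux {A B β : ℝ} (hA : A < 1)
    (h : ∀ τ : ℝ, A + τ ^ 2 ≤ 1 ↔ B + 2 * τ * β + τ ^ 2 ≤ 1) : β = 0 ∧ A = B := by
  have hs : √(1 - A) ^ 2 = 1 - A := Real.sq_sqrt (by linarith)
  have h1 := (h (√(1 - A))).1 (by rw [hs]; linarith)
  have h2 := (h (-√(1 - A))).1 (by rw [neg_sq, hs]; linarith)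
  rw [neg_sq] at h2
  have hBA : B ≤ A := by nlinarith
  have hr : √(1 - B + β ^ 2) ^ 2 = 1 - B + β ^ 2 := Real.sq_sqrt (by nlinarith)
  have h3 := (h (-β + √(1 - B + β ^ 2))).2 (by nlinarith)
  have h4 := (h (-β - √(1 - B + β ^ 2))).2 (by nlinarith)
  have hβ : β = 0 := by nlinarith
  subst hβ
  exact ⟨rfl, le_antisymm (by nlinarith) hBA⟩

/-- The contact points of two unit vectors `v`, `v'` at an acute angle differ by a multiple of
`v' - v`: the two sections cut the intersection of their hyperplanes in the same chords. -/
lemma contact_diff [FiniteDimensional ℝ V] (hV : 3 ≤ Module.finrank ℝ V) {K L : Set V}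
    (hS : CentredSections K L (normSeminorm ℝ V)) {v v' p p' : V} (hv : ‖v‖ = 1) (hv' : ‖v'‖ = 1)
    (hc0 : 0 ≤ ⟪v, v'⟫) (hc1 : ⟪v, v'⟫ < 1) (hp : IsContact L v p) (hp' : IsContact L v' p')
    (hD : ‖p' - p‖ < 1) : ∃ m : ℝ, p' - p = m • (v' - v) := by
  set c := ⟪v, v'⟫ with hc
  set D := p' - p with hDdef
  have hvv : ⟪v, v⟫ = 1 := by rw [real_inner_self_eq_norm_sq, hv]; norm_num
  have hvv' : ⟪v', v'⟫ = 1 := by rw [real_inner_self_eq_norm_sq, hv']; norm_num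
  have hcc : ⟪v', v⟫ = c := by rw [real_inner_comm]
  have hv0 : v ≠ 0 := by rintro rfl; simp at hv
  have hv0' : v' ≠ 0 := by rintro rfl; simp at hv'
  have hpos : 0 < 1 - c ^ 2 := by nlinarith
  have hvD : ⟪v, D⟫ ≤ 0 := by rw [hDdef, inner_sub_right]; linarith [hp.2 p' hp'.1]
  have hvD' : 0 ≤ ⟪v', D⟫ := by rw [hDdef, inner_sub_right]; linarith [hp'.2 p hp.1]
  set s := ⟪v', D⟫ / (1 - c ^ 2) with hs
  have hs' : s * (1 - c ^ 2) = ⟪v', D⟫ := div_mul_cancel₀ _ hpos.ne'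
  have hs0 : 0 ≤ s := div_nonneg hvD' hpos.le
  set a := s • (v' - c • v) with ha
  set b := a - D with hb
  have hva : ⟪v, a⟫ = 0 := by
    simp only [ha, inner_smul_right, inner_sub_right, hvv, ← hc]; ring
  have hva' : ⟪v', a⟫ = ⟪v', D⟫ := by
    rw [← hs']; simp only [ha, inner_smul_right, inner_sub_right, hvv', hcc]; ring
  have hvb' : ⟪v', b⟫ = 0 := by rw [hb, inner_sub_right, hva', sub_self]
  have hvb : 0 ≤ ⟪v, b⟫ := by rw [hb, inner_sub_right, hva]; linarith
  have hna : ‖a‖ ^ 2 = s ^ 2 * (1 - c ^ 2) := by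
    rw [← real_inner_self_eq_norm_sq, ha]
    simp only [inner_smul_right, inner_smul_left, inner_sub_right, inner_sub_left, hvv, hvv', hcc,
      ← hc, conj_trivial]
    ring
  have hne : ‖v' - c • v‖ ^ 2 = 1 - c ^ 2 := by
    rw [← real_inner_self_eq_norm_sq]
    simp only [inner_smul_right, inner_smul_left, inner_sub_right, inner_sub_left, hvv, hvv', hcc,
      ← hc, conj_trivial]
    ring
  have ha1 : ‖a‖ ^ 2 < 1 := by
    have h1 : ⟪v', D⟫ ≤ ‖v' - c • v‖ * ‖D‖ := by
      refine le_trans ?_ (real_inner_le_norm _ _)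
      rw [inner_sub_left, inner_smul_left, conj_trivial]
      nlinarith
    have h2 : ⟪v', D⟫ ^ 2 ≤ (1 - c ^ 2) * ‖D‖ ^ 2 := by
      rw [← hne, ← mul_pow]; exact pow_le_pow_left₀ hvD' h1 2
    rw [← hs'] at h2
    have h3 : s ^ 2 * (1 - c ^ 2) ≤ ‖D‖ ^ 2 := by
      refine le_of_mul_le_mul_left ?_ hpos
      calc _ = (s * (1 - c ^ 2)) ^ 2 := by ring
        _ ≤ _ := h2
    rw [hna]
    refine h3.trans_lt ?_
    nlinarith [norm_nonneg D]
  have key : ∀ u : V, ‖u‖ = 1 → ⟪v, u⟫ = 0 → ⟪v', u⟫ = 0 → ⟪b, u⟫ = 0 ∧ ‖a‖ ^ 2 = ‖b‖ ^ 2 := by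
    intro u hu hvu hvu'
    refine quad_aux ha1 fun τ => ?_
    have hau : ⟪a, u⟫ = 0 := by
      simp only [ha, inner_smul_left, inner_sub_left, hvu, hvu', mul_zero, sub_self]
    have hτu : ‖τ • u‖ ^ 2 = τ ^ 2 := by
      rw [norm_smul, hu, mul_one, Real.norm_eq_abs, sq_abs]
    have e1 := hS v p hv0 hp (a + τ • u) (by rw [inner_add_right, hva, inner_smul_right, hvu]; simp)
    have e2 := hS v' p' hv0' hp' (b + τ • u)
      (by rw [inner_add_right, hvb', inner_smul_right, hvu']; simp)
    rw [show p' + (b + τ • u) = p + (a + τ • u) by rw [hb, hDdef]; module] at e2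
    rw [e1, coe_normSeminorm, ← sq_le_one_iff₀ (norm_nonneg _), ← sq_le_one_iff₀ (norm_nonneg _),
      norm_add_sq_real, norm_add_sq_real, inner_smul_right, inner_smul_right, hau, hτu] at e2
    rw [show ‖a‖ ^ 2 + 2 * (τ * 0) + τ ^ 2 = ‖a‖ ^ 2 + τ ^ 2 by ring,
      show ‖b‖ ^ 2 + 2 * (τ * ⟪b, u⟫) + τ ^ 2 = ‖b‖ ^ 2 + 2 * τ * ⟪b, u⟫ + τ ^ 2 by ring] at e2
    exact e2
  obtain ⟨u, hu, huv, huv'⟩ := exists_unit_perp hV v v'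
  have hab := (key u hu (by rwa [real_inner_comm]) (by rwa [real_inner_comm])).2
  set x := ⟪v, b⟫ / (1 - c ^ 2) with hx
  have hx' : x * (1 - c ^ 2) = ⟪v, b⟫ := div_mul_cancel₀ _ hpos.ne'
  have hx0 : 0 ≤ x := div_nonneg hvb hpos.le
  have hbx : b = x • (v - c • v') := by
    rw [← sub_eq_zero]
    by_contra hne0
    set d := b - x • (v - c • v') with hd
    have hdn : 0 < ‖d‖ := norm_pos_iff.2 hne0
    have hvd : ⟪v, d⟫ = 0 := by
      simp only [hd, inner_smul_right, inner_sub_right, hvv, ← hc, ← hx']; ring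
    have hvd' : ⟪v', d⟫ = 0 := by
      simp only [hd, inner_smul_right, inner_sub_right, hvv', hcc, hvb']; ring
    have h := (key (‖d‖⁻¹ • d) (by rw [norm_smul, norm_inv, norm_norm, inv_mul_cancel₀ hdn.ne'])
      (by rw [inner_smul_right, hvd, mul_zero]) (by rw [inner_smul_right, hvd', mul_zero])).1
    rw [inner_smul_right] at h
    have hbd : ⟪b, d⟫ = 0 := (mul_eq_zero.1 h).resolve_left (inv_pos.2 hdn).ne'
    have : ⟪d, d⟫ = 0 := by
      conv_lhs => rw [hd, inner_sub_left, ← hd]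
      simp only [inner_smul_left, inner_sub_left, hvd, hvd', hbd]; simp
    exact hne0 (inner_self_eq_zero.1 this)
  have hnb : ‖b‖ ^ 2 = x ^ 2 * (1 - c ^ 2) := by
    rw [← real_inner_self_eq_norm_sq, hbx]
    simp only [inner_smul_right, inner_smul_left, inner_sub_right, inner_sub_left, hvv, hvv', hcc,
      ← hc, conj_trivial]
    ring
  have hsx : x = s := by
    rw [hna, hnb] at hab
    have := mul_right_cancel₀ hpos.ne' hab
    exact ((sq_eq_sq₀ hs0 hx0).1 this).symm
  refine ⟨s * (1 + c), ?_⟩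
  have : D = a - b := by rw [hb]; abel
  rw [this, hbx, hsx, ha]
  module

/-- Three distinct unit vectors are not collinear. -/
lemma not_collinear_sphere {v v₀ v₁ : V} (hv : ‖v‖ = 1) (h0 : ‖v₀‖ = 1) (h1 : ‖v₁‖ = 1)
    (hne0 : v ≠ v₀) (hne1 : v ≠ v₁) (h01 : v₀ ≠ v₁) {k l : ℝ} (h : k • (v - v₀) = l • (v - v₁)) :
    k = 0 := by
  by_contra hk
  set j := l / k with hj
  have e : v₀ = v - j • (v - v₁) := by
    have : v - v₀ = j • (v - v₁) := by
      rw [hj, div_eq_inv_mul, mul_smul, ← h, smul_smul, inv_mul_cancel₀ hk, one_smul]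
    rw [← this]; abel
  have hw : 0 < ‖v - v₁‖ := norm_pos_iff.2 (sub_ne_zero.2 hne1)
  have hm : 2 * ⟪v, v - v₁⟫ = ‖v - v₁‖ ^ 2 := by
    rw [norm_sub_sq_real, inner_sub_right, real_inner_self_eq_norm_sq, hv, h1]; ring
  have h2 : ‖v₀‖ ^ 2 = ‖v‖ ^ 2 - 2 * (j * ⟪v, v - v₁⟫) + j ^ 2 * ‖v - v₁‖ ^ 2 := by
    conv_lhs => rw [e]
    rw [norm_sub_sq_real, inner_smul_right, norm_smul, mul_pow, Real.norm_eq_abs, sq_abs]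
  rw [h0, hv] at h2
  have h3 : j * (j - 1) * ‖v - v₁‖ ^ 2 = 0 := by linear_combination j * hm - h2
  rcases mul_eq_zero.1 ((mul_eq_zero.1 h3).resolve_right (by positivity)) with h4 | h4
  · rw [h4, zero_smul, sub_zero] at e; exact hne0 e.symm
  · rw [show j = 1 by linarith, one_smul, sub_sub_cancel] at e; exact h01 e

/-- A contact map with centred Euclidean sections is `v ↦ c + μ v` on the unit sphere. -/
lemma contact_affine [FiniteDimensional ℝ V] (hV : 3 ≤ Module.finrank ℝ V) {K L : Set V}
    (hL : IsCompact L) (hS : CentredSections K L (normSeminorm ℝ V)) {p : V → V}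
    (hp : ∀ v, IsContact L v (p v)) : ∃ (c : V) (μ : ℝ), ∀ v, ‖v‖ = 1 → p v = c + μ • v := by
  have hcont : ∀ v : V, v ≠ 0 → ContinuousAt p v := fun v hv =>
    continuousAt_top hL hp fun q hq =>
      hS.top_unique (fun x hx => by simp [hx]) hv hq (hp v)
  have hrank : 1 < Module.rank ℝ V := by
    rw [← Module.finrank_eq_rank]; exact_mod_cast (by omega : 1 < Module.finrank ℝ V)
  have hconn := isConnected_sphere hrank (0 : V) (zero_le_one)
  have : ConnectedSpace (sphere (0 : V) 1) := isConnected_iff_connectedSpace.1 hconn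
  have hnorm : ∀ v : sphere (0 : V) 1, ‖(v : V)‖ = 1 := fun v => by simp
  have : Nontrivial (sphere (0 : V) 1) := by
    obtain ⟨u, hu, -⟩ := exists_unit_perp hV (0 : V) 0
    refine ⟨⟨u, by simpa using hu⟩, ⟨-u, by simpa using hu⟩, fun h => ?_⟩
    have h := congrArg Subtype.val h
    simp only at h
    have h2 : (2 : ℝ) • u = 0 := by rw [two_smul]; nth_rw 1 [h]; abel
    rw [(smul_eq_zero.1 h2).resolve_left two_ne_zero, norm_zero] at hu; exact zero_ne_one hu
  have hloc : ∀ v₀ : sphere (0 : V) 1, ∃ g : V × ℝ, ∀ᶠ w : sphere (0 : V) 1 in nhds v₀,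
      p (w : V) = g.1 + g.2 • (w : V) := by
    intro v₀
    have hv00 : (v₀ : V) ≠ 0 := by intro h; have := hnorm v₀; rw [h, norm_zero] at this; simp at this
    have hcs : ContinuousAt (fun w : sphere (0 : V) 1 => p w) v₀ :=
      ContinuousAt.comp (f := Subtype.val) (g := p) (hcont _ hv00) continuous_subtype_val.continuousAt
    have hU : ∀ᶠ w : sphere (0 : V) 1 in nhds v₀, dist (p (w : V)) (p v₀) < 1 / 2 ∧ dist w v₀ < 1 / 2 :=
      (hcs.eventually (ball_mem_nhds _ (by norm_num))).and (ball_mem_nhds _ (by norm_num))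
    have hpair : ∀ w w' : sphere (0 : V) 1, (dist (p (w : V)) (p v₀) < 1 / 2 ∧ dist w v₀ < 1 / 2) →
        (dist (p (w' : V)) (p v₀) < 1 / 2 ∧ dist w' v₀ < 1 / 2) → w ≠ w' →
        ∃ m : ℝ, p (w' : V) - p w = m • ((w' : V) - w) := by
      intro w w' hw hw' hne
      have hd : ‖(w : V) - w'‖ < 1 := by
        rw [← dist_eq_norm]
        have := dist_triangle_right w w' v₀
        exact this.trans_lt (by linarith [hw.2, hw'.2])
      have hd0 : 0 < ‖(w : V) - w'‖ := norm_pos_iff.2 (sub_ne_zero.2 fun h => hne (Subtype.ext h))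
      have hsq := norm_sub_sq_real (w : V) w'
      rw [hnorm, hnorm] at hsq
      refine contact_diff hV hS (hnorm w) (hnorm w') (by nlinarith) (by nlinarith) (hp _) (hp _) ?_
      rw [← dist_eq_norm]
      exact (dist_triangle_right _ _ (p v₀)).trans_lt (by linarith [hw.1, hw'.1])
    obtain ⟨v₁, hv₁, hne⟩ : ∃ v₁ : sphere (0 : V) 1, (dist (p (v₁ : V)) (p v₀) < 1 / 2 ∧ dist v₁ v₀ < 1 / 2) ∧
        v₁ ≠ v₀ := by
      have : (nhdsWithin v₀ {v₀}ᶜ).NeBot := inferInstance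
      obtain ⟨v₁, h1, h2⟩ := ((hU.filter_mono nhdsWithin_le_nhds).and
        (self_mem_nhdsWithin (s := ({v₀}ᶜ : Set (sphere (0 : V) 1))))).exists
      exact ⟨v₁, h1, h2⟩
    have hv₀ := hU.self_of_nhds
    obtain ⟨m, hm⟩ := hpair v₀ v₁ hv₀ hv₁ hne.symm
    refine ⟨(p v₀ - m • (v₀ : V), m), ?_⟩
    filter_upwards [hU] with w hw
    by_cases h0 : w = v₀
    · subst h0; simp
    by_cases h1 : w = v₁
    · subst h1
      rw [sub_eq_iff_eq_add] at hm
      simp only [hm, smul_sub]; abel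
    obtain ⟨k, hk⟩ := hpair v₀ w hv₀ hw (Ne.symm h0)
    obtain ⟨l, hl⟩ := hpair v₁ w hv₁ hw (Ne.symm h1)
    have hkm : k - m = 0 := by
      refine not_collinear_sphere (hnorm w) (hnorm v₀) (hnorm v₁) (fun h => h0 (Subtype.ext h))
        (fun h => h1 (Subtype.ext h)) (fun h => hne.symm (Subtype.ext h)) (l := l - m) ?_
      rw [sub_smul, sub_smul, ← hk, ← hl]
      have : m • ((w : V) - v₀) - m • ((w : V) - v₁) = p v₁ - p v₀ := by rw [hm]; module
      rw [← sub_eq_zero]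
      calc _ = (p (v₁ : V) - p v₀) - (m • ((w : V) - v₀) - m • ((w : V) - v₁)) := by abel
        _ = 0 := by rw [this, sub_self]
    rw [show k = m by linarith, sub_eq_iff_eq_add] at hk
    simp only [hk, smul_sub]; abel
  choose g hg using hloc
  have hlc : IsLocallyConstant g := by
    rw [IsLocallyConstant.iff_eventually_eq]
    intro v₀
    filter_upwards [eventually_eventually_nhds.2 (hg v₀)] with w hw
    have hev := hw.and (hg w)
    have hwv := hev.self_of_nhds
    have : (nhdsWithin w {w}ᶜ).NeBot := inferInstance
    obtain ⟨w', ⟨h1, h2⟩, h3⟩ := ((hev.filter_mono nhdsWithin_le_nhds).and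
        (self_mem_nhdsWithin (s := ({w}ᶜ : Set (sphere (0 : V) 1))))).exists
    have h3 : (w' : V) - w ≠ 0 := sub_ne_zero.2 fun h => h3 (Subtype.ext h)
    have e1 : (g v₀).2 • ((w' : V) - w) = (g w).2 • ((w' : V) - w) := by
      have a1 : (g v₀).2 • ((w' : V) - w) = p w' - p w := by rw [h1, hwv.1]; module
      have a2 : (g w).2 • ((w' : V) - w) = p w' - p w := by rw [h2, hwv.2]; module
      rw [a1, a2]
    have e2 : (g v₀).2 = (g w).2 := by
      rw [← sub_eq_zero, ← sub_smul] at e1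
      exact sub_eq_zero.1 ((smul_eq_zero.1 e1).resolve_right h3)
    refine Prod.ext ?_ e2.symm
    have := hwv.1.symm.trans hwv.2
    rw [e2] at this
    exact (add_right_cancel this).symm
  obtain ⟨v₀⟩ : Nonempty (sphere (0 : V) 1) := inferInstance
  refine ⟨(g v₀).1, (g v₀).2, fun v hv => ?_⟩
  rw [hlc.apply_eq_of_preconnectedSpace v₀ ⟨v, by simpa using hv⟩]
  exact (hg ⟨v, by simpa using hv⟩).self_of_nhds

/-- If the sections of `K` by the support hyperplanes of `L` are unit discs centred at the contact
points, then `K` and `L` are concentric balls. -/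
lemma balls_of_centred [FiniteDimensional ℝ V] (hV : 3 ≤ Module.finrank ℝ V) {K L : Set V}
    (hL : IsCompact L) (hLc : Convex ℝ L) (hLint : (interior L).Nonempty) (hLK : L ⊆ K)
    (hS : CentredSections K L (normSeminorm ℝ V)) :
    ∃ (c : V) (μ : ℝ), 0 < μ ∧ L = closedBall c μ ∧ K = closedBall c √(1 + μ ^ 2) := by
  choose p hp using exists_isContact hL (hLint.mono interior_subset)
  obtain ⟨c, μ, hcμ⟩ := contact_affine hV hL hS hp
  have hn0 : ∀ v : V, ‖v‖ = 1 → v ≠ 0 := by rintro v hv rfl; simp at hv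
  have hμ : 0 < μ := by
    obtain ⟨v, hv, -⟩ := exists_unit_perp hV (0 : V) 0
    have hv' : ‖-v‖ = 1 := by rwa [norm_neg]
    obtain ⟨o, ho⟩ := hLint
    have hstrict : ∀ w : V, ‖w‖ = 1 → ⟪w, o⟫ < ⟪w, p w⟫ := by
      intro w hw
      refine lt_of_le_of_ne ((hp w).2 o (interior_subset ho)) fun h => ?_
      have := (hp w).line (u := o - p w) (hn0 w hw) (by rw [inner_sub_right, h, sub_self]) 1
      rw [one_smul, add_sub_cancel] at this
      exact this ho
    have h1 := hstrict v hv
    have h2 := hstrict (-v) hv'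
    rw [hcμ v hv, inner_add_right, inner_smul_right, real_inner_self_eq_norm_sq, hv] at h1
    rw [hcμ (-v) hv', inner_add_right, inner_smul_right, real_inner_self_eq_norm_sq, hv',
      inner_neg_left, inner_neg_left] at h2
    linarith
  have hLball : L = closedBall c μ := by
    apply Subset.antisymm
    · intro x hx
      rw [mem_closedBall, dist_eq_norm]
      rcases eq_or_ne (x - c) 0 with h0 | h0
      · rw [h0, norm_zero]; exact hμ.le
      have hr : 0 < ‖x - c‖ := norm_pos_iff.2 h0
      have hu : ‖‖x - c‖⁻¹ • (x - c)‖ = 1 := by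
        rw [norm_smul, norm_inv, norm_norm, inv_mul_cancel₀ hr.ne']
      have h1 := (hp (‖x - c‖⁻¹ • (x - c))).2 x hx
      rw [hcμ _ hu, inner_add_right, inner_smul_right, real_inner_self_eq_norm_sq, hu] at h1
      have h2 : ⟪‖x - c‖⁻¹ • (x - c), x - c⟫ = ‖x - c‖ := by
        rw [inner_smul_left, conj_trivial, real_inner_self_eq_norm_sq]; field_simp
      rw [inner_sub_right] at h2
      linarith
    · intro x hx
      by_contra hxL
      obtain ⟨f, u, hfu, hux⟩ := geometric_hahn_banach_closed_point hLc hL.isClosed hxL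
      set y := (InnerProductSpace.toDual ℝ V).symm f with hy
      have hyf : ∀ z, ⟪y, z⟫ = f z := fun z => by
        rw [hy, InnerProductSpace.toDual_symm_apply]
      have hy0 : y ≠ 0 := by
        intro h
        obtain ⟨o, ho⟩ := hLint
        have h1 := hfu o (interior_subset ho)
        rw [← hyf, h, inner_zero_left] at h1 hux
        linarith
      have hr : 0 < ‖y‖ := norm_pos_iff.2 hy0
      have hu : ‖‖y‖⁻¹ • y‖ = 1 := by
        rw [norm_smul, norm_inv, norm_norm, inv_mul_cancel₀ hr.ne']
      have h1 := hfu _ (hp (‖y‖⁻¹ • y)).1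
      rw [← hyf, hcμ _ hu] at h1
      rw [← hyf] at hux
      have h2 : ⟪y, c + μ • ‖y‖⁻¹ • y⟫ = ⟪y, c⟫ + μ * ‖y‖ := by
        rw [inner_add_right, inner_smul_right, inner_smul_right, real_inner_self_eq_norm_sq]
        field_simp
      have h3 : ⟪y, x - c⟫ ≤ ‖y‖ * μ :=
        (real_inner_le_norm _ _).trans (by
          rw [mem_closedBall, dist_eq_norm] at hx; gcongr)
      rw [inner_sub_right] at h3
      linarith
  refine ⟨c, μ, hμ, hLball, ?_⟩
  ext x
  rw [mem_closedBall, dist_eq_norm]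
  rcases le_or_gt ‖x - c‖ μ with h | h
  · refine ⟨fun _ => h.trans (Real.le_sqrt_of_sq_le (by linarith)), fun _ => hLK ?_⟩
    rw [hLball, mem_closedBall, dist_eq_norm]; exact h
  set d := x - c with hd
  have hr : 0 < ‖d‖ := hμ.trans h
  obtain ⟨e, he, hed, -⟩ := exists_unit_perp hV d 0
  -- `v` is a normal of a support hyperplane of the ball `L` through `x`
  set α := μ / ‖d‖ ^ 2 with hα
  have hαr : α * ‖d‖ ^ 2 = μ := div_mul_cancel₀ _ (by positivity)
  have hγ : √(1 - α * μ) ^ 2 = 1 - α * μ := Real.sq_sqrt (by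
    have : α * μ ≤ 1 := by
      rw [hα, div_mul_eq_mul_div, div_le_one (by positivity)]; nlinarith
    linarith)
  set γ := √(1 - α * μ) with hγdef
  set v := α • d + γ • e with hvdef
  have hde : ⟪d, e⟫ = 0 := by rwa [real_inner_comm]
  have hvd : ⟪v, d⟫ = μ := by
    rw [hvdef, inner_add_left, inner_smul_left, inner_smul_left, hed, real_inner_self_eq_norm_sq,
      conj_trivial, hαr]; simp
  have hvv : ⟪v, v⟫ = 1 := by
    conv_lhs => rw [hvdef, inner_add_right, ← hvdef, inner_smul_right, inner_smul_right, hvd]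
    rw [hvdef, inner_add_left, inner_smul_left, inner_smul_left, hde, real_inner_self_eq_norm_sq,
      he, conj_trivial, conj_trivial]
    linarith
  have hv1 : ‖v‖ = 1 := by
    rw [real_inner_self_eq_norm_sq] at hvv
    exact (pow_eq_one_iff_of_nonneg (norm_nonneg v) two_ne_zero).1 hvv
  have hw := hS v (p v) (hn0 v hv1) (hp v) (d - μ • v) (by
    rw [inner_sub_right, inner_smul_right, hvd, hvv]; ring)
  rw [hcμ v hv1, show c + μ • v + (d - μ • v) = x by rw [hd]; abel, coe_normSeminorm,
    ← sq_le_one_iff₀ (norm_nonneg _), norm_sub_sq_real, inner_smul_right, real_inner_comm, hvd,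
    norm_smul, hv1, mul_one, Real.norm_eq_abs, sq_abs] at hw
  rw [hw, Real.le_sqrt (norm_nonneg _) (by positivity)]
  constructor <;> intro h' <;> nlinarith

end Balls

/-! ### From the Euclidean norm back to ellipsoids -/

/-- Jordan–von Neumann: a norm satisfying the parallelogram law is Euclidean in suitable
coordinates. -/
lemma exists_euclidean_coords {W : Type*} [AddCommGroup W] [Module ℝ W] [FiniteDimensional ℝ W]
    (N : Seminorm ℝ W) (hpos : ∀ x, x ≠ 0 → 0 < N x)
    (hpar : ∀ x y, N (x + y) ^ 2 + N (x - y) ^ 2 = 2 * (N x ^ 2 + N y ^ 2)) {n : ℕ}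
    (hn : Module.finrank ℝ W = n) :
    ∃ T : W ≃ₗ[ℝ] EuclideanSpace ℝ (Fin n), ∀ x, N x = ‖T x‖ := by
  let _ : NormedAddCommGroup W := AddGroupNorm.toNormedAddCommGroup
    { N with
      eq_zero_of_map_eq_zero' := fun x hx => by
        by_contra h
        exact (hpos x h).ne' hx }
  have hN : ∀ x : W, ‖x‖ = N x := fun x => rfl
  let _ : NormedSpace ℝ W := ⟨fun a x => by
    rw [hN, hN, map_smul_eq_mul]⟩
  let _ : InnerProductSpace ℝ W := InnerProductSpace.ofNorm ℝ fun x y => by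
    simp only [hN]; linarith [hpar x y]
  let b := (stdOrthonormalBasis ℝ W).reindex (finCongr hn)
  exact ⟨b.repr.toLinearEquiv, fun x => (b.repr.norm_map x).symm⟩

section Final

variable {n : ℕ}

lemma CentredSections.image {K L : Set (EuclideanSpace ℝ (Fin n))}
    {N : Seminorm ℝ (EuclideanSpace ℝ (Fin n))} (hS : CentredSections K L N)
    (T : EuclideanSpace ℝ (Fin n) ≃ₗ[ℝ] EuclideanSpace ℝ (Fin n)) (hT : ∀ x, N x = ‖T x‖) :
    CentredSections (T '' K) (T '' L) (normSeminorm ℝ (EuclideanSpace ℝ (Fin n))) := by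
  intro v q hv hq w hw
  obtain ⟨⟨p, hpL, rfl⟩, hmax⟩ := hq
  obtain ⟨w, rfl⟩ := T.surjective w
  have hadj : ∀ x, ⟪LinearMap.adjoint T.toLinearMap v, x⟫ = ⟪v, T x⟫ :=
    fun x => LinearMap.adjoint_inner_left _ _ _
  have h0 : LinearMap.adjoint T.toLinearMap v ≠ 0 := by
    intro h
    have := hadj (T.symm v)
    rw [h, inner_zero_left, T.apply_symm_apply] at this
    exact hv (inner_self_eq_zero.1 this.symm)
  have := hS _ p h0 ⟨hpL, fun x hx => by
    rw [hadj, hadj]; exact hmax _ (mem_image_of_mem _ hx)⟩ w (by rw [hadj, hw])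
  rw [← map_add, T.injective.mem_set_image, this, hT]; rfl

/-- The diameter of the chord through `p ∈ L` is the sum of the two exit times from `p`, rescaled by
the length of the direction vector. -/
lemma equalChords_of_diam {K L : Set (EuclideanSpace ℝ (Fin n))} (hKc : IsCompact K)
    (hK : Convex ℝ K) (hLK : L ⊆ interior K) {lam : EuclideanSpace ℝ (Fin n) → ℝ}
    (hchord : ∀ u : EuclideanSpace ℝ (Fin n), ‖u‖ = 1 →
      ∀ a : EuclideanSpace ℝ (Fin n), LineSupports L a u →
        Metric.diam (K ∩ lineThrough a u) = lam u) :
    EqualChords K L fun u => lam (‖u‖⁻¹ • u) / ‖u‖ := by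
  intro p hp u hu hline
  have hpK := hLK hp
  have hu0 : 0 < ‖u‖ := norm_pos_iff.2 hu
  have hα := gaugeAt_pos hKc.isBounded hpK hu
  have hβ := gaugeAt_pos hKc.isBounded hpK (neg_ne_zero.2 hu)
  have hsupp : LineSupports L p (‖u‖⁻¹ • u) := by
    refine ⟨⟨p, ⟨0, by simp⟩, hp⟩, ?_⟩
    rw [eq_empty_iff_forall_notMem]
    rintro x ⟨⟨t, rfl⟩, hx⟩
    rw [smul_smul] at hx
    exact hline _ hx
  have hd := hchord (‖u‖⁻¹ • u) (by rw [norm_smul, norm_inv, norm_norm, inv_mul_cancel₀ hu0.ne'])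
    p hsupp
  have e1 := (exit_mem hKc hK hpK hu).1
  have e2 := (exit_mem hKc hK hpK (neg_ne_zero.2 hu)).1
  set α := (gaugeAt K p u)⁻¹ with hαdef
  set β := (gaugeAt K p (-u))⁻¹ with hβdef
  have hα0 : 0 < α := inv_pos.2 hα
  have hβ0 : 0 < β := inv_pos.2 hβ
  have hmem : ∀ t : ℝ, p + t • u ∈ lineThrough p (‖u‖⁻¹ • u) := fun t =>
    ⟨t * ‖u‖, by rw [smul_smul, mul_assoc, mul_inv_cancel₀ hu0.ne', mul_one]⟩
  have hbd : ∀ t : ℝ, p + t • u ∈ K → -β ≤ t ∧ t ≤ α := by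
    intro t ht
    constructor
    · by_contra! hlt
      have h1 : gaugeAt K p ((-t) • (-u)) ≤ 1 :=
        (gaugeAt_le_one hKc.isClosed hK hpK).2 (by rwa [neg_smul_neg])
      rw [gaugeAt_smul (by linarith), ← le_div_iff₀ hβ, one_div] at h1
      linarith
    · by_contra! hlt
      have h1 : gaugeAt K p (t • u) ≤ 1 := (gaugeAt_le_one hKc.isClosed hK hpK).2 ht
      rw [gaugeAt_smul (by linarith), ← le_div_iff₀ hα, one_div] at h1
      linarith
  have hdiam : Metric.diam (K ∩ lineThrough p (‖u‖⁻¹ • u)) = (α + β) * ‖u‖ := by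
    apply le_antisymm
    · refine Metric.diam_le_of_forall_dist_le (by positivity) ?_
      rintro _ ⟨hxK, t, rfl⟩ _ ⟨hyK, s, rfl⟩
      rw [smul_smul] at hxK hyK ⊢
      rw [smul_smul, dist_add_left, dist_eq_norm, ← sub_smul, norm_smul]
      have b1 := hbd _ hxK
      have b2 := hbd _ hyK
      gcongr
      rw [Real.norm_eq_abs, abs_le]
      constructor <;> linarith
    · have hb : Bornology.IsBounded (K ∩ lineThrough p (‖u‖⁻¹ • u)) :=
        hKc.isBounded.subset inter_subset_left
      rw [smul_neg, ← neg_smul] at e2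
      have := Metric.dist_le_diam_of_mem hb ⟨e1, hmem _⟩ ⟨e2, hmem _⟩
      rwa [dist_add_left, dist_eq_norm, ← sub_smul, norm_smul, sub_neg_eq_add, Real.norm_eq_abs,
        abs_of_pos (by positivity)] at this
  rw [hdiam] at hd
  simp only [← hd]
  field_simp

end Final

/-- If every chord of the convex body `K` parallel to a given direction `u` whose line
supports the convex body `L ⊆ int K` has the same length `lam u`, then `K` and `L` are
homothetic and concentric ellipsoids. -/
theorem stmt_0 {n : ℕ} (hn : 3 ≤ n) (K L : Set (EuclideanSpace ℝ (Fin n)))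
    (hKcpt : IsCompact K) (hKconv : Convex ℝ K) (hKint : (interior K).Nonempty)
    (hLcpt : IsCompact L) (hLconv : Convex ℝ L) (hLint : (interior L).Nonempty)
    (hLK : L ⊆ interior K)
    (lam : EuclideanSpace ℝ (Fin n) → ℝ)
    (hchord : ∀ u : EuclideanSpace ℝ (Fin n), ‖u‖ = 1 →
      ∀ a : EuclideanSpace ℝ (Fin n), LineSupports L a u →
        Metric.diam (K ∩ lineThrough a u) = lam u) :
    ∃ (A : EuclideanSpace ℝ (Fin n) ≃ᵃ[ℝ] EuclideanSpace ℝ (Fin n))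
      (c : EuclideanSpace ℝ (Fin n)) (t : ℝ),
      A '' Metric.closedBall 0 1 = K ∧ A 0 = c ∧ 0 < t ∧ t < 1 ∧
      L = AffineMap.homothety c t '' K := by
  have hfr : Module.finrank ℝ (EuclideanSpace ℝ (Fin n)) = n := finrank_euclideanSpace_fin
  obtain ⟨N, hpos, hS, hpar⟩ := exists_centred_norm (by rw [hfr]; exact hn) hKcpt hKconv hLcpt
    hLconv hLint hLK (equalChords_of_diam hKcpt hKconv hLK hchord)
  obtain ⟨T, hT⟩ := exists_euclidean_coords N hpos hpar hfr
  have hTc : Continuous T := T.toLinearMap.continuous_of_finiteDimensional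
  obtain ⟨c, μ, hμ, hLb, hKb⟩ := balls_of_centred (by rw [hfr]; exact hn) (hLcpt.image hTc)
    (hLconv.linear_image T.toLinearMap)
    (by
      have := T.toContinuousLinearEquiv.toHomeomorph.image_interior L
      exact (hLint.image T).mono this.subset)
    (image_mono (hLK.trans interior_subset)) (hS.image T hT)
  set R := √(1 + μ ^ 2) with hR
  have hR0 : 0 < R := Real.sqrt_pos.2 (by positivity)
  have hμR : μ < R := Real.lt_sqrt_of_sq_lt (by linarith)
  have hK' : ∀ x, x ∈ K ↔ ‖T x - c‖ ≤ R := fun x => by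
    rw [← T.injective.mem_set_image (s := K), hKb, mem_closedBall, dist_eq_norm]
  have hL' : ∀ x, x ∈ L ↔ ‖T x - c‖ ≤ μ := fun x => by
    rw [← T.injective.mem_set_image (s := L), hLb, mem_closedBall, dist_eq_norm]
  let A : EuclideanSpace ℝ (Fin n) ≃ᵃ[ℝ] EuclideanSpace ℝ (Fin n) :=
    ((LinearEquiv.smulOfNeZero ℝ (EuclideanSpace ℝ (Fin n)) R hR0.ne').trans
      T.symm).toAffineEquiv.trans (AffineEquiv.constVAdd ℝ _ (T.symm c))
  have hA : ∀ x, A x = T.symm (c + R • x) := fun x => by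
    simp [A]
  refine ⟨A, T.symm c, μ / R, ?_, by rw [hA]; simp, by positivity, (div_lt_one hR0).2 hμR, ?_⟩
  · ext x
    rw [hK']
    constructor
    · rintro ⟨y, hy, rfl⟩
      rw [mem_closedBall, dist_zero_right] at hy
      rw [hA, T.apply_symm_apply, add_sub_cancel_left, norm_smul, Real.norm_eq_abs, abs_of_pos hR0]
      nlinarith
    · intro hx
      refine ⟨R⁻¹ • (T x - c), ?_, ?_⟩
      · rw [mem_closedBall, dist_zero_right, norm_smul, norm_inv, Real.norm_eq_abs, abs_of_pos hR0,
          inv_mul_le_one₀ hR0]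
        exact hx
      · rw [hA, smul_inv_smul₀ hR0.ne', add_sub_cancel, T.symm_apply_apply]
  · ext x
    rw [hL']
    constructor
    · intro hx
      refine ⟨T.symm (c + (R / μ) • (T x - c)), ?_, ?_⟩
      · rw [hK', T.apply_symm_apply, add_sub_cancel_left, norm_smul, Real.norm_eq_abs,
          abs_of_pos (by positivity), div_mul_eq_mul_div, div_le_iff₀ hμ]
        gcongr
      · apply T.injective
        simp only [AffineMap.homothety_apply, vsub_eq_sub, vadd_eq_add, map_add, map_smul, map_sub,
          T.apply_symm_apply]
        rw [add_sub_cancel_left, smul_smul, div_mul_div_cancel₀ hR0.ne', div_self hμ.ne']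
        simp
    · rintro ⟨y, hy, rfl⟩
      rw [hK'] at hy
      simp only [AffineMap.homothety_apply, vsub_eq_sub, vadd_eq_add, map_add, map_smul, map_sub,
          T.apply_symm_apply]
      rw [add_sub_cancel_right, norm_smul, Real.norm_eq_abs, abs_of_pos (by positivity),
        div_mul_eq_mul_div, div_le_iff₀ hR0]
      gcongr
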